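/- arXiv:1901.01385 — 3 statements merged into one kernel-verified Lean document; each statement's English description precedes it below -/
import Mathlib

section
/- Let K be an algebraically closed field. Every effective regular action of the one-dimensional torus Kˣ on the free associative algebra F_2 = FreeAlgebra K (Fin 2) is linearizable: there is a K-algebra automorphism β of F_2 such that for every t ∈ Kˣ, the automorphism β⁻¹ ∘ σ(t) ∘ β maps each generator z_i into the K-linear span of z_1, z_2. -/
open FreeAlgebra

/-- A regular action of the one-dimensional torus `Kˣ` on the free algebra:
the image of each generator depends on `t` as a Laurent polynomial. -/
def OneTorusActionIsRegular {K : Type} [Field K] {n : ℕ}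
    (σ : Kˣ →* (FreeAlgebra K (Fin n) ≃ₐ[K] FreeAlgebra K (Fin n))) : Prop :=
  ∀ i : Fin n, ∃ a : (ℤ →₀ FreeAlgebra K (Fin n)),
    ∀ t : Kˣ, σ t (ι K i) = a.sum fun m c => ((t ^ m : Kˣ) : K) • c

namespace FreeTorus

section

/-- Words in two letters. -/
abbrev Word := FreeMonoid (Fin 2)

/-- The free algebra on two generators, modelled on its basis of words. -/
abbrev NC (K : Type*) [Field K] := MonoidAlgebra K Word

/-- The weight of a word when the letter `i` has weight `ω i`. -/
def wt (ω : Fin 2 → ℚ) (w : Word) : ℚ := (w.toList.map ω).sum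

@[simp] lemma wt_of (ω : Fin 2 → ℚ) (i : Fin 2) : wt ω (FreeMonoid.of i) = ω i := by
  simp [wt]

@[simp] lemma wt_mul (ω : Fin 2 → ℚ) (v w : Word) : wt ω (v * w) = wt ω v + wt ω w := by
  simp [wt]

@[simp] lemma wt_one (ω : Fin 2 → ℚ) : wt ω 1 = 0 := rfl

lemma wt_nonneg {ω : Fin 2 → ℚ} (hω : ∀ i, 0 ≤ ω i) (w : Word) : 0 ≤ wt ω w := by
  induction w using FreeMonoid.inductionOn' with
  | one => simp
  | of_mul i w ih => simp; linarith [hω i]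

lemma wt_linear (ω : Fin 2 → ℚ) {i j : Fin 2} (hij : i ≠ j) (w : Word) :
    wt ω w = ω i * wt (Pi.single i 1) w + ω j * wt (Pi.single j 1) w := by
  induction w using FreeMonoid.inductionOn' with
  | one => simp
  | of_mul k w ih =>
    rw [wt_mul, wt_mul, wt_mul, ih]
    have : k = i ∨ k = j := by omega
    rcases this with rfl | rfl
    · simp [hij]; ring
    · simp [hij.symm]; ring

lemma wt_one_one (w : Word) : wt (fun _ => 1) w = w.length := by
  induction w using FreeMonoid.inductionOn' with
  | one => simp
  | of_mul k w ih => simp [ih]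

variable {K : Type*} [Field K]

/-- The generators. -/
noncomputable def gen (K : Type*) [Field K] (i : Fin 2) : NC K :=
  MonoidAlgebra.of K Word (FreeMonoid.of i)

/-- The monomial of a word. -/
noncomputable def mon (K : Type*) [Field K] (w : Word) : NC K := MonoidAlgebra.of K Word w

@[simp] lemma mon_one : mon K 1 = 1 := map_one _

lemma mon_mul (v w : Word) : mon K (v * w) = mon K v * mon K w := map_mul _ _ _

lemma mon_of (i : Fin 2) : mon K (FreeMonoid.of i) = gen K i := rfl

/-- The subspace spanned by the words in `S`. -/
def supp (K : Type*) [Field K] (S : Set Word) : Submodule K (NC K) where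
  carrier := {P | ∀ w, P.coeff w ≠ 0 → w ∈ S}
  add_mem' {P Q} hP hQ w hw := by
    by_cases h : P.coeff w = 0
    · refine hQ w fun h' => hw ?_
      simp [h, h']
    · exact hP w h
  zero_mem' w hw := by simp at hw
  smul_mem' c P hP w hw := hP w fun h => hw (by simp [h])

lemma mon_mem_supp {S : Set Word} {w : Word} (hw : w ∈ S) : mon K w ∈ supp K S := by
  intro v hv
  have : v = w := by
    by_contra h
    exact hv (by simp [mon, MonoidAlgebra.coeff_single, Ne.symm h])
  rwa [this]

lemma supp_mono {S T : Set Word} (h : S ⊆ T) : supp K S ≤ supp K T := fun _ hP w hw => h (hP w hw)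

lemma eq_sum_mon (P : NC K) : P = ∑ w ∈ P.coeff.support, P.coeff w • mon K w := by
  conv_lhs => rw [← MonoidAlgebra.sum_coeff_single P]
  rw [Finsupp.sum]
  refine Finset.sum_congr rfl fun w _ => ?_
  simp [mon]

lemma supp_le {S : Set Word} {V : Submodule K (NC K)} (h : ∀ w ∈ S, mon K w ∈ V) :
    supp K S ≤ V := by
  intro P hP
  rw [eq_sum_mon P]
  exact V.sum_mem fun w hw => V.smul_mem _ (h w (hP w (Finsupp.mem_support_iff.1 hw)))

/-- Two linear maps which agree on words agree. -/
lemma ext_mon {M : Type*} [AddCommMonoid M] [Module K M] {f g : NC K →ₗ[K] M}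
    (h : ∀ w, f (mon K w) = g (mon K w)) : f = g := by
  refine LinearMap.ext fun P => ?_
  rw [eq_sum_mon P]
  simp only [map_sum, map_smul, h]

lemma eqOn_supp {M : Type*} [AddCommGroup M] [Module K M] {f g : NC K →ₗ[K] M} {S : Set Word}
    (h : ∀ w ∈ S, f (mon K w) = g (mon K w)) {P : NC K} (hP : P ∈ supp K S) : f P = g P := by
  have : supp K S ≤ LinearMap.eqLocus f g := supp_le h
  exact this hP

lemma mul_mem_supp {S T U : Set Word} (h : ∀ s ∈ S, ∀ t ∈ T, s * t ∈ U) {P Q : NC K}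
    (hP : P ∈ supp K S) (hQ : Q ∈ supp K T) : P * Q ∈ supp K U := by
  have h1 : supp K S ≤ (supp K U).comap (LinearMap.mulRight K Q) := by
    refine supp_le fun s hs => ?_
    have h2 : supp K T ≤ (supp K U).comap (LinearMap.mulLeft K (mon K s)) := by
      refine supp_le fun t ht => ?_
      simp only [Submodule.mem_comap, LinearMap.mulLeft_apply, ← mon_mul]
      exact mon_mem_supp (h s hs t ht)
    exact h2 hQ
  exact h1 hP

/-- Homogeneous elements of weight `d`. -/
abbrev homog (K : Type*) [Field K] (ω : Fin 2 → ℚ) (d : ℚ) : Submodule K (NC K) :=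
  supp K {w | wt ω w = d}

/-- Elements of weight at most `d`. -/
abbrev degLE (K : Type*) [Field K] (ω : Fin 2 → ℚ) (d : ℚ) : Submodule K (NC K) :=
  supp K {w | wt ω w ≤ d}

/-- Elements of weight less than `d`. -/
abbrev degLT (K : Type*) [Field K] (ω : Fin 2 → ℚ) (d : ℚ) : Submodule K (NC K) :=
  supp K {w | wt ω w < d}

variable {ω : Fin 2 → ℚ} {d e : ℚ} {P Q : NC K}

lemma homog_le_degLE : homog K ω d ≤ degLE K ω d := supp_mono fun _ h => le_of_eq h

lemma degLT_le_degLE : degLT K ω d ≤ degLE K ω d := supp_mono fun _ h => le_of_lt (a := wt _ _) h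

lemma degLE_le_degLT (h : d < e) : degLE K ω d ≤ degLT K ω e :=
  supp_mono fun _ h' => lt_of_le_of_lt h' h

lemma degLE_mono (h : d ≤ e) : degLE K ω d ≤ degLE K ω e :=
  supp_mono fun _ h' => le_trans h' h

lemma gen_mem_homog (i : Fin 2) : gen K i ∈ homog K ω (ω i) := mon_mem_supp (wt_of ω i)

lemma mon_mem_homog (w : Word) : mon K w ∈ homog K ω (wt ω w) := mon_mem_supp rfl

lemma one_mem_homog : (1 : NC K) ∈ homog K ω 0 := by
  rw [← mon_one]; exact mon_mem_homog 1

lemma mul_mem_homog (hP : P ∈ homog K ω d) (hQ : Q ∈ homog K ω e) : P * Q ∈ homog K ω (d + e) :=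
  mul_mem_supp (fun s hs t ht => by simp_all) hP hQ

lemma pow_mem_homog (hP : P ∈ homog K ω d) (n : ℕ) : P ^ n ∈ homog K ω (n * d) := by
  induction n with
  | zero => simpa using one_mem_homog
  | succ n ih => rw [pow_succ]; convert mul_mem_homog ih hP using 2; push_cast; ring

lemma mul_mem_degLE (hP : P ∈ degLE K ω d) (hQ : Q ∈ degLE K ω e) : P * Q ∈ degLE K ω (d + e) :=
  mul_mem_supp (fun s hs t ht => by simp_all; linarith) hP hQ

lemma mul_mem_degLT_left (hP : P ∈ degLT K ω d) (hQ : Q ∈ degLE K ω e) :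
    P * Q ∈ degLT K ω (d + e) :=
  mul_mem_supp (fun s hs t ht => by simp_all; linarith) hP hQ

lemma mul_mem_degLT_right (hP : P ∈ degLE K ω d) (hQ : Q ∈ degLT K ω e) :
    P * Q ∈ degLT K ω (d + e) :=
  mul_mem_supp (fun s hs t ht => by simp_all; linarith) hP hQ

lemma eq_of_mem_homog (h0 : P ≠ 0) (h : P ∈ homog K ω d) (h' : P ∈ homog K ω e) : d = e := by
  obtain ⟨w, hw⟩ : ∃ w, P.coeff w ≠ 0 := by
    by_contra! hc
    exact h0 (MonoidAlgebra.coeff_injective (Finsupp.ext hc))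
  exact (h w hw).symm.trans (h' w hw)

lemma exists_coeff_ne (h0 : P ≠ 0) : ∃ w, P.coeff w ≠ 0 := by
  by_contra! hc
  exact h0 (MonoidAlgebra.coeff_injective (Finsupp.ext hc))

open Classical in
/-- The weight `d` component. -/
noncomputable def comp (K : Type*) [Field K] (ω : Fin 2 → ℚ) (d : ℚ) : NC K →ₗ[K] NC K where
  toFun P := .ofCoeff (P.coeff.filter fun w => wt ω w = d)
  map_add' P Q := by simp
  map_smul' c P := by simp

lemma comp_mem (ω : Fin 2 → ℚ) (d : ℚ) (P : NC K) : comp K ω d P ∈ homog K ω d := by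
  classical
  intro w hw
  by_contra h
  exact hw (by simp [comp, show ¬ wt ω w = d from h])

lemma comp_coeff {w : Word} (h : wt ω w = d) : (comp K ω d P).coeff w = P.coeff w := by
  simp [comp, h]

lemma comp_of_homog (hP : P ∈ homog K ω d) : comp K ω d P = P := by
  classical
  ext w
  by_cases h : wt ω w = d
  · rw [comp_coeff h]
  · have h1 : P.coeff w = 0 := by by_contra h'; exact h (hP w h')
    have h2 : (comp K ω d P).coeff w = 0 := by by_contra h'; exact h (comp_mem ω d P w h')
    rw [h1, h2]

lemma comp_eq_zero {S : Set Word} (hS : ∀ w ∈ S, wt ω w ≠ d) (hP : P ∈ supp K S) :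
    comp K ω d P = 0 := by
  ext w
  by_cases h : wt ω w = d
  · rw [comp_coeff h]; by_contra h'; exact hS w (hP w h') h
  · by_contra h'; exact h (comp_mem ω d P w h')

lemma comp_of_degLT (hP : P ∈ degLT K ω d) : comp K ω d P = 0 :=
  comp_eq_zero (fun _ (h : _ < _) => h.ne) hP

lemma comp_mem_supp {S : Set Word} (hP : P ∈ supp K S) : comp K ω d P ∈ supp K S := by
  classical
  intro w hw
  refine hP w fun h => hw ?_
  simp [comp, Finsupp.filter_apply, h]

lemma sub_comp_mem (hP : P ∈ degLE K ω d) : P - comp K ω d P ∈ degLT K ω d := by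
  classical
  intro w hw
  by_cases h : wt ω w = d
  · exact absurd (by simp [comp_coeff h]) hw
  · have : (comp K ω d P).coeff w = 0 := by by_contra h'; exact h (comp_mem ω d P w h')
    have hw' : P.coeff w ≠ 0 := by simpa [this] using hw
    exact lt_of_le_of_ne (hP w hw') h

lemma comp_mul (hP : P ∈ degLE K ω d) (hQ : Q ∈ degLE K ω e) :
    comp K ω (d + e) (P * Q) = comp K ω d P * comp K ω e Q := by
  have h : P * Q = comp K ω d P * comp K ω e Q +
      (comp K ω d P * (Q - comp K ω e Q) + (P - comp K ω d P) * Q) := by noncomm_ring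
  rw [h, map_add, comp_of_homog (mul_mem_homog (comp_mem _ _ _) (comp_mem _ _ _)),
    comp_of_degLT (add_mem ?_ ?_), add_zero]
  exacts [mul_mem_degLT_right (homog_le_degLE (comp_mem _ _ _)) (sub_comp_mem hQ),
    mul_mem_degLT_left (sub_comp_mem hP) hQ]

end

section
open Polynomial

variable {K : Type*} [Field K] {ω : Fin 2 → ℚ} {δ : ℚ}

/-- Higher derivations (Hasse–Schmidt) of the free algebra. -/
structure IsHD (E : ℕ → NC K →ₗ[K] NC K) : Prop where
  zero : ∀ P, E 0 P = P
  one : ∀ k, k ≠ 0 → E k 1 = 0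
  mul : ∀ k P Q, E k (P * Q) = ∑ x ∈ Finset.HasAntidiagonal.antidiagonal k, E x.1 P * E x.2 Q

/-- Locally finite iterative higher derivations, encoded by their generating polynomial. -/
structure IsLFIHD {B : Type*} [Ring B] [Algebra K B] (Φ : B →ₐ[K] B[X]) : Prop where
  zero : ∀ P, (Φ P).coeff 0 = P
  iter : ∀ P j k, (Φ ((Φ P).coeff k)).coeff j = (j + k).choose j • (Φ P).coeff (j + k)

/-- The homomorphism from the free algebra with prescribed values on generators. -/
noncomputable def subst {B : Type*} [Ring B] [Algebra K B] (u : Fin 2 → B) : NC K →ₐ[K] B :=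
  MonoidAlgebra.lift K B Word (FreeMonoid.lift u)

@[simp] lemma subst_gen {B : Type*} [Ring B] [Algebra K B] (u : Fin 2 → B) (i : Fin 2) :
    subst u (gen K i) = u i := by
  simp [subst, gen]

lemma subst_mon {B : Type*} [Ring B] [Algebra K B] (u : Fin 2 → B) (w : FreeMonoid (Fin 2)) :
    subst u (mon K w) = FreeMonoid.lift u w := by
  simp [subst, mon]

lemma algHom_ext_gen {B : Type*} [Ring B] [Algebra K B] {f g : NC K →ₐ[K] B}
    (h : ∀ i, f (gen K i) = g (gen K i)) : f = g := by
  have : (f : NC K →* B).comp (MonoidAlgebra.of K Word) =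
      (g : NC K →* B).comp (MonoidAlgebra.of K Word) := FreeMonoid.hom_eq h
  refine (MonoidAlgebra.lift K B Word).symm.injective ?_
  exact this

lemma mon_of_mul (i : Fin 2) (w : Word) : mon K (FreeMonoid.of i * w) = gen K i * mon K w :=
  mon_mul _ _

lemma IsHD.mon_mem {E : ℕ → NC K →ₗ[K] NC K} (hE : IsHD E)
    (hle : ∀ (k : ℕ) i, E k (gen K i) ∈ degLE K ω (ω i + k * δ)) (w : Word) (k : ℕ) :
    E k (mon K w) ∈ degLE K ω (wt ω w + k * δ) := by
  induction w using FreeMonoid.inductionOn' generalizing k with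
  | one =>
    rcases eq_or_ne k 0 with rfl | hk
    · rw [hE.zero]; simpa using homog_le_degLE one_mem_homog
    · rw [mon_one, hE.one k hk]; exact zero_mem _
  | of_mul i w ih =>
    rw [mon_of_mul, hE.mul]
    refine sum_mem fun x hx => ?_
    rw [Finset.HasAntidiagonal.mem_antidiagonal] at hx
    convert mul_mem_degLE (hle x.1 i) (ih x.2) using 2
    rw [wt_mul, wt_of, ← hx]; push_cast; ring

lemma IsHD.degLE_mem {E : ℕ → NC K →ₗ[K] NC K} (hE : IsHD E)
    (hle : ∀ (k : ℕ) i, E k (gen K i) ∈ degLE K ω (ω i + k * δ)) {d : ℚ} {P : NC K}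
    (hP : P ∈ degLE K ω d) (k : ℕ) : E k P ∈ degLE K ω (d + k * δ) := by
  have : degLE K ω d ≤ (degLE K ω (d + k * δ)).comap (E k) :=
    supp_le fun w hw => degLE_mono (by simp_all) (hE.mon_mem hle w k)
  exact this hP

lemma IsHD.degLT_mem {E : ℕ → NC K →ₗ[K] NC K} (hE : IsHD E)
    (hle : ∀ (k : ℕ) i, E k (gen K i) ∈ degLE K ω (ω i + k * δ)) {d : ℚ} {P : NC K}
    (hP : P ∈ degLT K ω d) (k : ℕ) : E k P ∈ degLT K ω (d + k * δ) := by
  have : degLT K ω d ≤ (degLT K ω (d + k * δ)).comap (E k) :=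
    supp_le fun w hw => degLE_le_degLT (by simp_all) (hE.mon_mem hle w k)
  exact this hP

theorem IsHD.exists_limit {E : ℕ → NC K →ₗ[K] NC K} (hE : IsHD E)
    (hle : ∀ (k : ℕ) i, E k (gen K i) ∈ degLE K ω (ω i + k * δ))
    (hfin : ∃ N : ℕ, ∀ k, N ≤ k → ∀ i, comp K ω (ω i + k * δ) (E k (gen K i)) = 0)
    (hiter : ∀ w j k, comp K ω (wt ω w + (j + k : ℕ) * δ) (E j (E k (mon K w))) =
      (j + k).choose j • comp K ω (wt ω w + (j + k : ℕ) * δ) (E (j + k) (mon K w))) :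
    ∃ Φ : NC K →ₐ[K] (NC K)[X], IsLFIHD Φ ∧
      ∀ w k, (Φ (mon K w)).coeff k = comp K ω (wt ω w + k * δ) (E k (mon K w)) := by
  obtain ⟨N, hN⟩ := hfin
  let Φ : NC K →ₐ[K] (NC K)[X] := subst fun i =>
    ∑ k ∈ Finset.range N, monomial k (comp K ω (ω i + k * δ) (E k (gen K i)))
  have hgen : ∀ i k, (Φ (gen K i)).coeff k = comp K ω (ω i + k * δ) (E k (gen K i)) := by
    intro i k
    simp only [Φ, subst_gen, finsetSum_coeff, coeff_monomial]
    rw [Finset.sum_ite_eq']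
    split_ifs with h
    · rfl
    · rw [hN k (by simpa using h)]
  have hw : ∀ w k, (Φ (mon K w)).coeff k = comp K ω (wt ω w + k * δ) (E k (mon K w)) := by
    intro w
    induction w using FreeMonoid.inductionOn' with
    | one =>
      intro k
      rcases eq_or_ne k 0 with rfl | hk
      · rw [hE.zero, mon_one, map_one]
        simpa using (comp_of_homog one_mem_homog).symm
      · rw [mon_one, hE.one k hk, map_one, map_zero, coeff_one, if_neg hk]
    | of_mul i w ih =>
      intro k
      rw [mon_of_mul, map_mul, coeff_mul, hE.mul, map_sum]
      refine Finset.sum_congr rfl fun x hx => ?_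
      rw [Finset.HasAntidiagonal.mem_antidiagonal] at hx
      rw [hgen, ih, ← comp_mul (hle x.1 i) (hE.mon_mem hle w x.2)]
      congr 2
      rw [wt_mul, wt_of, ← hx]; push_cast; ring
  have hhom : ∀ d, ∀ P ∈ homog K ω d, ∀ k, (Φ P).coeff k = comp K ω (d + k * δ) (E k P) := by
    intro d P hP k
    exact eqOn_supp (f := ((lcoeff (NC K) k).restrictScalars K).comp Φ.toLinearMap)
      (g := (comp K ω (d + k * δ)).comp (E k))
      (fun w hw' => by
        have : wt ω w = d := hw'
        simpa [this] using hw w k) hP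
  refine ⟨Φ, ⟨fun P => ?_, fun P j k => ?_⟩, hw⟩
  · have : ((lcoeff (NC K) 0).restrictScalars K).comp Φ.toLinearMap = LinearMap.id :=
      ext_mon fun w => by
        have := hw w 0
        rw [hE.zero, comp_of_homog (by simpa using mon_mem_homog w)] at this
        simpa using this
    exact LinearMap.congr_fun this P
  · have : ((lcoeff (NC K) j).restrictScalars K).comp (Φ.toLinearMap.comp
        (((lcoeff (NC K) k).restrictScalars K).comp Φ.toLinearMap)) =
        (j + k).choose j • ((lcoeff (NC K) (j + k)).restrictScalars K).comp Φ.toLinearMap := by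
      refine ext_mon fun w => ?_
      have h1 := hhom _ _ (comp_mem ω (wt ω w + k * δ) (E k (mon K w))) j
      have h2 := hE.degLT_mem hle (sub_comp_mem (hE.mon_mem hle w k)) j
      have h3 := comp_of_degLT h2
      have hc : wt ω w + k * δ + j * δ = wt ω w + (j + k : ℕ) * δ := by push_cast; ring
      rw [map_sub, map_sub, sub_eq_zero, ← h1, hc, hiter, ← hw, ← hw] at h3
      simpa using h3.symm
    exact LinearMap.congr_fun this P

end

section
open Polynomial

variable {K : Type*} [Field K]

/-- A coefficient, as a linear form. -/
noncomputable def coeffL (K : Type*) [Field K] (w : Word) : NC K →ₗ[K] K where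
  toFun P := P.coeff w
  map_add' P Q := by simp
  map_smul' c P := by simp

@[simp] lemma coeffL_apply (w : Word) (P : NC K) : coeffL K w P = P.coeff w := rfl

/-- Length-homogeneous elements. -/
abbrev lenEq (K : Type*) [Field K] (n : ℕ) : Submodule K (NC K) :=
  supp K {w | w.length = n}

lemma word_mul_inj {v w v' w' : Word} (hv : v.length = v'.length) (h : v * w = v' * w') :
    v = v' ∧ w = w' := by
  have := List.append_inj (s₁ := v.toList) (s₂ := v'.toList) (t₁ := w.toList) (t₂ := w'.toList)
    (by simpa using congrArg FreeMonoid.toList h) hv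
  exact ⟨FreeMonoid.toList.injective this.1, FreeMonoid.toList.injective this.2⟩

lemma coeff_mul_of_len {n : ℕ} {P : NC K} (hP : P ∈ lenEq K n) (Q : NC K) {v w : Word}
    (hv : v.length = n) : (P * Q).coeff (v * w) = P.coeff v * Q.coeff w := by
  classical
  refine eqOn_supp (f := (coeffL K (v * w)).comp (LinearMap.mulRight K Q))
    (g := (LinearMap.mulRight K (Q.coeff w)).comp (coeffL K v)) (fun s hs => ?_) hP
  simp only [LinearMap.comp_apply, LinearMap.mulRight_apply, coeffL_apply]
  have hs : s.length = n := hs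
  by_cases h : s = v
  · subst h
    simp only [mon, MonoidAlgebra.of_apply]
    rw [MonoidAlgebra.coeff_single_mul_eq_mul_coeff (m₂ := w)]
    · simp
    · intro m _
      exact ⟨fun h => (word_mul_inj rfl h).2, fun h => by rw [h]⟩
  · simp only [mon, MonoidAlgebra.of_apply]
    rw [MonoidAlgebra.coeff_single_mul_of_forall_mul_ne]
    · simp [MonoidAlgebra.coeff_single, h]
    · intro d hd
      exact h (word_mul_inj (hs.trans hv.symm) hd).1

lemma exists_smul_of_commute {n : ℕ} {P Q : NC K} (hP : P ∈ lenEq K n) (hQ : Q ∈ lenEq K n)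
    (hQ0 : Q ≠ 0) (h : P * Q = Q * P) : ∃ c : K, P = c • Q := by
  obtain ⟨w, hw⟩ := exists_coeff_ne hQ0
  refine ⟨P.coeff w / Q.coeff w, ?_⟩
  ext v
  by_cases hv : v.length = n
  · have h1 := coeff_mul_of_len hP Q (w := w) hv
    rw [h, coeff_mul_of_len hQ P hv] at h1
    simp only [MonoidAlgebra.coeff_smul, Finsupp.smul_apply, smul_eq_mul]
    field_simp
    rw [← h1, mul_comm]
  · have h1 : P.coeff v = 0 := by by_contra h'; exact hv (hP v h')
    have h2 : Q.coeff v = 0 := by by_contra h'; exact hv (hQ v h')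
    simp [h1, h2]

/-- The linear map picking the words ending in `w`. -/
noncomputable def rightQuot (K : Type*) [Field K] (w : Word) : NC K →ₗ[K] NC K where
  toFun P := .ofCoeff (P.coeff.comapDomain (· * w) (mul_left_injective w).injOn)
  map_add' P Q := by ext; simp
  map_smul' c P := by ext; simp

@[simp] lemma rightQuot_coeff (v w : Word) (P : NC K) :
    (rightQuot K w P).coeff v = P.coeff (v * w) := rfl

lemma exists_eq_mul {p q : ℕ} {u v A B : NC K} (hu : u ∈ lenEq K p) (hv : v ∈ lenEq K q)
    (hpq : p ≤ q) (hB : B ≠ 0) (h : u * A + v * B = 0) : ∃ v' ∈ lenEq K (q - p), v = u * v' := by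
  obtain ⟨w, hw⟩ := exists_coeff_ne hB
  let Q : NC K := -(B.coeff w)⁻¹ • rightQuot K w A
  let v' := comp K (fun _ => 1) ((q - p : ℕ) : ℚ) Q
  have hlen : v' ∈ lenEq K (q - p) := by
    intro s hs
    have := comp_mem _ _ _ s hs
    simpa [wt_one_one] using this
  refine ⟨v', hlen, ?_⟩
  ext s
  by_cases hs : s.length = q
  · obtain ⟨s₁, s₂, rfl, h1, h2⟩ : ∃ s₁ s₂ : Word, s = s₁ * s₂ ∧ s₁.length = p ∧
        s₂.length = q - p := by
      refine ⟨FreeMonoid.ofList (s.toList.take p), FreeMonoid.ofList (s.toList.drop p), ?_, ?_, ?_⟩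
      · rw [← FreeMonoid.ofList_append, List.take_append_drop]; rfl
      · have : s.toList.length = q := hs
        simp [FreeMonoid.length, this, hpq]
      · have : s.toList.length = q := hs
        simp [FreeMonoid.length, this]
    rw [coeff_mul_of_len hu _ h1, comp_coeff (by rw [wt_one_one, h2])]
    have h3 := congrArg (fun P : NC K => P.coeff (s₁ * s₂ * w)) h
    simp only [MonoidAlgebra.coeff_add, Finsupp.add_apply, MonoidAlgebra.coeff_zero,
      Finsupp.zero_apply] at h3
    rw [coeff_mul_of_len hv _ hs, mul_assoc, coeff_mul_of_len hu _ h1] at h3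
    simp only [Q, MonoidAlgebra.coeff_smul, Finsupp.smul_apply, rightQuot_coeff, smul_eq_mul]
    field_simp
    linear_combination h3
  · have h1 : v.coeff s = 0 := by by_contra h'; exact hs (hv s h')
    have h2 : u * v' ∈ lenEq K q :=
      mul_mem_supp (fun a ha b hb => by
        simp only [Set.mem_ofPred_eq] at ha hb ⊢; rw [FreeMonoid.length_mul]; omega) hu hlen
    have h3 : (u * v').coeff s = 0 := by by_contra h'; exact hs (h2 s h')
    rw [h1, h3]

/-- The substitution `x_j ↦ x_i x_j` on words. -/
def shear (i j : Fin 2) : Word →* Word :=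
  FreeMonoid.lift fun k => if k = j then FreeMonoid.of i * FreeMonoid.of j else FreeMonoid.of k

lemma shear_head {i j : Fin 2} (hij : i ≠ j) (w : Word) :
    (shear i j w).toList.head? ≠ some j := by
  induction w using FreeMonoid.inductionOn' with
  | one => simp
  | of_mul k w ih =>
    by_cases hk : k = j
    · simp [shear, hk, hij]
    · simp [shear, hk]

lemma shear_injective {i j : Fin 2} (hij : i ≠ j) : Function.Injective (shear i j) := by
  have hne : ∀ k w, shear i j (FreeMonoid.of k * w) ≠ 1 := by
    intro k w h
    have := congrArg FreeMonoid.length h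
    rw [map_mul, FreeMonoid.length_mul] at this
    by_cases hk : k = j <;> simp [shear, hk] at this
  have key : ∀ w w', shear i j (FreeMonoid.of i * w) ≠ shear i j (FreeMonoid.of j * w') := by
    intro w w' h
    rw [map_mul, map_mul] at h
    simp only [shear, FreeMonoid.lift_eval_of, hij, if_false, if_true, mul_assoc] at h
    have h := mul_left_cancel h
    refine shear_head hij w ?_
    rw [shear, h]
    simp
  intro w
  induction w using FreeMonoid.inductionOn' with
  | one =>
    intro w' h
    cases w' using FreeMonoid.casesOn with
    | one => rfl
    | of_mul k w' => exact absurd (h.symm.trans (map_one _)) (hne _ _)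
  | of_mul k w ih =>
    intro w' h
    cases w' using FreeMonoid.casesOn with
    | one => exact absurd (h.trans (map_one _)) (hne _ _)
    | of_mul l w' =>
      by_cases hkl : k = l
      · subst hkl
        rw [map_mul, map_mul] at h
        rw [ih (mul_left_cancel h)]
      · have : (k = i ∧ l = j) ∨ (k = j ∧ l = i) := by omega
        rcases this with ⟨rfl, rfl⟩ | ⟨rfl, rfl⟩
        · exact absurd h (key _ _)
        · exact absurd h.symm (key _ _)

lemma decompose {i j : Fin 2} (hij : i ≠ j) {n : ℕ} {P : NC K}
    (hP : P ∈ supp K {w | w.length < n + 1}) :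
    ∃ c : K, ∃ A ∈ supp K {w | w.length < n}, ∃ B ∈ supp K {w | w.length < n},
      P = c • 1 + gen K i * A + gen K j * B := by
  have h : supp K {w | w.length < n + 1} ≤
      (K ∙ (1 : NC K)) ⊔ (supp K {w | w.length < n}).map (LinearMap.mulLeft K (gen K i)) ⊔
        (supp K {w | w.length < n}).map (LinearMap.mulLeft K (gen K j)) := by
    refine supp_le fun w hw => ?_
    cases w using FreeMonoid.casesOn with
    | one =>
      exact Submodule.mem_sup_left (Submodule.mem_sup_left (Submodule.mem_span_singleton_self _))
    | of_mul k w =>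
      have hw' : w.length < n := by
        have : (FreeMonoid.of k * w).length < n + 1 := hw
        rw [FreeMonoid.length_mul, FreeMonoid.length_of] at this
        omega
      have : k = i ∨ k = j := by omega
      rcases this with rfl | rfl
      · exact Submodule.mem_sup_left (Submodule.mem_sup_right
          ⟨mon K w, mon_mem_supp hw', (mon_mul _ _).symm⟩)
      · exact Submodule.mem_sup_right ⟨mon K w, mon_mem_supp hw', (mon_mul _ _).symm⟩
  obtain ⟨P', hP', _, ⟨B, hB, rfl⟩, rfl⟩ := Submodule.mem_sup.1 (h hP)
  obtain ⟨C, hC, _, ⟨A, hA, rfl⟩, rfl⟩ := Submodule.mem_sup.1 hP'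
  obtain ⟨c, rfl⟩ := Submodule.mem_span_singleton.1 hC
  exact ⟨c, A, hA, B, hB, rfl⟩

lemma lenEq_zero {P : NC K} (hP : P ∈ lenEq K 0) : ∃ c : K, P = c • 1 := by
  have : lenEq K 0 ≤ K ∙ (1 : NC K) := by
    refine supp_le fun w hw => ?_
    have : w = 1 := FreeMonoid.length_eq_zero.1 hw
    rw [this, mon_one]
    exact Submodule.mem_span_singleton_self _
  obtain ⟨c, rfl⟩ := Submodule.mem_span_singleton.1 (this hP)
  exact ⟨c, rfl⟩

/-- Two length-homogeneous elements which do not commute are free generators. -/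
theorem subst_injective (u : Fin 2 → NC K) (p : Fin 2 → ℕ) (hu : ∀ i, u i ∈ lenEq K (p i))
    (hne : u 0 * u 1 ≠ u 1 * u 0) : Function.Injective (subst (K := K) u) := by
  induction hN : p 0 + p 1 using Nat.strong_induction_on generalizing u p with
  | _ N ih =>
  have hne' : ∀ i j, i ≠ j → u i * u j ≠ u j * u i := by
    intro i j hij
    have : (i = 0 ∧ j = 1) ∨ (i = 1 ∧ j = 0) := by omega
    rcases this with ⟨rfl, rfl⟩ | ⟨rfl, rfl⟩
    exacts [hne, hne.symm]
  have hsum : ∀ i j : Fin 2, i ≠ j → p i + p j = N := by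
    intro i j hij
    have : (i = 0 ∧ j = 1) ∨ (i = 1 ∧ j = 0) := by omega
    rcases this with ⟨rfl, rfl⟩ | ⟨rfl, rfl⟩ <;> omega
  have hpos : ∀ i, 0 < p i := by
    intro i
    by_contra h
    obtain ⟨c, hc⟩ := lenEq_zero (by simpa [show p i = 0 by omega] using hu i)
    obtain ⟨j, hj⟩ : ∃ j, i ≠ j := ⟨1 - i, by omega⟩
    exact hne' i j hj (by rw [hc]; simp)
  have hu0 : ∀ i, u i ≠ 0 := by
    intro i h
    obtain ⟨j, hj⟩ : ∃ j, i ≠ j := ⟨1 - i, by omega⟩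
    exact hne' i j hj (by rw [h]; simp)
  by_cases hdiv : ∃ i j, i ≠ j ∧ p i ≤ p j ∧ ∃ v ∈ lenEq K (p j - p i), u j = u i * v
  · obtain ⟨i, j, hij, hp, v, hv, huv⟩ := hdiv
    have hcomp : subst (K := K) u =
        (subst (Function.update u j v)).comp (MonoidAlgebra.mapDomainAlgHom K K (shear i j)) := by
      refine algHom_ext_gen fun k => ?_
      have h1 : MonoidAlgebra.mapDomainAlgHom K K (shear i j) (gen K k) =
          mon K (shear i j (FreeMonoid.of k)) := by
        simp [gen, mon]
      rw [AlgHom.comp_apply, h1, subst_mon, subst_gen]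
      by_cases hk : k = j
      · subst hk; simp [shear, hij, huv]
      · simp [shear, hk]
    rw [hcomp, AlgHom.coe_comp]
    refine Function.Injective.comp ?_ (MonoidAlgebra.mapDomain_injective (shear_injective hij))
    have hnc : u i * v ≠ v * u i := fun h => hne' i j hij (by rw [huv, mul_assoc, ← h])
    have : (i = 0 ∧ j = 1) ∨ (i = 1 ∧ j = 0) := by omega
    refine ih (p i + (p j - p i)) (by have := hpos i; have := hsum i j hij; omega)
      (Function.update u j v) (Function.update p j (p j - p i)) (fun k => ?_) ?_ ?_
    · by_cases hk : k = j
      · subst hk; simpa using hv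
      · simpa [hk] using hu k
    · rcases this with ⟨rfl, rfl⟩ | ⟨rfl, rfl⟩
      · simpa using hnc
      · simpa using hnc.symm
    · rcases this with ⟨rfl, rfl⟩ | ⟨rfl, rfl⟩ <;> simp
      omega
  · push Not at hdiv
    obtain ⟨i, j, hij, hp⟩ : ∃ i j, i ≠ j ∧ p i ≤ p j := by
      rcases le_total (p 0) (p 1) with h | h
      exacts [⟨0, 1, by decide, h⟩, ⟨1, 0, by decide, h⟩]
    have hnodiv := hdiv i j hij hp
    have key : ∀ n, ∀ P ∈ supp K {w | w.length < n}, subst (K := K) u P = 0 → P = 0 := by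
      intro n
      induction n with
      | zero =>
        intro P hP _
        by_contra h0
        obtain ⟨w, hw⟩ := exists_coeff_ne h0
        exact absurd (hP w hw) (by simp)
      | succ n ihn =>
        intro P hP h
        obtain ⟨c, A, hA, B, hB, rfl⟩ := decompose hij hP
        simp only [map_add, map_smul, map_one, map_mul, subst_gen] at h
        have hpos' : ∀ k Q, (u k * Q).coeff 1 = 0 := by
          intro k Q
          have : u k * Q ∈ supp K {w | 0 < w.length} :=
            mul_mem_supp (T := Set.univ) (fun s hs t _ => by
              have hs : s.length = p k := hs
              have := hpos k
              simp only [Set.mem_ofPred_eq, FreeMonoid.length_mul]; omega) (hu k)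
              (fun w _ => Set.mem_univ w)
          by_contra h'
          exact absurd (this 1 h') (by simp)
        have hc : c = 0 := by
          have := congrArg (coeffL K 1) h
          rw [map_add, map_add, map_smul] at this
          simpa [hpos', MonoidAlgebra.coeff_one_one] using this
        rw [hc, zero_smul, zero_add] at h
        have hB0 : subst u B = 0 := by
          by_contra hB0
          obtain ⟨v, hv, huv⟩ := exists_eq_mul (hu i) (hu j) hp hB0 h
          exact hnodiv v hv huv
        have hA0 : subst u A = 0 := by
          rw [hB0, mul_zero, add_zero] at h
          exact (mul_eq_zero.1 h).resolve_left (hu0 i)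
        rw [ihn A hA hA0, ihn B hB hB0, hc]
        simp
    rw [injective_iff_map_eq_zero]
    intro P hP
    refine key (P.coeff.support.sup FreeMonoid.length + 1) P (fun w hw => ?_) hP
    exact Nat.lt_succ_of_le (Finset.le_sup (f := FreeMonoid.length) (Finsupp.mem_support_iff.2 hw))

end

section
open Polynomial

variable {K : Type*} [Field K]

lemma exists_slope {E : ℕ → Fin 2 → NC K} {s : Finset ℕ} (hs : 0 ∉ s)
    (hE : ∃ k ∈ s, ∃ z, E k z ≠ 0) (χ : Fin 2 → ℚ) :
    ∃ κ : ℚ, (∀ k ∈ s, ∀ z, E k z ∈ degLE K χ (χ z + k * κ)) ∧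
      ∃ k ∈ s, ∃ z, comp K χ (χ z + k * κ) (E k z) ≠ 0 := by
  classical
  let T : Finset (Σ _ : ℕ, Σ _ : Fin 2, Word) :=
    s.sigma fun k => Finset.univ.sigma fun z => (E k z).coeff.support
  have hT : T.Nonempty := by
    obtain ⟨k, hk, z, hz⟩ := hE
    obtain ⟨w, hw⟩ := exists_coeff_ne hz
    exact ⟨⟨k, z, w⟩, by simp [T, hk, hw]⟩
  obtain ⟨⟨k, z, w⟩, hm, hmax⟩ := T.exists_max_image
    (fun t => (wt χ t.2.2 - χ t.2.1) / t.1) hT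
  have hpos : ∀ k ∈ s, (0 : ℚ) < k := fun k hk => by
    have : k ≠ 0 := fun h => hs (h ▸ hk)
    positivity
  have hm' : k ∈ s ∧ (E k z).coeff w ≠ 0 := by simpa [T] using hm
  refine ⟨(wt χ w - χ z) / k, fun k' hk' z' w' hw' => ?_, k, hm'.1, z, fun h => ?_⟩
  · have := hmax ⟨k', z', w'⟩ (by simp [T, hk', hw'])
    rw [div_le_iff₀ (hpos k' hk')] at this
    simp only [Set.mem_ofPred_eq]
    linarith
  · have h1 := hpos k hm'.1
    have h2 : wt χ w = χ z + k * ((wt χ w - χ z) / k) := by field_simp; ring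
    have := comp_coeff (P := E k z) h2
    rw [h] at this
    exact hm'.2 (by simpa using this.symm)

lemma IsLFIHD.isHD {Φ : NC K →ₐ[K] (NC K)[X]} (hΦ : IsLFIHD Φ) :
    IsHD fun k => ((lcoeff (NC K) k).restrictScalars K).comp Φ.toLinearMap where
  zero P := by simpa using hΦ.zero P
  one k hk := by simp [coeff_one, hk]
  mul k P Q := by simp [coeff_mul]

lemma exists_nat_wt (i : Fin 2) (w : Word) : ∃ n : ℕ, wt (Pi.single i 1) w = n := by
  induction w using FreeMonoid.inductionOn' with
  | one => exact ⟨0, by simp⟩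
  | of_mul k w ih =>
    obtain ⟨n, hn⟩ := ih
    by_cases hk : k = i
    · subst hk; exact ⟨1 + n, by simp [hn]⟩
    · exact ⟨n, by simp [hn, hk]⟩

lemma wt_single_nonneg (i : Fin 2) (w : Word) : 0 ≤ wt (Pi.single i 1) w := by
  obtain ⟨n, hn⟩ := exists_nat_wt i w
  rw [hn]; positivity

lemma eq_pow_of_wt_eq_zero {i j : Fin 2} (hij : i ≠ j) {w : Word}
    (hw : wt (Pi.single j 1) w = 0) : w = FreeMonoid.of i ^ w.length := by
  induction w using FreeMonoid.inductionOn' with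
  | one => simp
  | of_mul k w ih =>
    have h0 := wt_single_nonneg j w
    have : k = i ∨ k = j := by omega
    rcases this with rfl | rfl
    · rw [FreeMonoid.length_mul, FreeMonoid.length_of, add_comm, pow_succ', ← ih]
      simpa [hij] using hw
    · simp at hw; linarith

/-- Abelianization. -/
noncomputable def ab (K : Type*) [Field K] : NC K →ₐ[K] MvPolynomial (Fin 2) K :=
  subst MvPolynomial.X

@[simp] lemma ab_gen (i : Fin 2) : ab K (gen K i) = MvPolynomial.X i := subst_gen _ _

lemma ab_ne_zero {i j : Fin 2} (hij : i ≠ j) {P : NC K} {q : ℕ}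
    (h : P.coeff (FreeMonoid.of i ^ q) ≠ 0) : ab K P ≠ 0 := by
  classical
  intro h0
  let v : Fin 2 → K[X] := fun k => if k = i then X else 0
  have h1 : subst v = (MvPolynomial.aeval v).comp (ab K) :=
    algHom_ext_gen fun k => by simp
  have h2 : ((lcoeff K q).restrictScalars K).comp (subst v).toLinearMap =
      coeffL K (FreeMonoid.of i ^ q) := by
    refine ext_mon fun w => ?_
    have h3 : w = FreeMonoid.of i ^ w.length ∨ subst v (mon K w) = 0 := by
      induction w using FreeMonoid.inductionOn' with
      | one => simp
      | of_mul k w ih =>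
        have : k = i ∨ k = j := by omega
        rw [mon_of_mul, map_mul]
        rcases this with rfl | rfl
        · rcases ih with ih | ih
          · left
            rw [FreeMonoid.length_mul, FreeMonoid.length_of, add_comm, pow_succ', ← ih]
          · right; rw [ih, mul_zero]
        · right; simp [v, hij.symm]
    have h4 : ∀ r, subst v (mon K (FreeMonoid.of i ^ r)) = X ^ r := fun r => by
      rw [mon, map_pow, map_pow]
      exact congrArg (· ^ r) (by rw [← mon, mon_of, subst_gen]; simp [v])
    have h5 : (mon K w).coeff (FreeMonoid.of i ^ q) = if w = FreeMonoid.of i ^ q then 1 else 0 := by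
      simp only [mon, MonoidAlgebra.of_apply, MonoidAlgebra.coeff_single, Finsupp.single_apply]
    have hl : ∀ r, (FreeMonoid.of i ^ r).length = r := fun r => by
      induction r with
      | zero => simp
      | succ r ih => rw [pow_succ, FreeMonoid.length_mul, ih, FreeMonoid.length_of]
    simp only [LinearMap.comp_apply, AlgHom.toLinearMap_apply, LinearMap.restrictScalars_apply,
      lcoeff_apply, coeffL_apply]
    rw [h5]
    rcases h3 with h3 | h3
    · have h6 : w = FreeMonoid.of i ^ q ↔ q = w.length :=
        ⟨fun h => by rw [h, hl], fun h => by rw [h]; exact h3⟩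
      simp only [h6]
      rw [h3, h4, coeff_X_pow, hl]
    · have h6 : w ≠ FreeMonoid.of i ^ q := by
        rintro rfl
        rw [h4] at h3
        exact pow_ne_zero _ X_ne_zero h3
      rw [h3, if_neg h6, coeff_zero]
  apply h
  rw [← coeffL_apply, ← h2]
  simp [h1, h0]

/-- A bihomogeneous locally finite iterative higher derivation with nonnegative shifts
is trivial. -/
lemma natDegree_eq_zero_of_nonneg {Φ : NC K →ₐ[K] (NC K)[X]} (hΦ : IsLFIHD Φ) {κ : Fin 2 → ℚ}
    (hκ : ∀ y, 0 ≤ κ y)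
    (hhom : ∀ y z (k : ℕ), (Φ (gen K z)).coeff k ∈
      homog K (Pi.single y 1) ((Pi.single y 1 : Fin 2 → ℚ) z + k * κ y)) (z : Fin 2) :
    (Φ (gen K z)).natDegree = 0 := by
  have hinj : ∀ P, P ≠ 0 → Φ P ≠ 0 := fun P hP h => hP (by rw [← hΦ.zero P, h, coeff_zero])
  have hgen0 : ∀ z, gen K z ≠ 0 := fun z => by
    simp [gen]
  set m : Fin 2 → ℕ := fun z => (Φ (gen K z)).natDegree with hm
  set u : Fin 2 → NC K := fun z => (Φ (gen K z)).leadingCoeff with hu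
  have hu0 : ∀ z, u z ≠ 0 := fun z => leadingCoeff_ne_zero.2 (hinj _ (hgen0 z))
  have huh : ∀ y z, u z ∈ homog K (Pi.single y 1) ((Pi.single y 1 : Fin 2 → ℚ) z + m z * κ y) :=
    fun y z => hhom y z _
  have hwt : ∀ z w, (u z).coeff w ≠ 0 → ∀ ω, wt ω w = ω z + m z * (ω 0 * κ 0 + ω 1 * κ 1) := by
    intro z w hw ω
    have h0 : wt (Pi.single 0 1) w = _ := huh 0 z w hw
    have h1 : wt (Pi.single 1 1) w = _ := huh 1 z w hw
    rw [wt_linear ω (i := 0) (j := 1) (by decide), h0, h1]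
    fin_cases z <;> simp <;> ring
  have hp : ∀ z, ∃ p : ℕ, u z ∈ lenEq K p ∧ (p : ℚ) = 1 + m z * (κ 0 + κ 1) := by
    intro z
    obtain ⟨w, hw⟩ := exists_coeff_ne (hu0 z)
    have h1 := hwt z w hw fun _ => 1
    rw [wt_one_one] at h1
    refine ⟨w.length, fun v hv => ?_, by simpa using h1⟩
    have h2 := hwt z v hv fun _ => 1
    rw [← h1, wt_one_one] at h2
    exact_mod_cast h2
  choose p hp hpm using hp
  have hne : u 0 * u 1 ≠ u 1 * u 0 := by
    intro hc
    have hc' : u 0 ^ p 1 * u 1 ^ p 0 = u 1 ^ p 0 * u 0 ^ p 1 := Commute.pow_pow hc _ _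
    have hl : ∀ (z : Fin 2) (n : ℕ), u z ^ n ∈ lenEq K (n * p z) := by
      intro z n
      induction n with
      | zero =>
        rw [pow_zero, ← mon_one]
        exact mon_mem_supp (by simp)
      | succ n ih =>
        rw [pow_succ]
        refine mul_mem_supp (fun s hs t ht => ?_) ih (hp z)
        simp only [Set.mem_ofPred_eq, FreeMonoid.length_mul] at *
        rw [hs, ht]; ring
    obtain ⟨c, hcc⟩ := exists_smul_of_commute (hl 0 (p 1)) (by rw [mul_comm]; exact hl 1 (p 0))
      (pow_ne_zero _ (hu0 1)) hc'
    have hy : ∀ y, (p 1 : ℚ) * ((Pi.single y 1 : Fin 2 → ℚ) 0 + m 0 * κ y) =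
        p 0 * ((Pi.single y 1 : Fin 2 → ℚ) 1 + m 1 * κ y) := by
      intro y
      refine eq_of_mem_homog (pow_ne_zero (p 1) (hu0 0)) (pow_mem_homog (huh y 0) _) ?_
      rw [hcc]
      exact Submodule.smul_mem _ _ (pow_mem_homog (huh y 1) _)
    have h0 := hy 0
    have h1 := hy 1
    simp at h0 h1
    have e0 := hκ 0
    have e1 := hκ 1
    have hp0 : (0 : ℚ) < p 0 := by rw [hpm]; positivity
    have hp1 : (0 : ℚ) < p 1 := by rw [hpm]; positivity
    have h2 : (p 0 : ℚ) * p 1 * (1 + m 0 * κ 0 + m 1 * κ 1) = 0 := by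
      linear_combination (p 0 : ℚ) * (1 + m 1 * κ 1) * h0 - p 0 * (m 1 * κ 0) * h1
    have : (0 : ℚ) < p 0 * p 1 * (1 + m 0 * κ 0 + m 1 * κ 1) := by positivity
    exact this.ne' h2
  have hsub := subst_injective u p hp hne
  have hlead : ∀ w, (Φ (mon K w)).leadingCoeff = subst u (mon K w) ∧
      ((Φ (mon K w)).natDegree : ℚ) = wt (fun z => m z) w := by
    intro w
    induction w using FreeMonoid.inductionOn' with
    | one => simp
    | of_mul k w ih =>
      have hw0 : mon K w ≠ 0 := by simp [mon]
      rw [mon_of_mul, map_mul, map_mul, leadingCoeff_mul, natDegree_mul (hinj _ (hgen0 k))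
        (hinj _ hw0), ih.1, subst_gen, wt_mul, wt_of, ← ih.2]
      exact ⟨rfl, by push_cast; rfl⟩
  by_contra hz
  obtain ⟨w, hw⟩ := exists_coeff_ne (hu0 z)
  set N := (Φ (mon K w)).natDegree with hN
  have hcoef : (Φ (u z)).coeff N = subst u (u z) := by
    refine eqOn_supp (f := ((lcoeff (NC K) N).restrictScalars K).comp Φ.toLinearMap)
      (g := (subst u).toLinearMap) (S := {v | wt (fun z => m z) v = N}) (fun v hv => ?_)
      (fun v hv => ?_)
    · have hv : wt (fun z => m z) v = N := hv
      rw [← (hlead v).2] at hv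
      have hv' : (Φ (mon K v)).natDegree = N := by exact_mod_cast hv
      simp only [LinearMap.comp_apply, AlgHom.toLinearMap_apply, LinearMap.restrictScalars_apply,
        lcoeff_apply]
      rw [← hv', ← (hlead v).1]; rfl
    · simp only [Set.mem_ofPred_eq]
      rw [hN, (hlead w).2, hwt z v hv, hwt z w hw]
  have hNpos : 0 < N := by
    have h1 := (hlead w).2
    rw [hwt z w hw] at h1
    have e0 := hκ 0
    have e1 := hκ 1
    have hmz : (0 : ℚ) < m z := by exact_mod_cast Nat.pos_of_ne_zero hz
    have : (0 : ℚ) < N := by rw [hN, h1]; positivity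
    exact_mod_cast this
  have h2 : subst u (u z) ≠ 0 := fun h => hu0 z (hsub (by rw [h, map_zero]))
  apply h2
  rw [← hcoef, hu]
  simp only [leadingCoeff]
  rw [hΦ.iter, coeff_eq_zero_of_natDegree_lt (by omega), smul_zero]

end

section
open Polynomial

variable {K : Type*} [Field K]

lemma eq_smul_mon_of_supp {v : Word} {P : NC K} (hP : P ∈ supp K {v}) :
    P = P.coeff v • mon K v := by
  rcases eq_or_ne P 0 with rfl | h0
  · simp
  · obtain ⟨w, hw⟩ := exists_coeff_ne h0
    have hs : P.coeff.support ⊆ {v} := fun u hu => by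
      simpa using hP u (Finsupp.mem_support_iff.1 hu)
    conv_lhs => rw [eq_sum_mon P]
    rw [Finset.sum_subset hs, Finset.sum_singleton]
    intro u _ hu
    rw [Finsupp.notMem_support_iff.1 hu, zero_smul]

lemma single_wt_cases {i : Fin 2} {z : Fin 2} {κ : ℚ} (hκ : κ < 0) {k : ℕ} (hk : k ≠ 0) {w : Word}
    (hw : wt (Pi.single i 1) w = (Pi.single i 1 : Fin 2 → ℚ) z + k * κ) :
    z = i ∧ wt (Pi.single i 1) w = 0 := by
  obtain ⟨n, hn⟩ := exists_nat_wt i w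
  have hkκ : (k : ℚ) * κ < 0 := mul_neg_of_pos_of_neg (by positivity) hκ
  have hn0 : (0 : ℚ) ≤ n := by positivity
  by_cases hz : z = i
  · subst hz
    rw [Pi.single_eq_same, hn] at hw
    refine ⟨rfl, ?_⟩
    have : (n : ℚ) < 1 := by linarith
    have : n < 1 := by exact_mod_cast this
    rw [hn, Nat.lt_one_iff.1 this]; simp
  · rw [Pi.single_eq_of_ne hz, hn] at hw
    linarith

theorem exists_ab_ne {Φ : NC K →ₐ[K] (NC K)[X]} {ω : Fin 2 → ℚ} {δ : ℚ} (hω : ∀ i, 0 < ω i)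
    (hΦ : IsLFIHD Φ)
    (hhom : ∀ (k : ℕ) i, (Φ (gen K i)).coeff k ∈ homog K ω (ω i + k * δ))
    (hnt : ∃ k i, k ≠ 0 ∧ (Φ (gen K i)).coeff k ≠ 0)
    (hne : ∀ i j, i ≠ j → ∀ k, k ≠ 0 → ∀ c : K, c ≠ 0 → ∀ q : ℕ,
      (Φ (gen K i)).coeff k ≠ c • gen K j ^ q) (j : Fin 2) :
    ∃ k, k ≠ 0 ∧ ab K ((Φ (gen K j)).coeff k) ≠ 0 := by
  obtain ⟨i, hij⟩ : ∃ i : Fin 2, i ≠ j := exists_ne j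
  let χ : Fin 2 → ℚ := Pi.single i 1
  obtain ⟨N, hN⟩ : ∃ N : ℕ, ∀ k, N ≤ k → ∀ z, (Φ (gen K z)).coeff k = 0 := by
    refine ⟨(Φ (gen K 0)).natDegree + (Φ (gen K 1)).natDegree + 1, fun k hk z => ?_⟩
    apply coeff_eq_zero_of_natDegree_lt
    fin_cases z <;> simp <;> omega
  obtain ⟨κ, hle0, k0, hk0, z0, hnz⟩ := exists_slope
    (E := fun k z => (Φ (gen K z)).coeff k) (s := (Finset.range N).erase 0) (by simp) (by
      obtain ⟨k, z, hk, hz⟩ := hnt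
      refine ⟨k, ?_, z, hz⟩
      simp only [Finset.mem_erase, Finset.mem_range]
      refine ⟨hk, ?_⟩
      by_contra h
      exact hz (hN k (by omega) z)) χ
  have hk0' : k0 ≠ 0 := (Finset.mem_erase.1 hk0).1
  have hle : ∀ (k : ℕ) z, (Φ (gen K z)).coeff k ∈ degLE K χ (χ z + k * κ) := by
    intro k z
    by_cases hk : k = 0
    · subst hk
      rw [hΦ.zero]
      simpa using homog_le_degLE (gen_mem_homog z)
    · by_cases hkN : k < N
      · exact hle0 k (by simp [hk, hkN]) z
      · rw [hN k (by omega)]; exact zero_mem _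
  obtain ⟨Φ', hΦ', hc⟩ := hΦ.isHD.exists_limit (ω := χ) (δ := κ) hle
    ⟨N, fun k hk i => by
      change comp K χ (χ i + k * κ) ((Φ (gen K i)).coeff k) = 0
      rw [hN k hk, map_zero]⟩
    (fun w j k => by
      rw [← map_nsmul]
      exact congrArg _ (hΦ.iter _ _ _))
  have hcg : ∀ z (k : ℕ), (Φ' (gen K z)).coeff k = comp K χ (χ z + k * κ) ((Φ (gen K z)).coeff k) :=
    fun z k => by
      have := hc (FreeMonoid.of z) k
      rw [wt_of] at this
      exact this
  have hχω : ∀ w, wt ω w = ω i * wt χ w + ω j * wt (Pi.single j 1) w := wt_linear ω hij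
  set l : ℚ := (δ - ω i * κ) / ω j with hl
  have hj := hω j
  have hwj : ∀ z (k : ℕ) w, (comp K χ (χ z + k * κ) ((Φ (gen K z)).coeff k)).coeff w ≠ 0 →
      wt (Pi.single j 1) w = (Pi.single j 1 : Fin 2 → ℚ) z + k * l := by
    intro z k w hw
    have h1 : wt χ w = χ z + k * κ := comp_mem _ _ _ w hw
    have h2 : wt ω w = ω z + k * δ := comp_mem_supp (hhom k z) w hw
    rw [hχω, h1] at h2
    have h3 : ω z = ω i * χ z + ω j * (Pi.single j 1 : Fin 2 → ℚ) z := by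
      have := hχω (FreeMonoid.of z)
      simpa using this
    rw [h3] at h2
    have h4 : ω j * l = δ - ω i * κ := by rw [hl]; field_simp
    have : ω j * (wt (Pi.single j 1) w) = ω j * ((Pi.single j 1 : Fin 2 → ℚ) z + k * l) := by
      linear_combination h2 - k * h4
    exact mul_left_cancel₀ hj.ne' this
  obtain ⟨w, hw⟩ := exists_coeff_ne hnz
  have hwi : wt χ w = χ z0 + k0 * κ := comp_mem _ _ _ w hw
  have hPw : ((Φ (gen K z0)).coeff k0).coeff w ≠ 0 := by rwa [comp_coeff hwi] at hw
  rcases lt_or_ge κ 0 with hκ | hκ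
  · exfalso
    obtain ⟨rfl, h0⟩ := single_wt_cases hκ hk0' hwi
    have hwq := eq_pow_of_wt_eq_zero hij.symm h0
    have hmem : (Φ (gen K z0)).coeff k0 ∈ supp K {w} := by
      intro v hv
      have h1 : wt χ v ≤ 0 := by
        have : wt χ v ≤ _ := hle k0 z0 v hv
        rwa [← hwi, h0] at this
      have h1 : wt χ v = 0 := le_antisymm h1 (wt_single_nonneg _ _)
      have h2 : wt ω v = _ := hhom k0 z0 v hv
      have h3 : wt ω w = _ := hhom k0 z0 w hPw
      rw [← h3, hχω, hχω, h1, h0] at h2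
      have hvq := eq_pow_of_wt_eq_zero hij.symm h1
      have h5 : wt (Pi.single j 1) v = wt (Pi.single j 1) w :=
        mul_left_cancel₀ hj.ne' (by linarith)
      have h6 := wt_linear (fun _ => 1) hij v
      have h7 := wt_linear (fun _ => 1) hij w
      rw [wt_one_one, h1, h5] at h6
      rw [wt_one_one, h0] at h7
      have h8 : v.length = w.length := by
        have : (v.length : ℚ) = w.length := by rw [h6, h7]
        exact_mod_cast this
      simp only [Set.mem_singleton_iff]
      rw [hvq, hwq, h8, ← hwq]
    refine hne z0 j hij k0 hk0' _ hPw w.length ?_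
    have h1 := eq_smul_mon_of_supp hmem
    have h2 : mon K w = gen K j ^ w.length := by
      conv_lhs => rw [hwq]
      rw [mon, map_pow]; rfl
    rwa [h2] at h1
  · rcases lt_or_ge l 0 with hl0 | hl0
    · obtain ⟨rfl, h0⟩ := single_wt_cases hl0 hk0' (hwj z0 k0 w hw)
      refine ⟨k0, hk0', ab_ne_zero hij (q := w.length) ?_⟩
      rwa [← eq_pow_of_wt_eq_zero hij h0]
    · exfalso
      have h := natDegree_eq_zero_of_nonneg hΦ' (κ := fun y => if y = i then κ else l)
        (fun y => by split_ifs <;> assumption) (fun y z k => by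
          rw [hcg]
          by_cases hy : y = i
          · subst hy; simpa using comp_mem _ _ _
          · have : y = j := by omega
            subst this
            rw [if_neg hy]
            exact fun v hv => hwj z k v hv) z0
      refine hnz ?_
      rw [← hcg, coeff_eq_zero_of_natDegree_lt (by omega)]

end

section
open Polynomial

variable {K : Type*} [Field K]

lemma zpow_char_injective [Infinite K] :
    Function.Injective fun n : ℤ => (Units.coeHom K).comp (zpowGroupHom (α := Kˣ) n) := by
  have key : ∀ n m : ℤ, n < m → ¬ ∀ t : Kˣ, t ^ n = t ^ m := by
    intro n m hnm h
    obtain ⟨d, hd⟩ := Int.eq_ofNat_of_zero_le (sub_nonneg.2 hnm.le)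
    have hd0 : d ≠ 0 := by rintro rfl; simp at hd; omega
    have h1 : (X ^ d - 1 : K[X]) * X = 0 := by
      refine Polynomial.funext fun r => ?_
      by_cases hr : r = 0
      · simp [hr]
      · have h2 := h (Units.mk0 r hr)
        have h3 : (Units.mk0 r hr) ^ (m - n) = 1 := by rw [zpow_sub, h2, mul_inv_cancel]
        rw [hd] at h3
        have h4 : r ^ d = 1 := by simpa using congrArg Units.val h3
        simp [h4]
    exact mul_ne_zero (X_pow_sub_C_ne_zero (Nat.pos_of_ne_zero hd0) (1 : K)) X_ne_zero
      (by simpa using h1)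
  intro n m h
  have h' : ∀ t : Kˣ, t ^ n = t ^ m := fun t => Units.ext (by simpa using DFunLike.congr_fun h t)
  rcases lt_trichotomy n m with hlt | heq | hgt
  · exact absurd h' (key n m hlt)
  · exact heq
  · exact absurd (fun t => (h' t).symm) (key m n hgt)

lemma mem_of_forall_sum_zpow_mem [Infinite K] {M : Type*} [AddCommGroup M] [Module K M]
    {V : Submodule K M} {f : ℤ →₀ M}
    (h : ∀ t : Kˣ, (f.sum fun n c => ((t ^ n : Kˣ) : K) • c) ∈ V) (n : ℤ) : f n ∈ V := by
  rw [← Submodule.Quotient.mk_eq_zero, ← Module.forall_dual_apply_eq_zero_iff K]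
  intro φ
  have hli := (linearIndependent_monoidHom Kˣ K).comp _ (zpow_char_injective (K := K))
  rw [linearIndependent_iff] at hli
  have h1 := hli (Finsupp.mapRange.linearMap (φ ∘ₗ V.mkQ) f) (by
    funext t
    have h2 : φ (V.mkQ (f.sum fun n c => ((t ^ n : Kˣ) : K) • c)) = 0 := by
      rw [Submodule.mkQ_apply, (Submodule.Quotient.mk_eq_zero V).2 (h t), map_zero]
    rw [Finsupp.linearCombination_apply, Finsupp.mapRange.linearMap_apply,
      Finsupp.sum_mapRange_index (by simp)]
    rw [Finsupp.sum, map_sum, map_sum] at h2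
    rw [Finsupp.sum, Finset.sum_apply, Pi.zero_apply, ← h2]
    refine Finset.sum_congr rfl fun m _ => ?_
    simp [mul_comm])
  have h3 := DFunLike.congr_fun h1 n
  simpa using h3

/-- `D` decomposes elements into weight components of the torus action `σ`. -/
def IsDecomp (σ : Kˣ →* (NC K ≃ₐ[K] NC K)) (D : NC K →ₗ[K] (ℤ →₀ NC K)) : Prop :=
  ∀ t P, σ t P = (D P).sum fun n c => ((t ^ n : Kˣ) : K) • c

/-- Evaluation of Laurent polynomials at a unit of the base field. -/
noncomputable def evalT (A : Type*) [Ring A] [Algebra K A] (t : Kˣ) :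
    AddMonoidAlgebra A ℤ →ₐ[K] A :=
  AddMonoidAlgebra.liftNCAlgHom (AlgHom.id K A)
    (((algebraMap K A) : K →* A).comp ((Units.coeHom K).comp (zpowersHom Kˣ t)))
    fun _ _ => Algebra.commute_algebraMap_right _ _

lemma exists_isDecomp (σ : Kˣ →* (NC K ≃ₐ[K] NC K))
    (hreg : ∀ i, ∃ a : ℤ →₀ NC K, ∀ t, σ t (gen K i) = a.sum fun m c => ((t ^ m : Kˣ) : K) • c) :
    ∃ D, IsDecomp σ D := by
  choose a ha using hreg
  let Δ : NC K →ₐ[K] AddMonoidAlgebra (NC K) ℤ := subst fun i => AddMonoidAlgebra.ofCoeff (a i)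
  refine ⟨(AddMonoidAlgebra.coeffLinearEquiv K).toLinearMap ∘ₗ Δ.toLinearMap, fun t P => ?_⟩
  let ev := evalT (NC K) t
  have hev : ∀ Q, ev Q = Q.coeff.sum fun n c => ((t ^ n : Kˣ) : K) • c := by
    intro Q
    induction Q using AddMonoidAlgebra.induction_linear with
    | zero => simp
    | add x y hx hy =>
      rw [map_add, hx, hy, AddMonoidAlgebra.coeff_add, Finsupp.sum_add_index'] <;>
      simp
    | single n c =>
      have : ev (AddMonoidAlgebra.single n c) = c * algebraMap K (NC K) ((t ^ n : Kˣ) : K) := by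
        simp only [ev, evalT]
        erw [AddMonoidAlgebra.liftNC_single]
        simp
      rw [this, AddMonoidAlgebra.coeff_single, Finsupp.sum_single_index (by simp),
        Algebra.smul_def, Algebra.commutes]
  have : (σ t : NC K →ₐ[K] NC K) = ev.comp Δ := algHom_ext_gen fun i => by
    rw [AlgHom.comp_apply, hev]
    simpa [Δ] using ha i t
  have h2 := DFunLike.congr_fun this P
  rw [AlgHom.comp_apply, hev] at h2
  exact h2

/-- The higher derivations obtained from a torus action by the substitution `t = 1 + u`. -/
noncomputable def torusHD (D : NC K →ₗ[K] (ℤ →₀ NC K)) (k : ℕ) : NC K →ₗ[K] NC K :=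
  (Finsupp.lsum ℕ fun n : ℤ => (Ring.choose n k : ℤ) • (LinearMap.id : NC K →ₗ[K] NC K)) ∘ₗ D

lemma torusHD_apply (D : NC K →ₗ[K] (ℤ →₀ NC K)) (k : ℕ) (P : NC K) :
    torusHD D k P = (D P).sum fun n c => (Ring.choose n k : ℤ) • c := by
  simp [torusHD, Finsupp.sum]

lemma IsDecomp.sum_eq {σ : Kˣ →* (NC K ≃ₐ[K] NC K)} {D : NC K →ₗ[K] (ℤ →₀ NC K)}
    (hD : IsDecomp σ D) (P : NC K) : ∑ n ∈ (D P).support, D P n = P := by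
  have := hD 1 P
  simpa [Finsupp.sum] using this.symm

/-- A subspace containing all binomial moments of a family contains the family. -/
lemma mem_of_forall_sum_choose_mem {M : Type*} [AddCommGroup M] [Module K M]
    {V : Submodule K M} {f : ℤ →₀ M}
    (h : ∀ k : ℕ, (f.sum fun n c => (Ring.choose n k : ℤ) • c) ∈ V) (n : ℤ) : f n ∈ V := by
  classical
  obtain ⟨m, hm⟩ : ∃ m : ℕ, ∀ n ∈ f.support, 0 ≤ n + m :=
    ⟨∑ n ∈ f.support, n.natAbs, fun n hn => by
      have := Finset.single_le_sum (f := fun n : ℤ => n.natAbs) (fun _ _ => Nat.zero_le _) hn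
      push_cast
      have h2 : (n.natAbs : ℤ) ≤ ∑ i ∈ f.support, |i| := by
        have : ((n.natAbs : ℕ) : ℤ) ≤ ((∑ i ∈ f.support, i.natAbs : ℕ) : ℤ) := by
          exact_mod_cast this
        simpa using this
      omega⟩
  have hshift : ∀ k : ℕ, (∑ n ∈ f.support, (Ring.choose (n + m) k : ℤ) • f n) ∈ V := by
    intro k
    have : ∑ n ∈ f.support, (Ring.choose (n + m) k : ℤ) • f n =
        ∑ x ∈ Finset.HasAntidiagonal.antidiagonal k, (Ring.choose (m : ℤ) x.2) •
          f.sum fun n c => (Ring.choose n x.1 : ℤ) • c := by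
      simp only [Finsupp.sum, Finset.smul_sum]
      rw [Finset.sum_comm]
      refine Finset.sum_congr rfl fun n _ => ?_
      rw [Ring.add_choose_eq k (Commute.all _ _), Finset.sum_smul]
      exact Finset.sum_congr rfl fun x _ => by rw [smul_smul, mul_comm]
    rw [this]
    exact sum_mem fun x _ => zsmul_mem (h _) _
  by_contra hn
  set T := f.support.filter fun n => f n ∉ V with hT
  have hTn : T.Nonempty := ⟨n, by
    simp only [hT, Finset.mem_filter, Finsupp.mem_support_iff]
    exact ⟨fun h => hn (h ▸ zero_mem _), hn⟩⟩
  obtain ⟨N, hN, hmax⟩ := T.exists_max_image id hTn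
  rw [hT, Finset.mem_filter] at hN
  obtain ⟨k, hk⟩ := Int.eq_ofNat_of_zero_le (hm N hN.1)
  have h1 := hshift k
  rw [← Finset.add_sum_erase _ _ hN.1, hk, Ring.choose_natCast, Nat.choose_self, Nat.cast_one,
    one_smul] at h1
  refine hN.2 ((V.add_mem_iff_left (sum_mem fun n hn => ?_)).1 h1)
  rw [Finset.mem_erase] at hn
  rcases lt_or_gt_of_ne hn.1 with hlt | hgt
  · obtain ⟨l, hl⟩ := Int.eq_ofNat_of_zero_le (hm n hn.2)
    rw [hl, Ring.choose_natCast, Nat.choose_eq_zero_of_lt (by omega), Nat.cast_zero, zero_smul]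
    exact zero_mem _
  · refine zsmul_mem ?_ _
    by_contra hnV
    have := hmax n (by rw [hT, Finset.mem_filter]; exact ⟨hn.2, hnV⟩)
    simp only [id] at this
    omega

section
variable [Infinite K] {σ : Kˣ →* (NC K ≃ₐ[K] NC K)} {D : NC K →ₗ[K] (ℤ →₀ NC K)}

lemma IsDecomp.mem (hD : IsDecomp σ D) {V : Submodule K (NC K)} {P : NC K}
    (h : ∀ t, σ t P ∈ V) (n : ℤ) : D P n ∈ V :=
  mem_of_forall_sum_zpow_mem (fun t => hD t P ▸ h t) n

lemma IsDecomp.torusHD_mem (hD : IsDecomp σ D) {V : Submodule K (NC K)} {P : NC K}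
    (h : ∀ t, σ t P ∈ V) (k : ℕ) : torusHD D k P ∈ V := by
  rw [torusHD_apply]
  exact sum_mem fun n _ => zsmul_mem (hD.mem h n) _

lemma IsDecomp.eq_of_eigen (hD : IsDecomp σ D) {P : NC K} {n : ℤ}
    (h : ∀ t, σ t P = ((t ^ n : Kˣ) : K) • P) : D P = Finsupp.single n P := by
  rw [← sub_eq_zero]
  ext1 m
  rw [Finsupp.coe_zero, Pi.zero_apply, ← Submodule.mem_bot K]
  refine mem_of_forall_sum_zpow_mem (fun t => ?_) m
  rw [Finsupp.sum_sub_index (fun _ _ _ => smul_sub _ _ _), ← hD,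
    Finsupp.sum_single_index (h := fun x c => ((t ^ x : Kˣ) : K) • c) (smul_zero _), h, sub_self]
  exact zero_mem _

lemma IsDecomp.eigen (hD : IsDecomp σ D) (P : NC K) (n : ℤ) (s : Kˣ) :
    σ s (D P n) = ((s ^ n : Kˣ) : K) • D P n := by
  let f : ℤ →₀ NC K := Finsupp.onFinset (D P).support
    (fun n => σ s (D P n) - ((s ^ n : Kˣ) : K) • D P n)
    (fun n h => Finsupp.mem_support_iff.2 fun h' => h (by simp [h']))
  have hf : f n ∈ (⊥ : Submodule K (NC K)) := mem_of_forall_sum_zpow_mem (fun t => by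
    rw [Submodule.mem_bot, Finsupp.onFinset_sum _ (fun _ => smul_zero _)]
    have h1 := hD (s * t) P
    rw [map_mul, AlgEquiv.mul_apply, hD t P, Finsupp.sum, map_sum, Finsupp.sum,
      ← sub_eq_zero, ← Finset.sum_sub_distrib] at h1
    rw [← h1]
    refine Finset.sum_congr rfl fun m _ => ?_
    rw [map_smul, mul_zpow, Units.val_mul, smul_sub, smul_smul, mul_comm]) n
  exact sub_eq_zero.1 hf

lemma IsDecomp.torusHD_eigen (hD : IsDecomp σ D) {P : NC K} {n : ℤ}
    (h : ∀ t, σ t P = ((t ^ n : Kˣ) : K) • P) (k : ℕ) :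
    torusHD D k P = (Ring.choose n k : ℤ) • P := by
  rw [torusHD_apply, hD.eq_of_eigen h,
    Finsupp.sum_single_index (h := fun x c => (Ring.choose x k : ℤ) • c) (smul_zero _)]

lemma IsDecomp.induction (hD : IsDecomp σ D) {p : NC K → Prop} (P : NC K) (h0 : p 0)
    (hadd : ∀ P Q, p P → p Q → p (P + Q))
    (heig : ∀ P (n : ℤ), (∀ t, σ t P = ((t ^ n : Kˣ) : K) • P) → p P) : p P := by
  rw [← hD.sum_eq P]
  exact Finset.sum_induction _ p hadd h0 fun n _ => heig _ n (hD.eigen P n)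

lemma IsDecomp.isHD (hD : IsDecomp σ D) : IsHD (torusHD D) where
  zero P := by
    rw [torusHD_apply]
    simpa [Finsupp.sum] using hD.sum_eq P
  one k hk := by
    rw [hD.torusHD_eigen (n := 0) (fun t => by simp), Ring.choose_zero_ite, if_neg hk, zero_smul]
  mul k P Q := by
    induction P using hD.induction with
    | h0 => simp
    | hadd P P' h h' => rw [add_mul, map_add, h, h', ← Finset.sum_add_distrib]; simp [add_mul]
    | heig P m hP =>
    induction Q using hD.induction with
    | h0 => simp
    | hadd P P' h h' => rw [mul_add, map_add, h, h', ← Finset.sum_add_distrib]; simp [mul_add]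
    | heig Q n hQ =>
      have hPQ : ∀ t, σ t (P * Q) = ((t ^ (m + n) : Kˣ) : K) • (P * Q) := fun t => by
        rw [map_mul, hP, hQ, smul_mul_smul_comm, zpow_add, Units.val_mul]
      rw [hD.torusHD_eigen hPQ, Ring.add_choose_eq k (Commute.all _ _), Finset.sum_smul]
      refine Finset.sum_congr rfl fun x _ => ?_
      rw [hD.torusHD_eigen hP, hD.torusHD_eigen hQ, smul_mul_smul_comm]

lemma IsDecomp.torusHD_torusHD (hD : IsDecomp σ D) (j k : ℕ) (P : NC K) :
    torusHD D j (torusHD D k P) = ∑ x ∈ Finset.HasAntidiagonal.antidiagonal j,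
      (k.choose x.2 * (k + x.1).choose k) • torusHD D (k + x.1) P := by
  induction P using hD.induction with
  | h0 => simp
  | hadd P P' h h' => rw [map_add, map_add, h, h', ← Finset.sum_add_distrib]; simp
  | heig P n hP =>
    rw [hD.torusHD_eigen hP, map_zsmul, hD.torusHD_eigen hP, smul_smul]
    have h1 : Ring.choose n j = ∑ x ∈ Finset.HasAntidiagonal.antidiagonal j,
        Ring.choose (n - k) x.1 * (k.choose x.2 : ℤ) := by
      have := Ring.add_choose_eq j (Commute.all (n - k) (k : ℤ))
      rw [sub_add_cancel] at this
      rw [this]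
      exact Finset.sum_congr rfl fun x _ => by rw [Ring.choose_natCast]
    rw [h1, Finset.mul_sum, Finset.sum_smul]
    refine Finset.sum_congr rfl fun x _ => ?_
    have h2 := Ring.choose_smul_choose n (Nat.le_add_right k x.1)
    rw [Nat.add_sub_cancel_left] at h2
    rw [hD.torusHD_eigen hP, ← natCast_zsmul, smul_smul]
    congr 1
    rw [← mul_assoc, ← h2]
    push_cast; ring

end

end

section
open Polynomial

variable {K : Type*} [Field K]

/-- The length degree. -/
noncomputable def len (P : NC K) : ℕ := P.coeff.support.sup FreeMonoid.length

lemma len_le_iff {P : NC K} {n : ℕ} : len P ≤ n ↔ P ∈ degLE K (fun _ => 1) n := by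
  rw [len, Finset.sup_le_iff]
  refine forall_congr' fun w => ?_
  rw [Finsupp.mem_support_iff, Set.mem_ofPred_eq, wt_one_one, Nat.cast_le]

lemma exists_len (P : NC K) (hP : P ≠ 0) : comp K (fun _ => 1) (len P) P ≠ 0 := by
  have hs : P.coeff.support.Nonempty := by
    obtain ⟨w, hw⟩ := exists_coeff_ne hP
    exact ⟨w, by simpa using hw⟩
  obtain ⟨w, hw, hl⟩ := Finset.exists_mem_eq_sup _ hs FreeMonoid.length
  intro h
  have := comp_coeff (K := K) (P := P) (w := w) (ω := fun _ => 1) (d := len P)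
    (by rw [wt_one_one, len, hl])
  rw [h] at this
  exact Finsupp.mem_support_iff.1 hw (by simpa using this.symm)

lemma len_mul {P Q : NC K} (hP : P ≠ 0) (hQ : Q ≠ 0) : len (P * Q) = len P + len Q := by
  have h1 := len_le_iff.1 (le_refl (len P))
  have h2 := len_le_iff.1 (le_refl (len Q))
  apply le_antisymm
  · rw [len_le_iff]; push_cast; exact mul_mem_degLE h1 h2
  · by_contra! h
    have h3 := comp_mul h1 h2
    have h4 := len_le_iff.1 (le_refl (len (P * Q)))
    rw [comp_of_degLT (degLE_le_degLT (by exact_mod_cast h) h4)] at h3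
    exact mul_ne_zero (exists_len P hP) (exists_len Q hQ) h3.symm

@[simp] lemma len_zero : len (0 : NC K) = 0 := by simp [len]

@[simp] lemma len_one : len (1 : NC K) = 0 := by
  rw [← Nat.le_zero, len_le_iff]
  simpa using homog_le_degLE (one_mem_homog (ω := fun _ => 1))

lemma len_pow (P : NC K) (q : ℕ) : len (P ^ q) = q * len P := by
  rcases eq_or_ne P 0 with rfl | hP
  · rcases eq_or_ne q 0 with rfl | hq
    · simp
    · simp [zero_pow hq]
  · induction q with
    | zero => simp
    | succ q ih => rw [pow_succ, len_mul (pow_ne_zero _ hP) hP, ih]; ring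

lemma len_mul_le (P Q : NC K) : len (P * Q) ≤ len P + len Q := by
  by_cases hP : P = 0
  · simp [hP]
  by_cases hQ : Q = 0
  · simp [hQ]
  exact (len_mul hP hQ).le

lemma len_add_le (P Q : NC K) : len (P + Q) ≤ max (len P) (len Q) :=
  len_le_iff.2 (add_mem (len_le_iff.1 (le_max_left _ _)) (len_le_iff.1 (le_max_right _ _)))

lemma len_smul_le (c : K) (P : NC K) : len (c • P) ≤ len P :=
  len_le_iff.2 (Submodule.smul_mem _ _ (len_le_iff.1 le_rfl))

/-- A degree-like function which is invariant under the action `σ`. -/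
structure IsWeight (σ : Kˣ →* (NC K ≃ₐ[K] NC K)) (W : NC K → ℕ) : Prop where
  zero : W 0 = 0
  one : W 1 = 0
  add : ∀ P Q, W (P + Q) ≤ max (W P) (W Q)
  smul : ∀ (c : K) P, W (c • P) ≤ W P
  mul : ∀ P Q, W (P * Q) ≤ W P + W Q
  pow : ∀ P q, W (P ^ q) = q * W P
  inv : ∀ t P, W (σ t P) ≤ W P
  const : ∀ P, W P = 0 → ∃ c : K, P = c • 1

lemma exists_isWeight {σ : Kˣ →* (NC K ≃ₐ[K] NC K)} {D : NC K →ₗ[K] (ℤ →₀ NC K)}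
    (hD : IsDecomp σ D) : ∃ W, IsWeight σ W := by
  have hb : ∀ P, BddAbove (Set.range fun t => len (σ t P)) := by
    intro P
    refine ⟨(D P).support.sup fun n => len (D P n), ?_⟩
    rintro _ ⟨t, rfl⟩
    simp only
    rw [hD t P, len_le_iff]
    refine sum_mem fun n hn => Submodule.smul_mem _ _ (len_le_iff.1 ?_)
    exact Finset.le_sup (f := fun n => len (D P n)) hn
  have hle : ∀ t P, len (σ t P) ≤ ⨆ t, len (σ t P) := fun t P => le_ciSup (hb P) t
  have hat : ∀ P, ∃ t, len (σ t P) = ⨆ t, len (σ t P) := fun P =>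
    Nat.sSup_mem (Set.range_nonempty _) (hb P)
  refine ⟨fun P => ⨆ t, len (σ t P), ?_, ?_, ?_, ?_, ?_, ?_, ?_, ?_⟩
  · simp
  · simp
  · intro P Q
    refine ciSup_le fun t => ?_
    rw [map_add]
    exact (len_add_le _ _).trans (max_le_max (hle t P) (hle t Q))
  · intro c P
    refine ciSup_le fun t => ?_
    rw [map_smul]
    exact (len_smul_le _ _).trans (hle t P)
  · intro P Q
    refine ciSup_le fun t => ?_
    rw [map_mul]
    exact (len_mul_le _ _).trans (add_le_add (hle t P) (hle t Q))
  · intro P q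
    apply le_antisymm
    · refine ciSup_le fun t => ?_
      rw [map_pow, len_pow]
      exact Nat.mul_le_mul_left _ (hle t P)
    · obtain ⟨t, ht⟩ := hat P
      rw [← ht, ← len_pow, ← map_pow]
      exact hle t (P ^ q)
  · intro t P
    refine ciSup_le fun s => ?_
    rw [← AlgEquiv.mul_apply, ← map_mul]
    exact hle _ P
  · intro P hP
    have h1 := hle 1 P
    rw [hP, map_one, AlgEquiv.one_apply, len_le_iff] at h1
    refine ⟨P.coeff 1, ?_⟩
    rw [← mon_one]
    refine eq_smul_mon_of_supp (supp_mono (fun w hw => ?_) h1)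
    rw [Set.mem_ofPred_eq, wt_one_one] at hw
    have : w.length = 0 := by
      have : w.length ≤ 0 := by exact_mod_cast hw
      omega
    simpa using FreeMonoid.length_eq_zero.1 this

variable {σ : Kˣ →* (NC K ≃ₐ[K] NC K)} {W : NC K → ℕ}

lemma IsWeight.conj (hW : IsWeight σ W) (β : NC K ≃ₐ[K] NC K) :
    IsWeight ((MulAut.conj β⁻¹).toMonoidHom.comp σ) fun P => W (β P) where
  zero := by simp [hW.zero]
  one := by simp [hW.one]
  add P Q := by simp [hW.add]
  smul c P := by simp [hW.smul]
  mul P Q := by simp [hW.mul]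
  pow P q := by simp [hW.pow]
  inv t P := by
    simp only [MonoidHom.comp_apply, MulEquiv.toMonoidHom_eq_coe, MonoidHom.coe_coe,
      MulAut.conj_apply, AlgEquiv.mul_apply, AlgEquiv.aut_inv, AlgEquiv.apply_symm_apply]
    exact hW.inv _ _
  const P hP := by
    obtain ⟨c, hc⟩ := hW.const _ hP
    exact ⟨c, β.injective (by rw [hc, map_smul, map_one])⟩

/-- The elements whose weight lies in an initial segment. -/
def IsWeight.sub (hW : IsWeight σ W) (S : Set ℕ) (h0 : 0 ∈ S) (hS : ∀ m n, m ≤ n → n ∈ S → m ∈ S) :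
    Submodule K (NC K) where
  carrier := {P | W P ∈ S}
  zero_mem' := by simpa [hW.zero] using h0
  add_mem' {P Q} hP hQ := hS _ _ (hW.add P Q) (by
    rcases max_choice (W P) (W Q) with h | h <;> rw [h] <;> assumption)
  smul_mem' c P hP := hS _ _ (hW.smul c P) hP

lemma IsWeight.smul_eq (hW : IsWeight σ W) {c : K} (hc : c ≠ 0) (P : NC K) : W (c • P) = W P := by
  refine le_antisymm (hW.smul c P) ?_
  simpa [smul_smul, hc] using hW.smul c⁻¹ (c • P)

lemma IsWeight.gen_pos (hW : IsWeight σ W) (i : Fin 2) : 0 < W (gen K i) := by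
  rw [Nat.pos_iff_ne_zero]
  intro h
  obtain ⟨c, hc⟩ := hW.const _ h
  have h1 : gen K i ∈ homog K (fun _ => 1) 0 := by
    rw [hc]; exact Submodule.smul_mem _ _ one_mem_homog
  have h2 := eq_of_mem_homog (by simp [gen]) h1 (gen_mem_homog i)
  exact zero_ne_one h2

lemma IsWeight.mon_le (hW : IsWeight σ W) (w : Word) :
    (W (mon K w) : ℚ) ≤ wt (fun i => W (gen K i)) w := by
  induction w using FreeMonoid.inductionOn' with
  | one => simp [hW.one]
  | of_mul i w ih =>
    rw [mon_of_mul, wt_mul, wt_of]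
    have : (W (gen K i * mon K w) : ℚ) ≤ W (gen K i) + W (mon K w) := by
      exact_mod_cast hW.mul _ _
    linarith

lemma IsWeight.lt_of_degLT (hW : IsWeight σ W) {d : ℚ} (hd : 0 < d) {P : NC K}
    (hP : P ∈ degLT K (fun i => (W (gen K i) : ℚ)) d) : (W P : ℚ) < d := by
  have : degLT K (fun i => (W (gen K i) : ℚ)) d ≤ hW.sub {n : ℕ | (n : ℚ) < d} (by simpa using hd)
      (fun m n hmn hn => lt_of_le_of_lt (b := (n : ℚ)) (by exact_mod_cast hmn) hn) :=
    supp_le fun w hw => lt_of_le_of_lt (hW.mon_le w) hw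
  exact this hP

lemma IsWeight.le_of_degLE (hW : IsWeight σ W) {d : ℕ} {P : NC K}
    (hP : P ∈ degLE K (fun i => (W (gen K i) : ℚ)) d) : W P ≤ d := by
  have := hW.lt_of_degLT (d := d + 1) (by positivity) (degLE_le_degLT (by linarith) hP)
  have : W P < d + 1 := by exact_mod_cast this
  omega

lemma IsWeight.torusHD_le [Infinite K] (hW : IsWeight σ W) {D : NC K →ₗ[K] (ℤ →₀ NC K)}
    (hD : IsDecomp σ D) (P : NC K) (k : ℕ) : W (torusHD D k P) ≤ W P :=
  hD.torusHD_mem (V := hW.sub {n | n ≤ W P} (Nat.zero_le _) fun _ _ => le_trans)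
    (fun t => hW.inv t P) k

theorem IsDecomp.exists_limit [Infinite K] {D : NC K →ₗ[K] (ℤ →₀ NC K)} (hD : IsDecomp σ D)
    {ω : Fin 2 → ℚ} (hω : ∀ i, 0 < ω i)
    (hnot : ∃ k i, torusHD D k (gen K i) ∉ degLE K ω (ω i)) :
    ∃ δ : ℚ, 0 < δ ∧ ∃ Φ : NC K →ₐ[K] (NC K)[X], IsLFIHD Φ ∧
      (∀ d, ∀ P ∈ homog K ω d, ∀ k : ℕ, (Φ P).coeff k = comp K ω (d + k * δ) (torusHD D k P)) ∧
      (∀ d, ∀ P ∈ degLE K ω d, ∀ k : ℕ, torusHD D k P ∈ degLE K ω (d + k * δ)) ∧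
      ∃ k i, k ≠ 0 ∧ (Φ (gen K i)).coeff k ≠ 0 := by
  obtain ⟨k1, i1, h1⟩ := hnot
  have hk1 : k1 ≠ 0 := by
    rintro rfl
    rw [hD.isHD.zero] at h1
    exact h1 (homog_le_degLE (gen_mem_homog i1))
  obtain ⟨w1, hw1, hwt1⟩ : ∃ w, (torusHD D k1 (gen K i1)).coeff w ≠ 0 ∧ ω i1 < wt ω w := by
    by_contra! h
    exact h1 h
  obtain ⟨B, hB⟩ : ∃ B : ℚ, ∀ k i, torusHD D k (gen K i) ∈ degLE K ω B := by
    let b : Fin 2 → ℚ := fun i => ∑ n ∈ (D (gen K i)).support,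
      ∑ w ∈ (D (gen K i) n).coeff.support, wt ω w
    have hb0 : ∀ i, 0 ≤ b i := fun i => Finset.sum_nonneg fun n _ => Finset.sum_nonneg fun w _ =>
      wt_nonneg (fun i => (hω i).le) w
    refine ⟨b 0 + b 1, fun k i => ?_⟩
    rw [torusHD_apply]
    refine sum_mem fun n hn => zsmul_mem (fun w hw => ?_) _
    have h2 : wt ω w ≤ ∑ w ∈ (D (gen K i) n).coeff.support, wt ω w :=
      Finset.single_le_sum (f := wt ω) (fun w _ => wt_nonneg (fun i => (hω i).le) w)
        (Finsupp.mem_support_iff.2 hw)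
    have h3 : ∑ w ∈ (D (gen K i) n).coeff.support, wt ω w ≤ b i :=
      Finset.single_le_sum (f := fun n => ∑ w ∈ (D (gen K i) n).coeff.support, wt ω w)
        (fun n _ => Finset.sum_nonneg fun w _ => wt_nonneg (fun i => (hω i).le) w) hn
    have h4 : b i ≤ b 0 + b 1 := by
      have e0 := hb0 0
      have e1 := hb0 1
      fin_cases i <;> simp <;> assumption
    exact (h2.trans h3).trans h4
  have hk1' : (0 : ℚ) < k1 := by positivity
  set r : ℚ := (wt ω w1 - ω i1) / k1 with hr
  have hr0 : 0 < r := div_pos (by linarith) hk1'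
  obtain ⟨N0, hN0⟩ := exists_nat_gt (B / r)
  rw [div_lt_iff₀ hr0] at hN0
  set N := max N0 k1 with hN
  obtain ⟨δ, hle0, k0, hk0, z0, hnz⟩ := exists_slope
    (E := fun k z => torusHD D k (gen K z)) (s := Finset.Icc 1 N) (by simp)
    ⟨k1, by simp [hN]; omega, i1, fun h => hw1 (by simp [h])⟩ ω
  have hrδ : r ≤ δ := by
    have : wt ω w1 ≤ _ := hle0 k1 (by simp [hN]; omega) i1 w1 hw1
    rw [hr, div_le_iff₀ hk1']
    linarith
  have hbig : ∀ k : ℕ, N ≤ k → ∀ i, torusHD D k (gen K i) ∈ degLT K ω (ω i + k * δ) := by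
    intro k hk i
    refine degLE_le_degLT ?_ (hB k i)
    have h2 : (N0 : ℚ) ≤ k := by exact_mod_cast (le_max_left _ _).trans hk
    have h3 : (N0 : ℚ) * r ≤ k * δ := mul_le_mul h2 hrδ hr0.le (by positivity)
    linarith [hω i]
  have hle : ∀ (k : ℕ) i, torusHD D k (gen K i) ∈ degLE K ω (ω i + k * δ) := by
    intro k i
    rcases Nat.eq_zero_or_pos k with rfl | hk
    · rw [hD.isHD.zero]; simpa using homog_le_degLE (gen_mem_homog i)
    · rcases le_total k N with h | h
      · exact hle0 k (by simp; omega) i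
      · exact degLT_le_degLE (hbig k h i)
  have hδ : 0 < δ := hr0.trans_le hrδ
  obtain ⟨Φ, hΦ, hc⟩ := hD.isHD.exists_limit hle
    ⟨N, fun k hk i => comp_of_degLT (hbig k hk i)⟩ (fun w j k => by
      rw [hD.torusHD_torusHD, map_sum, Finset.sum_eq_single (j, 0)]
      · rw [map_nsmul, Nat.choose_zero_right, one_mul, add_comm k j, Nat.choose_symm_add]
      · intro x hx hne
        rw [Finset.HasAntidiagonal.mem_antidiagonal] at hx
        have hlt : x.1 < j := by
          rcases x with ⟨x, y⟩
          simp only [ne_eq, Prod.mk.injEq, not_and] at *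
          omega
        rw [map_nsmul, comp_of_degLT, smul_zero]
        refine degLE_le_degLT ?_ (hD.isHD.mon_mem hle w (k + x.1))
        have : ((k + x.1 : ℕ) : ℚ) < (j + k : ℕ) := by exact_mod_cast (by omega)
        have := mul_lt_mul_of_pos_right this hδ
        linarith
      · intro h; simp at h)
  refine ⟨δ, hδ, Φ, hΦ, fun d P hP k => ?_, fun d P hP k => hD.isHD.degLE_mem hle hP k,
    k0, z0, ?_, ?_⟩
  · exact eqOn_supp (f := ((lcoeff (NC K) k).restrictScalars K).comp Φ.toLinearMap)
      (g := (comp K ω (d + k * δ)).comp (torusHD D k))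
      (fun w hw' => by
        have : wt ω w = d := hw'
        simpa [this] using hc w k) hP
  · simp only [Finset.mem_Icc] at hk0; omega
  · have := hc (FreeMonoid.of z0) k0
    rw [wt_of] at this
    exact fun h => hnz (this.symm.trans h)

/-- The limit of a torus action maps weight-sharp elements away from powers of
weight-sharp elements. -/
lemma IsWeight.coeff_ne [Infinite K] (hW : IsWeight σ W) {D : NC K →ₗ[K] (ℤ →₀ NC K)}
    (hD : IsDecomp σ D) {d d' : ℕ} {δ : ℚ} (hδ : 0 < δ) {z z' : NC K} {k : ℕ} (hk : k ≠ 0)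
    (hz : torusHD D k z ∈ degLE K (fun i => (W (gen K i) : ℚ)) (d + k * δ))
    (hWz : W z = d)
    (hz' : z' ∈ homog K (fun i => (W (gen K i) : ℚ)) d') (hz0 : z' ≠ 0) (hWz' : W z' = d')
    {c : K} (hc : c ≠ 0) (q : ℕ) :
    comp K (fun i => (W (gen K i) : ℚ)) (d + k * δ) (torusHD D k z) ≠ c • z' ^ q := by
  intro h
  set ω : Fin 2 → ℚ := fun i => (W (gen K i) : ℚ)
  have hkδ : 0 < k * δ := by positivity
  have h1 : (q : ℚ) * d' = d + k * δ := by
    refine eq_of_mem_homog (ω := ω) (P := c • z' ^ q) ?_ ?_ ?_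
    · exact smul_ne_zero hc (pow_ne_zero _ hz0)
    · exact Submodule.smul_mem _ _ (pow_mem_homog hz' q)
    · rw [← h]; exact comp_mem _ _ _
  have h2 := hW.lt_of_degLT (by positivity) (sub_comp_mem hz)
  have h3 := hW.torusHD_le hD z k
  have h4 : W (c • z' ^ q) = q * d' := by rw [hW.smul_eq hc, hW.pow, hWz']
  have h5 : c • z' ^ q = torusHD D k z +
      (-1 : K) • (torusHD D k z - comp K ω (d + k * δ) (torusHD D k z)) := by
    rw [← h]; simp
  have h6 := hW.add (torusHD D k z)
    ((-1 : K) • (torusHD D k z - comp K ω (d + k * δ) (torusHD D k z)))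
  rw [← h5, h4, hW.smul_eq (by simp), le_max_iff] at h6
  rcases h6 with h6 | h6
  · have : ((q * d' : ℕ) : ℚ) ≤ d := by exact_mod_cast (h6.trans h3).trans hWz.le
    push_cast at this
    linarith
  · have : ((q * d' : ℕ) : ℚ) ≤ W (torusHD D k z - comp K ω (d + k * δ) (torusHD D k z)) := by
      exact_mod_cast h6
    push_cast at this
    linarith

end

section
open Polynomial

variable {K : Type*} [Field K]

lemma exists_pow_not_dvd_choose {p : ℕ} (hp : p.Prime) (m : ℕ) : 0 < m → ∀ n, 0 < n →
    ∃ q, q ≠ 0 ∧ q ∣ m ∧ q ∣ n ∧ (¬ p ∣ m.choose q ∨ ¬ p ∣ n.choose q) := by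
  induction m using Nat.strong_induction_on with
  | _ m ih =>
  intro hm n hn
  by_cases hmp : p ∣ m
  · by_cases hnp : p ∣ n
    · obtain ⟨m', rfl⟩ := hmp
      obtain ⟨n', rfl⟩ := hnp
      have hm' : 0 < m' := Nat.pos_of_mul_pos_left hm
      have hn' : 0 < n' := Nat.pos_of_mul_pos_left hn
      obtain ⟨q, hq0, hqm, hqn, hq⟩ := ih m' (by nlinarith [hp.two_le]) hm' n' hn'
      have := Fact.mk hp
      have hl : ∀ r, p ∣ (p * r).choose (p * q) ↔ p ∣ r.choose q := fun r => by
        have := Choose.choose_modEq_choose_mod_mul_choose_div_nat (p := p) (n := p * r) (k := p * q)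
        rw [Nat.mul_mod_right, Nat.mul_mod_right, Nat.mul_div_cancel_left _ hp.pos,
          Nat.mul_div_cancel_left _ hp.pos, Nat.choose_self, one_mul] at this
        exact this.dvd_iff dvd_rfl
      refine ⟨p * q, mul_ne_zero hp.ne_zero hq0, Nat.mul_dvd_mul_left _ hqm,
        Nat.mul_dvd_mul_left _ hqn, ?_⟩
      rwa [hl, hl]
    · exact ⟨1, one_ne_zero, one_dvd _, one_dvd _, Or.inr (by simpa using hnp)⟩
  · exact ⟨1, one_ne_zero, one_dvd _, one_dvd _, Or.inl (by simpa using hmp)⟩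

lemma exists_choose_ne_zero (K : Type*) [Field K] {m : Fin 2 → ℕ} (hm : ∀ i, 0 < m i) :
    ∃ q, q ≠ 0 ∧ (∀ i, q ∣ m i) ∧ ∃ i, ((m i).choose q : K) ≠ 0 := by
  obtain ⟨p, hp⟩ := CharP.exists K
  rcases CharP.char_is_prime_or_zero K p with hpp | rfl
  · obtain ⟨q, hq0, h0, h1, h⟩ := exists_pow_not_dvd_choose hpp _ (hm 0) _ (hm 1)
    refine ⟨q, hq0, fun i => by fin_cases i <;> assumption, ?_⟩
    rcases h with h | h
    · exact ⟨0, by rwa [ne_eq, CharP.cast_eq_zero_iff K p]⟩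
    · exact ⟨1, by rwa [ne_eq, CharP.cast_eq_zero_iff K p]⟩
  · have := CharP.charP_to_charZero K
    exact ⟨1, one_ne_zero, fun _ => one_dvd _, 0, by simpa using ne_of_gt (hm 0)⟩

/-- The weighted-homogeneous binomial. -/
noncomputable abbrev binom (K : Type*) [Field K] (α β : ℕ) (r : K) : MvPolynomial (Fin 2) K :=
  MvPolynomial.X 0 ^ α - MvPolynomial.C r * MvPolynomial.X 1 ^ β

section
open MvPolynomial

/-- Over an algebraically closed field, weighted homogeneous polynomials in two variables
factor into variables and binomials. -/
theorem homog_induction [IsAlgClosed K] {ω : Fin 2 → ℕ} {α β : ℕ}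
    (hω : ∀ i, 0 < ω i) (hα : 0 < α) (hβ : 0 < β)
    (hco : α.Coprime β) (hαβ : ω 0 * α = ω 1 * β) {p : MvPolynomial (Fin 2) K → Prop}
    (hC : ∀ c ≠ 0, p (C c)) (hmul : ∀ P Q, p P → p Q → p (P * Q)) (hX : ∀ i, p (X i))
    (hbin : ∀ r, p (binom K α β r)) {P : MvPolynomial (Fin 2) K} (hP0 : P ≠ 0) {d : ℚ}
    (hP : IsWeightedHomogeneous (fun i => (ω i : ℚ)) P d) : p P := by
  have hpow : ∀ Q n, p Q → p (Q ^ n) := fun Q n hQ => by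
    induction n with
    | zero => simpa using hC 1 one_ne_zero
    | succ n ih => rw [pow_succ]; exact hmul _ _ ih hQ
  let H : ℕ → K[X] → MvPolynomial (Fin 2) K := fun N f =>
    aeval (![X 0 ^ α, X 1 ^ β] : Fin 2 → MvPolynomial (Fin 2) K) (f.homogenize N)
  have hH : ∀ N, ∀ f : K[X], f ≠ 0 → f.natDegree ≤ N → p (H N f) := by
    intro N
    induction N with
    | zero =>
      intro f hf hN
      rw [Polynomial.eq_C_of_natDegree_le_zero hN] at hf ⊢
      simp only [H, Polynomial.homogenize_C, pow_zero, mul_one, MvPolynomial.aeval_C,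
        MvPolynomial.algebraMap_eq]
      exact hC _ (by simpa using hf)
    | succ N ih =>
      intro f hf hN
      rcases hN.lt_or_eq with h | h
      · have h1 : H (N + 1) f = H N f * X 1 ^ β := by
          have := Polynomial.homogenize_mul f 1 (Nat.le_of_lt_succ h)
            (n := 1) (by simp)
          simp only [H]
          rw [mul_one] at this
          rw [this, map_mul, Polynomial.homogenize_one]
          simp
        rw [h1]
        exact hmul _ _ (ih f hf (Nat.le_of_lt_succ h)) (hpow _ _ (hX 1))
      · obtain ⟨r, hr⟩ := IsAlgClosed.exists_root f (by
          rw [Polynomial.degree_eq_natDegree hf, h]; exact_mod_cast N.succ_ne_zero)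
        obtain ⟨g, rfl⟩ := Polynomial.dvd_iff_isRoot.2 hr
        have hg : g ≠ 0 := right_ne_zero_of_mul hf
        have hgN : g.natDegree ≤ N := by
          rw [Polynomial.natDegree_mul (Polynomial.X_sub_C_ne_zero r) hg,
            Polynomial.natDegree_X_sub_C] at h
          omega
        have h1 : H (N + 1) ((Polynomial.X - Polynomial.C r) * g) = binom K α β r * H N g := by
          simp only [H]
          rw [add_comm N, Polynomial.homogenize_mul _ _ (by simp) hgN, map_mul,
            Polynomial.homogenize_sub, Polynomial.homogenize_X one_ne_zero,
            Polynomial.homogenize_C]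
          simp [MvPolynomial.algebraMap_eq]
        rw [h1]
        exact hmul _ _ (hbin r) (ih g hg hgN)
  obtain ⟨e0, he0, hmin0⟩ := P.support.exists_min_image (fun e => e 0) (by simpa using hP0)
  obtain ⟨e1, he1, hmin1⟩ := P.support.exists_min_image (fun e => e 1) (by simpa using hP0)
  have hk : ∀ e ∈ P.support, ∃ k, e 0 = e0 0 + α * k ∧ e0 1 = e 1 + β * k := by
    intro e he
    have h1 := hP (mem_support_iff.1 he)
    have h2 := hP (mem_support_iff.1 he0)
    rw [← h2] at h1
    rw [Finsupp.weight_apply, Finsupp.weight_apply, Finsupp.sum_fintype _ _ (by simp),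
      Finsupp.sum_fintype _ _ (by simp)] at h1
    simp only [Fin.sum_univ_two, nsmul_eq_mul] at h1
    norm_cast at h1
    obtain ⟨x, hx⟩ := Nat.exists_eq_add_of_le (hmin0 e he)
    have h3 : (e 1 : ℤ) * ω 1 + x * ω 0 = e0 1 * ω 1 := by
      rw [hx] at h1; push_cast [← Nat.cast_inj (R := ℤ)] at h1; linarith
    have h4 : β * x = α * ((e0 1 : ℤ) - e 1) := by
      have hz : (ω 0 : ℤ) * α = ω 1 * β := by exact_mod_cast hαβ
      have h0 : (ω 1 : ℤ) ≠ 0 := by exact_mod_cast (hω 1).ne'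
      apply mul_left_cancel₀ h0
      linear_combination α * h3 - x * hz
    obtain ⟨k, rfl⟩ : α ∣ x := by
      have : (α : ℤ) ∣ β * x := ⟨_, h4⟩
      exact hco.dvd_of_dvd_mul_left (by exact_mod_cast this)
    refine ⟨k, hx, ?_⟩
    have h0 : (α : ℤ) ≠ 0 := by exact_mod_cast hα.ne'
    have : (e0 1 : ℤ) - e 1 = β * k := by
      apply mul_left_cancel₀ h0; rw [← h4]; push_cast; ring
    zify; linarith
  choose! k hk0 hk1 using hk
  let f : K[X] := ∑ e ∈ P.support, Polynomial.monomial (k e) (coeff e P)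
  have hkN : ∀ e ∈ P.support, k e ≤ k e1 := fun e he => by
    have h1 := hk1 e he
    have h2 := hk1 e1 he1
    have h3 := hmin1 e he
    exact Nat.le_of_mul_le_mul_left (by omega) hβ
  have hPf : P = X 0 ^ e0 0 * X 1 ^ e1 1 * H (k e1) f := by
    simp only [H, f]
    rw [Polynomial.homogenize_finsetSum, map_sum, Finset.mul_sum]
    conv_lhs => rw [P.as_sum]
    refine Finset.sum_congr rfl fun e he => ?_
    obtain ⟨y, hy⟩ := Nat.exists_eq_add_of_le (hkN e he)
    have h1 := hk1 e he
    have h2 := hk1 e1 he1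
    have h3 : e 1 = e1 1 + β * y := by rw [hy] at h2; rw [mul_add] at h2; omega
    rw [Polynomial.homogenize_monomial (hkN e he), hy, Nat.add_sub_cancel_left,
      monomial_eq, Finsupp.prod_fintype _ _ (by simp), MvPolynomial.aeval_monomial,
      Finsupp.prod_fintype _ _ (by simp)]
    simp [hk0 e he, h3, MvPolynomial.algebraMap_eq]
    ring
  have hf0 : f ≠ 0 := by
    intro h0
    apply hP0
    rw [hPf, h0]
    simp [H]
  have hfN : f.natDegree ≤ k e1 := Polynomial.natDegree_sum_le_of_forall_le _ _ fun e he =>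
    (Polynomial.natDegree_monomial_le _).trans (hkN e he)
  rw [hPf]
  exact hmul _ _ (hmul _ _ (hpow _ _ (hX 0)) (hpow _ _ (hX 1))) (hH _ _ hf0 hfN)

end

end

section
open Polynomial

variable {K : Type*} [Field K]

section
variable {B : Type*} [CommRing B] [Algebra K B] {Ψ : B →ₐ[K] B[X]}

lemma IsLFIHD.ne_zero (hΨ : IsLFIHD Ψ) {P : B} (hP : P ≠ 0) : Ψ P ≠ 0 := fun h =>
  hP (by rw [← hΨ.zero P, h, coeff_zero])

lemma IsLFIHD.natDegree_mul [IsDomain B] (hΨ : IsLFIHD Ψ) {P Q : B} (hP : P ≠ 0) (hQ : Q ≠ 0) :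
    (Ψ (P * Q)).natDegree = (Ψ P).natDegree + (Ψ Q).natDegree := by
  rw [map_mul, Polynomial.natDegree_mul (hΨ.ne_zero hP) (hΨ.ne_zero hQ)]

lemma IsLFIHD.natDegree_coeff (hΨ : IsLFIHD Ψ) {P : B} {q : ℕ} (hq : q ≤ (Ψ P).natDegree)
    (hc : (((Ψ P).natDegree.choose q : ℕ) : K) ≠ 0) (hP : P ≠ 0) :
    (Ψ P).coeff ((Ψ P).natDegree - q) ≠ 0 ∧
      (Ψ ((Ψ P).coeff ((Ψ P).natDegree - q))).natDegree = q := by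
  have h1 : (Ψ ((Ψ P).coeff ((Ψ P).natDegree - q))).coeff q ≠ 0 := by
    rw [hΨ.iter, Nat.add_sub_cancel' hq, ← Nat.cast_smul_eq_nsmul K]
    exact smul_ne_zero hc (leadingCoeff_ne_zero.2 (hΨ.ne_zero hP))
  refine ⟨fun h => h1 (by simp [h]), le_antisymm ?_ (le_natDegree_of_ne_zero h1)⟩
  rw [natDegree_le_iff_coeff_eq_zero]
  intro j hj
  rw [hΨ.iter, coeff_eq_zero_of_natDegree_lt (by omega), smul_zero]

end

open MvPolynomial in
lemma binom_ne_zero {α β : ℕ} (hβ : 0 < β) (r : K) : binom K α β r ≠ 0 := by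
  intro h
  have := congrArg (MvPolynomial.eval ![1, 0]) h
  simp [hβ.ne'] at this

/-- A positively graded locally finite iterative higher derivation of the polynomial ring in two
variables that moves both variables annihilates an elementary coordinate. -/
theorem exists_invariant_coordinate [IsAlgClosed K]
    {Ψ : MvPolynomial (Fin 2) K →ₐ[K] (MvPolynomial (Fin 2) K)[X]} (hΨ : IsLFIHD Ψ)
    {ω : Fin 2 → ℕ} (hω : ∀ i, 0 < ω i) {δ : ℚ} (hδ : 0 < δ)
    (hhom : ∀ i (k : ℕ), MvPolynomial.IsWeightedHomogeneous (fun i => (ω i : ℚ))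
      ((Ψ (MvPolynomial.X i)).coeff k) (ω i + k * δ))
    (hpos : ∀ i, 0 < (Ψ (MvPolynomial.X i)).natDegree) :
    ∃ (i j : Fin 2) (l : ℕ) (c : K), i ≠ j ∧ ω i = l * ω j ∧
      (Ψ (MvPolynomial.X i - MvPolynomial.C c * MvPolynomial.X j ^ l)).natDegree = 0 := by
  have hX0 : ∀ i : Fin 2, (MvPolynomial.X i : MvPolynomial (Fin 2) K) ≠ 0 :=
    MvPolynomial.X_ne_zero
  have hCdeg : ∀ c : K, (Ψ (MvPolynomial.C c)).natDegree = 0 := fun c => by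
    rw [← MvPolynomial.algebraMap_eq, AlgHom.commutes, Polynomial.algebraMap_apply, natDegree_C]
  have hXpow : ∀ i n, (Ψ (MvPolynomial.X i ^ n)).natDegree = n * (Ψ (MvPolynomial.X i)).natDegree :=
    fun i n => by rw [map_pow, natDegree_pow]
  have hCmul : ∀ (c : K) P, c ≠ 0 → P ≠ 0 →
      (Ψ (MvPolynomial.C c * P)).natDegree = (Ψ P).natDegree := fun c P hc hP => by
    rw [hΨ.natDegree_mul (by simpa using hc) hP, hCdeg, zero_add]
  obtain ⟨g, β, α, hg, hco, h0, h1⟩ := Nat.exists_coprime' (Nat.gcd_pos_of_pos_left (ω 1) (hω 0))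
  have hα : 0 < α := Nat.pos_of_ne_zero fun h => (hω 1).ne' (by simp [h1, h])
  have hβ : 0 < β := Nat.pos_of_ne_zero fun h => (hω 0).ne' (by simp [h0, h])
  have hco' : α.Coprime β := hco.symm
  have hαβ : ω 0 * α = ω 1 * β := by rw [h0, h1]; ring
  obtain ⟨c, hc⟩ : ∃ c, (Ψ (binom K α β c)).natDegree = 0 := by
    by_contra! hcon
    have hall : ∀ P : MvPolynomial (Fin 2) K, P ≠ 0 → ∀ d : ℚ,
        MvPolynomial.IsWeightedHomogeneous (fun i => (ω i : ℚ)) P d →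
        P ≠ 0 ∧ ((∃ c, P = MvPolynomial.C c) ∨ 0 < (Ψ P).natDegree) := by
      intro P hP0 d hP
      refine homog_induction hω hα hβ hco' hαβ (p := fun P => P ≠ 0 ∧
        ((∃ c, P = MvPolynomial.C c) ∨ 0 < (Ψ P).natDegree)) ?_ ?_ ?_ ?_ hP0 hP
      · exact fun c hc => ⟨by simpa using hc, Or.inl ⟨c, rfl⟩⟩
      · rintro P Q ⟨hP, hP'⟩ ⟨hQ, hQ'⟩
        refine ⟨mul_ne_zero hP hQ, ?_⟩
        rw [hΨ.natDegree_mul hP hQ]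
        rcases hP' with ⟨a, rfl⟩ | hP'
        · rcases hQ' with ⟨b, rfl⟩ | hQ'
          · exact Or.inl ⟨a * b, by simp⟩
          · exact Or.inr (by omega)
        · exact Or.inr (by omega)
      · exact fun i => ⟨hX0 i, Or.inr (hpos i)⟩
      · exact fun r => ⟨binom_ne_zero hβ r, Or.inr (Nat.pos_of_ne_zero (hcon r))⟩
    obtain ⟨hne, hdeg⟩ := hΨ.natDegree_coeff (P := MvPolynomial.X 0) (Nat.zero_le _) (by simp)
      (hX0 0)
    have hw := hhom 0 ((Ψ (MvPolynomial.X 0)).natDegree - 0)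
    rcases (hall _ hne _ hw).2 with ⟨a, ha⟩ | h
    · rw [ha] at hw hne
      have := MvPolynomial.IsWeightedHomogeneous.inj_right hne hw
        (MvPolynomial.isWeightedHomogeneous_C _ a)
      have h3 : (0 : ℚ) < ω 0 := by exact_mod_cast hω 0
      have h4 : (0 : ℚ) ≤ (((Ψ (MvPolynomial.X 0)).natDegree - 0 : ℕ) : ℚ) * δ := by positivity
      linarith
    · omega
  set m := (Ψ (MvPolynomial.X 0)).natDegree with hm
  set n := (Ψ (MvPolynomial.X 1)).natDegree with hn
  have hX0' : MvPolynomial.X 0 ^ α =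
      binom K α β c + MvPolynomial.C c * MvPolynomial.X 1 ^ β := by simp [binom]
  have hadd : ∀ P Q, (Ψ P).natDegree = 0 → 0 < (Ψ Q).natDegree →
      (Ψ (P + Q)).natDegree = (Ψ Q).natDegree := fun P Q hP hQ => by
    rw [map_add, natDegree_add_eq_right_of_natDegree_lt (by omega)]
  have hc0 : c ≠ 0 := by
    rintro rfl
    have : (Ψ (MvPolynomial.X 0 ^ α)).natDegree = 0 := by rw [hX0']; simpa using hc
    rw [hXpow] at this
    exact (Nat.mul_pos hα (hpos 0)).ne' this
  have hX1β : ∀ r : K, r ≠ 0 → (Ψ (MvPolynomial.C r * MvPolynomial.X 1 ^ β)).natDegree = β * n :=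
    fun r hr => by rw [hCmul _ _ hr (pow_ne_zero _ (hX0 1)), hXpow]
  have hβn : 0 < β * n := Nat.mul_pos hβ (hpos 1)
  have hmn : α * m = β * n := by
    have := hadd _ (MvPolynomial.C c * MvPolynomial.X 1 ^ β) hc (by rwa [hX1β c hc0])
    rwa [← hX0', hX1β c hc0, hXpow] at this
  have hbin : ∀ r, r ≠ c → (Ψ (binom K α β r)).natDegree = β * n := fun r hr => by
    have h2 : c - r ≠ 0 := sub_ne_zero.2 hr.symm
    have := hadd _ (MvPolynomial.C (c - r) * MvPolynomial.X 1 ^ β) hc (by rwa [hX1β _ h2])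
    rw [hX1β _ h2] at this
    rw [← this, binom, binom, MvPolynomial.C_sub]
    congr 2; ring
  have hall : ∀ P : MvPolynomial (Fin 2) K, P ≠ 0 → ∀ d : ℚ,
      MvPolynomial.IsWeightedHomogeneous (fun i => (ω i : ℚ)) P d →
      P ≠ 0 ∧ ∃ u v, (Ψ P).natDegree = u * m + v * n := by
    intro P hP0 d hP
    refine homog_induction hω hα hβ hco' hαβ (p := fun P => P ≠ 0 ∧
      ∃ u v, (Ψ P).natDegree = u * m + v * n) ?_ ?_ ?_ ?_ hP0 hP
    · exact fun c hc => ⟨by simpa using hc, 0, 0, by simp⟩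
    · rintro P Q ⟨hP, u, v, h⟩ ⟨hQ, u', v', h'⟩
      exact ⟨mul_ne_zero hP hQ, u + u', v + v', by rw [hΨ.natDegree_mul hP hQ, h, h']; ring⟩
    · intro i
      refine ⟨hX0 i, ?_⟩
      fin_cases i
      · exact ⟨1, 0, by simp [hm]⟩
      · exact ⟨0, 1, by simp [hn]⟩
    · intro r
      refine ⟨binom_ne_zero hβ r, ?_⟩
      by_cases hr : r = c
      · exact ⟨0, 0, by rw [hr, hc]; simp⟩
      · exact ⟨0, β, by rw [hbin r hr]; simp⟩
  obtain ⟨q, hq0, hqd, i, hqi⟩ := exists_choose_ne_zero K hpos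
  obtain ⟨hne, hdeg⟩ := hΨ.natDegree_coeff (Nat.le_of_dvd (hpos i) (hqd i)) hqi (hX0 i)
  obtain ⟨-, u, v, huv⟩ := hall _ hne _ (hhom i _)
  rw [hdeg] at huv
  have hqm : q ∣ m := hqd 0
  have hqn : q ∣ n := hqd 1
  have hm0 : 0 < m := hpos 0
  have hn0 : 0 < n := hpos 1
  by_cases hu : u = 0
  · have hv : v ≠ 0 := by rintro rfl; simp [hu] at huv; exact hq0 huv
    have hqn' : n ∣ m := by
      have : n ≤ q := by rw [huv]; nlinarith [Nat.pos_of_ne_zero hv]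
      rwa [← Nat.le_antisymm (Nat.le_of_dvd hn0 hqn) this]
    obtain ⟨s, hs⟩ := hqn'
    have hαd : α = 1 := by
      refine Nat.Coprime.eq_one_of_dvd hco' ⟨s, ?_⟩
      refine Nat.eq_of_mul_eq_mul_right hn0 ?_
      rw [← hmn, hs]; ring
    refine ⟨0, 1, β, c, by decide, by rw [hαd] at hαβ; lia, ?_⟩
    rwa [binom, hαd, pow_one] at hc
  · have hqm' : m ∣ n := by
      have : m ≤ q := by rw [huv]; nlinarith [Nat.pos_of_ne_zero hu]
      rwa [← Nat.le_antisymm (Nat.le_of_dvd hm0 hqm) this]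
    obtain ⟨s, hs⟩ := hqm'
    have hβd : β = 1 := by
      refine Nat.Coprime.eq_one_of_dvd hco ⟨s, ?_⟩
      refine Nat.eq_of_mul_eq_mul_right hm0 ?_
      rw [hmn, hs]; ring
    refine ⟨1, 0, α, c⁻¹, by decide, by rw [hβd] at hαβ; lia, ?_⟩
    have h2 : (MvPolynomial.X 1 - MvPolynomial.C c⁻¹ * MvPolynomial.X 0 ^ α) =
        MvPolynomial.C (-c⁻¹) * binom K α β c := by
      have : (MvPolynomial.C c⁻¹ * MvPolynomial.C c : MvPolynomial (Fin 2) K) = 1 := by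
        rw [← MvPolynomial.C_mul, inv_mul_cancel₀ hc0, MvPolynomial.C_1]
      rw [binom, hβd, MvPolynomial.C_neg]
      linear_combination (-MvPolynomial.X 1) * this
    rw [h2, hCmul _ _ (by simpa using hc0) (binom_ne_zero hβ c), hc]

end

section
open Polynomial

variable {K : Type*} [Field K]

/-- The map induced on polynomial rings by a coefficient map from the free algebra. -/
noncomputable def abelianize (Φ : NC K →ₐ[K] (NC K)[X]) :
    MvPolynomial (Fin 2) K →ₐ[K] (MvPolynomial (Fin 2) K)[X] :=
  MvPolynomial.aeval fun i => Polynomial.mapAlgHom (ab K) (Φ (gen K i))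

lemma abelianize_ab (Φ : NC K →ₐ[K] (NC K)[X]) (P : NC K) (k : ℕ) :
    (abelianize Φ (ab K P)).coeff k = ab K ((Φ P).coeff k) := by
  have : (abelianize Φ).comp (ab K) = (Polynomial.mapAlgHom (ab K)).comp Φ :=
    algHom_ext_gen fun i => by simp [abelianize]
  have h := congrArg (fun f => (f P).coeff k) this
  simpa using h

lemma ab_surjective : Function.Surjective (ab K) := by
  rw [← AlgHom.range_eq_top, eq_top_iff, ← MvPolynomial.adjoin_range_X, Algebra.adjoin_le_iff]
  rintro _ ⟨i, rfl⟩
  exact ⟨gen K i, ab_gen i⟩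

lemma IsLFIHD.abelianize {Φ : NC K →ₐ[K] (NC K)[X]} (hΦ : IsLFIHD Φ) :
    IsLFIHD (abelianize Φ) where
  zero P := by
    obtain ⟨P, rfl⟩ := ab_surjective P
    rw [abelianize_ab, hΦ.zero]
  iter P j k := by
    obtain ⟨P, rfl⟩ := ab_surjective P
    rw [abelianize_ab, abelianize_ab, abelianize_ab, hΦ.iter, map_nsmul]

lemma isWeightedHomogeneous_ab {ω : Fin 2 → ℚ} {d : ℚ} {P : NC K} (hP : P ∈ homog K ω d) :
    MvPolynomial.IsWeightedHomogeneous ω (ab K P) d := by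
  have hmon : ∀ w, MvPolynomial.IsWeightedHomogeneous ω (ab K (mon K w)) (wt ω w) := by
    intro w
    induction w using FreeMonoid.inductionOn' with
    | one => simpa using MvPolynomial.isWeightedHomogeneous_one K ω
    | of_mul i w ih =>
      rw [mon_of_mul, map_mul, ab_gen, wt_mul, wt_of]
      exact (MvPolynomial.isWeightedHomogeneous_X K ω i).mul ih
  have : homog K ω d ≤
      (MvPolynomial.weightedHomogeneousSubmodule K ω d).comap (ab K).toLinearMap :=
    supp_le fun w hw => by
      have := hmon w
      rw [show wt ω w = d from hw] at this
      exact this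
  exact this hP

lemma subst_mem_homog {ω : Fin 2 → ℚ} {d : ℚ} {f : NC K →ₐ[K] NC K}
    (hf : ∀ i, f (gen K i) ∈ homog K ω (ω i)) {P : NC K} (hP : P ∈ homog K ω d) :
    f P ∈ homog K ω d := by
  have hmon : ∀ w, f (mon K w) ∈ homog K ω (wt ω w) := by
    intro w
    induction w using FreeMonoid.inductionOn' with
    | one => simpa using one_mem_homog
    | of_mul i w ih =>
      rw [mon_of_mul, map_mul, wt_mul, wt_of]
      exact mul_mem_homog (hf i) ih
  have : homog K ω d ≤ (homog K ω d).comap f.toLinearMap :=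
    supp_le fun w hw => by
      have := hmon w
      rw [show wt ω w = d from hw] at this
      exact this
  exact this hP

/-- The elementary automorphism `x_i ↦ e x_i + Q`, where `Q` only involves `x_j`. -/
noncomputable def elementary {i j : Fin 2} (hij : i ≠ j) {e : K} (he : e ≠ 0) {Q : NC K}
    (hQ : ∀ f : NC K →ₐ[K] NC K, f (gen K j) = gen K j → f Q = Q) : NC K ≃ₐ[K] NC K :=
  AlgEquiv.ofAlgHom (subst (Function.update (gen K) i (e • gen K i + Q)))
    (subst (Function.update (gen K) i (e⁻¹ • (gen K i - Q))))
    (algHom_ext_gen fun z => by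
      rcases eq_or_ne z i with rfl | h
      · simp [hQ (subst (Function.update (gen K) z (e • gen K z + Q))) (by simp [hij.symm]),
          smul_smul, he]
      · simp [h])
    (algHom_ext_gen fun z => by
      rcases eq_or_ne z i with rfl | h
      · simp [hQ (subst (Function.update (gen K) z (e⁻¹ • (gen K z - Q)))) (by simp [hij.symm]),
          smul_smul, he]
      · simp [h])

section
variable {i j : Fin 2} (hij : i ≠ j) {e : K} (he : e ≠ 0) {Q : NC K}
  (hQ : ∀ f : NC K →ₐ[K] NC K, f (gen K j) = gen K j → f Q = Q)

lemma elementary_gen_self : elementary hij he hQ (gen K i) = e • gen K i + Q := by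
  simp [elementary]

lemma elementary_gen_other : elementary hij he hQ (gen K j) = gen K j := by
  simp [elementary, hij.symm]

lemma elementary_symm_gen_self :
    (elementary hij he hQ).symm (gen K i) = e⁻¹ • (gen K i - Q) := by
  simp [elementary]

lemma elementary_symm_gen_other : (elementary hij he hQ).symm (gen K j) = gen K j := by
  simp [elementary, hij.symm]

end

lemma IsLFIHD.conj {Φ : NC K →ₐ[K] (NC K)[X]} (hΦ : IsLFIHD Φ) (ε : NC K ≃ₐ[K] NC K) :
    IsLFIHD ((Polynomial.mapAlgHom (ε.symm : NC K →ₐ[K] NC K)).comp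
      (Φ.comp (ε : NC K →ₐ[K] NC K))) where
  zero P := by simp [hΦ.zero]
  iter P j k := by simp [hΦ.iter]

variable {σ : Kˣ →* (NC K ≃ₐ[K] NC K)} {W : NC K → ℕ}

/-- In coordinates of minimal weight, a torus action does not increase the weighted degree. -/
theorem IsWeight.torusHD_gen_mem [IsAlgClosed K] (hW : IsWeight σ W)
    {D : NC K →ₗ[K] (ℤ →₀ NC K)} (hD : IsDecomp σ D)
    (hmin : ∀ ε : NC K ≃ₐ[K] NC K,
      W (gen K 0) + W (gen K 1) ≤ W (ε (gen K 0)) + W (ε (gen K 1))) (k : ℕ) (i : Fin 2) :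
    torusHD D k (gen K i) ∈ degLE K (fun i => (W (gen K i) : ℚ)) (W (gen K i)) := by
  have : Infinite K := IsAlgClosed.instInfinite
  by_contra hcon
  set ω : Fin 2 → ℚ := fun i => (W (gen K i) : ℚ) with hωdef
  have hω : ∀ i, 0 < ω i := fun i => by simpa [ω] using hW.gen_pos i
  obtain ⟨δ, hδ, Φ, hΦ, hcomp, hle, hnt⟩ := hD.exists_limit hω ⟨k, i, hcon⟩
  have hΦh : ∀ d, ∀ P ∈ homog K ω d, ∀ k : ℕ, (Φ P).coeff k ∈ homog K ω (d + k * δ) :=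
    fun d P hP k => by rw [hcomp d P hP]; exact comp_mem _ _ _
  have hgen0 : ∀ z, gen K z ≠ 0 := fun z => by simp [gen]
  have key : ∀ z z' : NC K, ∀ d d' : ℕ, z ∈ homog K ω d → z' ∈ homog K ω d' → z' ≠ 0 → W z = d →
      W z' = d' → ∀ k, k ≠ 0 → ∀ c : K, c ≠ 0 → ∀ q : ℕ, (Φ z).coeff k ≠ c • z' ^ q := by
    intro z z' d d' hz hz' hz0 hWz hWz' k hk c hc q
    rw [hcomp _ _ hz]
    exact hW.coeff_ne hD hδ hk (hle _ _ (homog_le_degLE hz) k) hWz hz' hz0 hWz' hc q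
  have hab := exists_ab_ne hω hΦ (fun k i => hΦh _ _ (gen_mem_homog i) k) hnt
    fun i j _ => key _ _ _ _ (gen_mem_homog i) (gen_mem_homog j) (hgen0 j) rfl rfl
  obtain ⟨i, j, l, c, hij, hl, h0⟩ := exists_invariant_coordinate hΦ.abelianize hW.gen_pos hδ
    (fun i k => by
      rw [← ab_gen, abelianize_ab]
      exact isWeightedHomogeneous_ab (hΦh _ _ (gen_mem_homog i) k))
    (fun i => by
      obtain ⟨k, hk, hne⟩ := hab i
      rw [← abelianize_ab, ab_gen] at hne
      exact (Nat.pos_of_ne_zero hk).trans_le (le_natDegree_of_ne_zero hne))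
  have hQh : -(c • gen K j ^ l) ∈ homog K ω (ω i) := by
    refine neg_mem (Submodule.smul_mem _ _ ?_)
    have := pow_mem_homog (gen_mem_homog (K := K) (ω := ω) j) l
    rwa [show (l : ℚ) * ω j = ω i by simp only [ω]; rw [hl]; push_cast; rfl] at this
  let ε := elementary hij (one_ne_zero (α := K)) (Q := -(c • gen K j ^ l))
    fun f hf => by simp [hf]
  have hεi : ε (gen K i) = gen K i + -(c • gen K j ^ l) := by
    rw [elementary_gen_self, one_smul]
  have hεj : ε (gen K j) = gen K j := elementary_gen_other _ _ _
  have hεih : ε (gen K i) ∈ homog K ω (ω i) := by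
    rw [hεi]; exact add_mem (gen_mem_homog i) hQh
  have hij' : ∀ z, z = i ∨ z = j := fun z => by lia
  have hWi : W (ε (gen K i)) = W (gen K i) := by
    refine le_antisymm (hW.le_of_degLE (homog_le_degLE hεih)) ?_
    have h1 := hmin ε
    have h2 : W (ε (gen K j)) = W (gen K j) := by rw [hεj]
    have : (i = 0 ∧ j = 1) ∨ (i = 1 ∧ j = 0) := by lia
    rcases this with ⟨rfl, rfl⟩ | ⟨rfl, rfl⟩ <;> omega
  have hWε : ∀ z, W (ε (gen K z)) = W (gen K z) := fun z => by
    rcases hij' z with rfl | rfl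
    · exact hWi
    · rw [hεj]
  have hεh : ∀ z, ε (gen K z) ∈ homog K ω (ω z) := fun z => by
    rcases hij' z with rfl | rfl
    · exact hεih
    · rw [hεj]; exact gen_mem_homog _
  have hεsh : ∀ z, ε.symm (gen K z) ∈ homog K ω (ω z) := fun z => by
    rcases hij' z with rfl | rfl
    · rw [elementary_symm_gen_self]
      exact Submodule.smul_mem _ _ (sub_mem (gen_mem_homog _) hQh)
    · rw [elementary_symm_gen_other]; exact gen_mem_homog _
  have hΦ' := hΦ.conj ε
  set Φ' := (Polynomial.mapAlgHom (ε.symm : NC K →ₐ[K] NC K)).comp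
    (Φ.comp (ε : NC K →ₐ[K] NC K)) with hΦ'def
  have hΦ'c : ∀ P k, (Φ' P).coeff k = ε.symm ((Φ (ε P)).coeff k) := fun P k => by simp [Φ']
  obtain ⟨k, hk, hne⟩ := exists_ab_ne (δ := δ) hω hΦ'
    (fun k z => by
      rw [hΦ'c]
      exact subst_mem_homog (f := (ε.symm : NC K →ₐ[K] NC K)) hεsh (hΦh _ _ (hεh z) k))
    (by
      obtain ⟨k, hk, hne⟩ := hab j
      refine ⟨k, j, hk, fun h => hne ?_⟩
      rw [hΦ'c, hεj, EmbeddingLike.map_eq_zero_iff] at h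
      rw [h, map_zero])
    (fun a b _ k hk c hc q h => by
      rw [hΦ'c, AlgEquiv.symm_apply_eq, map_smul, map_pow] at h
      exact key _ _ _ _ (hεh a) (hεh b) (by simpa using hgen0 b) (hWε a) (hWε b) k hk c hc q h) i
  have hf : (ab K).comp (ε.symm : NC K →ₐ[K] NC K) =
      (MvPolynomial.aeval fun z => ab K (ε.symm (gen K z))).comp (ab K) :=
    algHom_ext_gen fun z => by simp
  apply hne
  rw [hΦ'c]
  have h1 : ab K (ε.symm ((Φ (ε (gen K i))).coeff k)) =
      MvPolynomial.aeval (fun z => ab K (ε.symm (gen K z))) (ab K ((Φ (ε (gen K i))).coeff k)) :=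
    congrArg (fun f => f ((Φ (ε (gen K i))).coeff k)) hf
  rw [h1, ← abelianize_ab, hεi]
  have h2 : ab K (gen K i + -(c • gen K j ^ l)) =
      MvPolynomial.X i - MvPolynomial.C c * MvPolynomial.X j ^ l := by
    simp [MvPolynomial.smul_eq_C_mul, sub_eq_add_neg]
  rw [h2, coeff_eq_zero_of_natDegree_lt (by omega), map_zero]

end

section
open Polynomial

variable {K : Type*} [Field K]

section
variable {ω : Fin 2 → ℚ} {i j : Fin 2}

lemma eq_one_of_wt_nonpos (hω : ∀ i, 0 < ω i) {w : Word} (hw : wt ω w ≤ 0) : w = 1 := by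
  cases w using FreeMonoid.casesOn with
  | one => rfl
  | of_mul z w =>
    rw [wt_mul, wt_of] at hw
    linarith [hω z, wt_nonneg (fun i => (hω i).le) w]

lemma exists_eq_pow_of_wt_le (hω : ∀ i, 0 < ω i) (hij : i ≠ j) {w : Word}
    (hw : wt ω w ≤ ω i) (hne : w ≠ FreeMonoid.of i) : ∃ n, w = FreeMonoid.of j ^ n := by
  induction w using FreeMonoid.inductionOn' with
  | one => exact ⟨0, by simp⟩
  | of_mul z w ih =>
    rw [wt_mul, wt_of] at hw
    have : z = i ∨ z = j := by omega
    rcases this with rfl | rfl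
    · rw [eq_one_of_wt_nonpos hω (w := w) (by linarith), mul_one] at hne
      exact absurd rfl hne
    · obtain ⟨n, rfl⟩ := ih (by linarith [hω z]) (by
        rintro rfl
        rw [wt_of] at hw
        linarith [hω z])
      exact ⟨n + 1, by rw [pow_succ']⟩

lemma eq_one_or_of_wt_le (hω : ∀ i, 0 < ω i) (hij : i ≠ j) (hle : ω j ≤ ω i) {w : Word}
    (hw : wt ω w ≤ ω j) (hne : w ≠ FreeMonoid.of i) : w = 1 ∨ w = FreeMonoid.of j := by
  obtain ⟨n, rfl⟩ := exists_eq_pow_of_wt_le hω hij (hw.trans hle) hne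
  rcases n with _ | n
  · exact Or.inl (pow_zero _)
  · rw [pow_succ', wt_mul, wt_of] at hw
    rw [pow_succ', eq_one_of_wt_nonpos hω (w := FreeMonoid.of j ^ n) (by linarith), mul_one]
    exact Or.inr rfl

lemma map_eq_self_of_supp_pow {Q : NC K} (hQ : Q ∈ supp K {w | ∃ n, w = FreeMonoid.of j ^ n})
    {f : NC K →ₐ[K] NC K} (hf : f (gen K j) = gen K j) : f Q = Q := by
  refine eqOn_supp (f := f.toLinearMap) (g := LinearMap.id) ?_ hQ
  rintro _ ⟨n, rfl⟩
  have : mon K (FreeMonoid.of j ^ n) = gen K j ^ n := map_pow _ _ _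
  simp [this, hf]

lemma coeff_gen (z w : Fin 2) : (gen K z).coeff (FreeMonoid.of w) = if z = w then 1 else 0 := by
  rw [gen, MonoidAlgebra.of_apply]
  by_cases h : z = w
  · subst h
    simp
  · simp [h, FreeMonoid.of_injective.ne (Ne.symm h)]

end

variable {σ : Kˣ →* (NC K ≃ₐ[K] NC K)} {W : NC K → ℕ}

/-- A torus action whose weight components of the generators respect a weighted degree is
diagonalizable by an automorphism. -/
theorem IsDecomp.exists_diagonal [Infinite K] {D : NC K →ₗ[K] (ℤ →₀ NC K)} (hD : IsDecomp σ D)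
    {ω : Fin 2 → ℚ} (hω : ∀ i, 0 < ω i)
    (hle : ∀ k i, torusHD D k (gen K i) ∈ degLE K ω (ω i)) :
    ∃ (γ : NC K ≃ₐ[K] NC K) (n : Fin 2 → ℤ),
      ∀ t i, σ t (γ (gen K i)) = ((t ^ n i : Kˣ) : K) • γ (gen K i) := by
  have hmem : ∀ i n, D (gen K i) n ∈ degLE K ω (ω i) := fun i n =>
    mem_of_forall_sum_choose_mem (fun k => by rw [← torusHD_apply]; exact hle k i) n
  obtain ⟨i, j, hij, hji⟩ : ∃ i j, i ≠ j ∧ ω j ≤ ω i := by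
    rcases le_total (ω 0) (ω 1) with h | h
    · exact ⟨1, 0, by decide, h⟩
    · exact ⟨0, 1, by decide, h⟩
  have hexists : ∀ (ℓ : NC K →ₗ[K] K) z, ℓ (gen K z) ≠ 0 → ∃ n, ℓ (D (gen K z) n) ≠ 0 := by
    intro ℓ z hz
    by_contra! h
    apply hz
    rw [← hD.sum_eq (gen K z), map_sum, Finset.sum_eq_zero fun n _ => h n]
  let li := coeffL K (FreeMonoid.of i)
  let lj := coeffL K (FreeMonoid.of j)
  obtain ⟨n, hn⟩ := hexists li i (by simp [li, coeff_gen])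
  set x := D (gen K i) n with hx
  obtain ⟨m, hm⟩ := hexists (li x • lj - lj x • li) j (by
    simpa [li, lj, coeff_gen, hij.symm] using hn)
  set y := D (gen K j) m with hy
  set e := li x with he
  set c := li y / e with hc
  set R := y - c • x with hR
  have hRi : li R = 0 := by
    simp only [hR, map_sub, map_smul, hc, smul_eq_mul]
    field_simp
    simp [he]
  have hRj : lj R ≠ 0 := by
    intro h
    apply hm
    have : e * lj R = 0 := by rw [h, mul_zero]
    simp only [hR, map_sub, map_smul, hc, smul_eq_mul] at this
    simp only [LinearMap.sub_apply, LinearMap.smul_apply, smul_eq_mul]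
    rw [← this]
    field_simp
  have hRle : R ∈ degLE K ω (ω j) := by
    by_cases h : li y = 0
    · rw [hR, hc, h]; simpa using hmem j m
    · have h1 : ω i ≤ ω j := by simpa using hmem j m _ h
      exact sub_mem (hmem j m) (Submodule.smul_mem _ _ (degLE_mono h1 (hmem i n)))
  set d := R.coeff 1 with hd
  have hReq : R = lj R • gen K j + d • 1 := by
    ext w
    by_cases hw : w = FreeMonoid.of j
    · subst hw
      simp [lj, coeff_gen, MonoidAlgebra.one_def]
    by_cases hw1 : w = 1
    · subst hw1
      simp [hd, gen, MonoidAlgebra.one_def, MonoidAlgebra.of_apply]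
    have : R.coeff w = 0 := by
      by_contra h
      rcases eq_one_or_of_wt_le hω hij hji (hRle w h) (by rintro rfl; exact h hRi) with h | h
      · exact hw1 h
      · exact hw h
    rw [this]
    simp [gen, MonoidAlgebra.one_def, MonoidAlgebra.of_apply, Ne.symm hw,
      Ne.symm hw1]
  set Q := x - e • gen K i with hQ
  have hQs : Q ∈ supp K {w | ∃ n, w = FreeMonoid.of j ^ n} := by
    intro w hw
    refine exists_eq_pow_of_wt_le hω hij (?_ : wt ω w ≤ ω i) ?_
    · exact (sub_mem (hmem i n) (Submodule.smul_mem _ _ (homog_le_degLE (gen_mem_homog i))) :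
        Q ∈ degLE K ω (ω i)) w hw
    · rintro rfl
      apply hw
      simp [hQ, coeff_gen, he, li]
  let E1 := elementary hij hn fun f hf => map_eq_self_of_supp_pow hQs hf
  let E2 := elementary hij.symm hRj (Q := c • gen K i + d • 1) fun f hf => by simp [hf]
  refine ⟨E1 * E2, fun z => if z = i then n else m, fun t z => ?_⟩
  have hE1 : E1 (gen K i) = x := by
    simp only [E1]
    rw [elementary_gen_self, hQ, he]
    abel
  have hi : (E1 * E2) (gen K i) = x := by
    rw [AlgEquiv.mul_apply, elementary_gen_other, hE1]
  have hj : (E1 * E2) (gen K j) = y := by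
    rw [AlgEquiv.mul_apply, elementary_gen_self, map_add, map_add, map_smul, map_smul, map_smul,
      hE1, elementary_gen_other, map_one, add_left_comm, ← hReq, hR]
    abel
  have : z = i ∨ z = j := by omega
  rcases this with rfl | rfl
  · beta_reduce
    rw [hi, if_pos rfl, hx, hD.eigen]
  · beta_reduce
    rw [hj, if_neg hij.symm, hy, hD.eigen]

lemma IsDecomp.conj {D : NC K →ₗ[K] (ℤ →₀ NC K)} (hD : IsDecomp σ D) (β : NC K ≃ₐ[K] NC K) :
    IsDecomp ((MulAut.conj β⁻¹).toMonoidHom.comp σ)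
      (Finsupp.mapRange.linearMap β.symm.toLinearMap ∘ₗ D ∘ₗ β.toLinearMap) := by
  intro t P
  simp only [MonoidHom.comp_apply, MulEquiv.toMonoidHom_eq_coe, MonoidHom.coe_coe,
    MulAut.conj_apply, AlgEquiv.mul_apply, AlgEquiv.aut_inv, LinearMap.comp_apply,
    Finsupp.mapRange.linearMap_apply]
  rw [Finsupp.sum_mapRange_index (fun _ => smul_zero _)]
  have := hD t (β P)
  simp [this, Finsupp.sum, map_sum]

/-- Every regular torus action on the free algebra on two generators is diagonalizable. -/
theorem exists_diagonal [IsAlgClosed K]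
    (hreg : ∀ i, ∃ a : ℤ →₀ NC K, ∀ t, σ t (gen K i) = a.sum fun m c => ((t ^ m : Kˣ) : K) • c) :
    ∃ (γ : NC K ≃ₐ[K] NC K) (n : Fin 2 → ℤ),
      ∀ t i, σ t (γ (gen K i)) = ((t ^ n i : Kˣ) : K) • γ (gen K i) := by
  have : Infinite K := IsAlgClosed.instInfinite
  obtain ⟨D, hD⟩ := exists_isDecomp σ hreg
  obtain ⟨W, hW⟩ := exists_isWeight hD
  let μ : (NC K ≃ₐ[K] NC K) → ℕ := fun β => W (β (gen K 0)) + W (β (gen K 1))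
  let β := Function.argmin μ
  obtain ⟨γ, n, h⟩ := (hD.conj β).exists_diagonal
    (ω := fun i => (W (β (gen K i)) : ℚ))
    (fun i => by exact_mod_cast (hW.conj β).gen_pos i)
    ((hW.conj β).torusHD_gen_mem (hD.conj β) fun ε => Function.argmin_le μ (β * ε))
  refine ⟨β * γ, n, fun t i => ?_⟩
  have := h t i
  simp only [MonoidHom.comp_apply, MulEquiv.toMonoidHom_eq_coe, MonoidHom.coe_coe,
    MulAut.conj_apply, AlgEquiv.mul_apply, AlgEquiv.aut_inv, AlgEquiv.symm_apply_eq,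
    map_smul] at this
  simpa using this

end

end FreeTorus

/-- Every effective regular action of the one-dimensional torus `Kˣ` on the free associative
algebra on two generators over an algebraically closed field is linearizable. -/
theorem one_torus_action_on_F2_linearizable
    {K : Type} [Field K] [IsAlgClosed K]
    (σ : Kˣ →* (FreeAlgebra K (Fin 2) ≃ₐ[K] FreeAlgebra K (Fin 2)))
    (hreg : OneTorusActionIsRegular σ)
    (heff : Function.Injective σ) :
    ∃ β : FreeAlgebra K (Fin 2) ≃ₐ[K] FreeAlgebra K (Fin 2),
      ∀ (t : Kˣ) (i : Fin 2),
        β.symm (σ t (β (ι K i))) ∈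
          Submodule.span K (Set.range (ι K : Fin 2 → FreeAlgebra K (Fin 2))) := by
  let e : FreeAlgebra K (Fin 2) ≃ₐ[K] FreeTorus.NC K := equivMonoidAlgebraFreeMonoid
  have he : ∀ i, e (ι K i) = FreeTorus.gen K i := fun i => by
    simp [e, equivMonoidAlgebraFreeMonoid, FreeTorus.gen]
  have he' : ∀ i, e.symm (FreeTorus.gen K i) = ι K i := fun i => by
    rw [AlgEquiv.symm_apply_eq, he]
  obtain ⟨γ, n, h⟩ := FreeTorus.exists_diagonal (K := K)
    (σ := (AlgEquiv.autCongr e).toMonoidHom.comp σ) (fun i => by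
      obtain ⟨a, ha⟩ := hreg i
      refine ⟨Finsupp.mapRange.linearMap e.toLinearMap a, fun t => ?_⟩
      rw [Finsupp.mapRange.linearMap_apply, Finsupp.sum_mapRange_index (fun _ => smul_zero _)]
      simp [he', ha, Finsupp.sum, map_sum])
  refine ⟨(e.trans γ).trans e.symm, fun t i => ?_⟩
  have h1 := h t i
  simp only [MonoidHom.comp_apply, MulEquiv.toMonoidHom_eq_coe, MonoidHom.coe_coe,
    AlgEquiv.autCongr_apply, AlgEquiv.trans_apply] at h1
  have h2 : σ t (e.symm (γ (FreeTorus.gen K i))) =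
      e.symm (((t ^ n i : Kˣ) : K) • γ (FreeTorus.gen K i)) := by
    rw [← h1, AlgEquiv.symm_apply_apply]
  simp only [AlgEquiv.trans_apply, AlgEquiv.symm_trans_apply, he, h2, AlgEquiv.symm_symm,
    AlgEquiv.apply_symm_apply, map_smul, AlgEquiv.symm_apply_apply, he']
  exact Submodule.smul_mem _ _ (Submodule.subset_span ⟨i, rfl⟩)
end

section
/- Let K be a field and let φ be a K-algebra automorphism of F_2 = FreeAlgebra K (Fin 2) of the form φ(z_1) = z_1 + f and φ(z_2) = z_2 + g for some f, g ∈ F_2 with f ≠ 0 and g ≠ 0. Then f and g cannot both lie in the commutator ideal: ε(f) ≠ 0 or ε(g) ≠ 0. -/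
open FreeAlgebra

/-- The abelianization homomorphism from the free associative algebra to the commutative
polynomial algebra, sending each generator to the corresponding variable.  Its kernel is the
commutator ideal. -/
noncomputable def abelianization (K : Type) [Field K] (n : ℕ) :
    FreeAlgebra K (Fin n) →ₐ[K] MvPolynomial (Fin n) K :=
  FreeAlgebra.lift K fun i => (MvPolynomial.X i : MvPolynomial (Fin n) K)

namespace FreeMonoid

/-- Two words that do not commute freely generate a submonoid. -/
theorem lift_injective_of_not_commute {α : Type*} (m : Fin 2 → FreeMonoid α)
    (h : m 0 * m 1 ≠ m 1 * m 0) : Function.Injective (lift m) := by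
  induction hN : (m 0).length + (m 1).length using Nat.strong_induction_on generalizing m with
  | _ N ih =>
  have key : ∀ i j, i ≠ j → ∀ t, m j = m i * t → ∀ a b,
      lift m (of i * a) ≠ lift m (of j * b) := by
    intro i j hij t ht a b hab
    let m' : Fin 2 → FreeMonoid α := Function.update m j t
    let s : Fin 2 → FreeMonoid (Fin 2) := Function.update of j (of i * of j)
    have hm'i : m' i = m i := Function.update_of_ne hij _ _
    have hm'j : m' j = t := Function.update_self _ _ _
    have hs : ∀ w, lift m w = lift m' (lift s w) := by
      intro w
      rw [hom_map_lift]
      congr 2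
      funext k
      by_cases hk : k = j
      · subst hk
        simp [s, hm'i, hm'j, ht]
      · simp [s, m', hk]
    have hcomm : m i * t ≠ t * m i := by
      intro hc
      have : m i * m j = m j * m i := by rw [ht, mul_assoc, ← hc]
      fin_cases i <;> fin_cases j <;> simp_all
    have hlen : 0 < (m i).length := by
      rw [Nat.pos_iff_ne_zero, Ne, length_eq_zero]
      intro h1
      simp [h1] at hcomm
    have hlj : (m j).length = (m i).length + t.length := by rw [ht, length_mul]
    have hm'inj : Function.Injective (lift m') := by
      refine ih ((m' 0).length + (m' 1).length) ?_ m' ?_ rfl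
      · fin_cases i <;> fin_cases j <;> simp_all <;> omega
      · fin_cases i <;> fin_cases j <;> simp_all [eq_comm]
    have hst : lift s a = of j * lift s b := by
      apply hm'inj
      rw [map_mul, map_mul, lift_eval_of, lift_eval_of, ht, mul_assoc] at hab
      rw [map_mul, lift_eval_of, hm'j, ← hs, ← hs]
      exact mul_left_cancel hab
    cases a using FreeMonoid.casesOn with
    | one =>
      rw [map_one] at hst
      have := congrArg length hst
      simp only [length_one, length_mul, length_of] at this
      omega
    | of_mul k a =>
      have hk : ∃ c, s k = of i * c := by
        by_cases hk : k = j
        · exact ⟨of j, by simp [s, hk]⟩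
        · have hki : k = i := by lia
          exact ⟨1, by simp [s, hki, hij]⟩
      obtain ⟨c, hc⟩ := hk
      rw [map_mul, lift_eval_of, hc, mul_assoc] at hst
      exact hij (List.cons.inj (congrArg toList hst)).1
  have hne : ∀ k, 0 < (m k).length := by
    intro k
    rw [Nat.pos_iff_ne_zero, Ne, length_eq_zero]
    intro h1
    fin_cases k <;> simp_all
  intro w
  induction w using FreeMonoid.inductionOn' with
  | one =>
    intro w' hw
    cases w' using FreeMonoid.casesOn with
    | one => rfl
    | of_mul k b =>
      have := congrArg length hw
      simp only [map_one, length_one, map_mul, lift_eval_of, length_mul] at this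
      have := hne k
      omega
  | of_mul i a iha =>
    intro w' hw
    cases w' using FreeMonoid.casesOn with
    | one =>
      have := congrArg length hw
      simp only [map_one, length_one, map_mul, lift_eval_of, length_mul] at this
      have := hne i
      omega
    | of_mul j b =>
      by_cases hij : i = j
      · subst hij
        rw [map_mul, map_mul] at hw
        rw [iha (mul_left_cancel hw)]
      · exfalso
        have hw' : (m i).toList ++ (lift m a).toList = (m j).toList ++ (lift m b).toList := by
          simpa using congrArg toList hw
        obtain ⟨t, ht, -⟩ | ⟨t, ht, -⟩ := List.append_eq_append_iff.mp hw'
        · exact key i j hij (ofList t) (toList.injective ht) a b hw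
        · exact key j i (Ne.symm hij) (ofList t) (toList.injective ht) b a hw.symm

end FreeMonoid

namespace MonoidAlgebra

section LeadingMonomial

variable {K M Γ : Type*} [Field K] [Monoid M] [LinearOrder Γ] {k : M → Γ}

/-- `m` is the leading monomial of `a` with respect to the ordering of monomials by `k`. -/
def IsLeadingMonomial (k : M → Γ) (a : MonoidAlgebra K M) (m : M) : Prop :=
  a.coeff m ≠ 0 ∧ ∀ w, a.coeff w ≠ 0 → k w ≤ k m

theorem exists_isLeadingMonomial (k : M → Γ) {a : MonoidAlgebra K M} (ha : a ≠ 0) :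
    ∃ m, IsLeadingMonomial k a m := by
  have hne : a.coeff.support.Nonempty := by
    rwa [Finsupp.support_nonempty_iff, Ne, coeff_eq_zero]
  obtain ⟨m, hm, hmax⟩ := a.coeff.support.exists_max_image k hne
  exact ⟨m, Finsupp.mem_support_iff.mp hm, fun w hw => hmax w (Finsupp.mem_support_iff.mpr hw)⟩

theorem isLeadingMonomial_one : IsLeadingMonomial k (1 : MonoidAlgebra K M) 1 := by
  classical
  have h (w : M) : (1 : MonoidAlgebra K M).coeff w = if 1 = w then 1 else 0 := by
    rw [one_def, coeff_single, Finsupp.single_apply]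
  refine ⟨by simp [h], fun w hw => ?_⟩
  rw [h] at hw
  have : 1 = w := by by_contra h1; simp [h1] at hw
  rw [this]

theorem IsLeadingMonomial.mul (hk : Function.Injective k)
    (hl : ∀ c {a b}, k a < k b → k (c * a) < k (c * b))
    (hr : ∀ c {a b}, k a < k b → k (a * c) < k (b * c))
    {a b : MonoidAlgebra K M} {m n : M}
    (ha : IsLeadingMonomial k a m) (hb : IsLeadingMonomial k b n) :
    IsLeadingMonomial k (a * b) (m * n) := by
  classical
  have hl' : ∀ c {a b}, k a ≤ k b → k (c * a) ≤ k (c * b) := fun c a b h =>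
    h.eq_or_lt.elim (fun h => by rw [hk h]) fun h => (hl c h).le
  have hr' : ∀ c {a b}, k a ≤ k b → k (a * c) ≤ k (b * c) := fun c a b h =>
    h.eq_or_lt.elim (fun h => by rw [hk h]) fun h => (hr c h).le
  constructor
  · rw [coeff_mul_mul_of_uniqueMul]
    · exact mul_ne_zero ha.1 hb.1
    · intro p q hp hq hpq
      have hp := ha.2 p (Finsupp.mem_support_iff.mp hp)
      have hq := hb.2 q (Finsupp.mem_support_iff.mp hq)
      constructor
      · by_contra hne
        have := (hr q (hp.lt_of_ne (hk.ne hne))).trans_le (hl' m hq)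
        rw [hpq] at this
        exact this.false
      · by_contra hne
        have := (hr' q hp).trans_lt (hl m (hq.lt_of_ne (hk.ne hne)))
        rw [hpq] at this
        exact this.false
  · intro w hw
    have hw' := support_coeff_mul_subset a b (Finsupp.mem_support_iff.mpr hw)
    obtain ⟨p, hp, q, hq, rfl⟩ := Finset.mem_mul.mp hw'
    exact (hr' q (ha.2 p (Finsupp.mem_support_iff.mp hp))).trans
      (hl' m (hb.2 q (Finsupp.mem_support_iff.mp hq)))

/-- If the images of the generators under an algebra homomorphism have leading monomials that
freely generate a submonoid, then every monomial in the range is a product of these. -/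
theorem exists_lift_eq_of_map_eq_of {ι : Type*} (hk : Function.Injective k)
    (hl : ∀ c {a b}, k a < k b → k (c * a) < k (c * b))
    (hr : ∀ c {a b}, k a < k b → k (a * c) < k (b * c))
    (ψ : MonoidAlgebra K (FreeMonoid ι) →ₐ[K] MonoidAlgebra K M) (m : ι → M)
    (hψ : ∀ i, IsLeadingMonomial k (ψ (of K _ (FreeMonoid.of i))) (m i))
    (hm : Function.Injective (FreeMonoid.lift m)) {P : MonoidAlgebra K (FreeMonoid ι)} {n : M}
    (hP : ψ P = of K M n) : ∃ w, FreeMonoid.lift m w = n := by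
  classical
  have hword (w : FreeMonoid ι) : IsLeadingMonomial k (ψ (of K _ w)) (FreeMonoid.lift m w) := by
    induction w using FreeMonoid.inductionOn' with
    | one => simpa only [map_one] using isLeadingMonomial_one
    | of_mul i w ih =>
      rw [map_mul, map_mul, map_mul]
      exact (hψ i).mul hk hl hr ih
  have hP0 : P ≠ 0 := by
    rintro rfl
    rw [map_zero] at hP
    exact one_ne_zero (single_eq_zero.mp hP.symm)
  obtain ⟨w, hw, hmax⟩ := exists_isLeadingMonomial (fun w => k (FreeMonoid.lift m w)) hP0
  refine ⟨w, ?_⟩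
  have hsum : ψ P = ∑ v ∈ P.coeff.support, P.coeff v • ψ (of K _ v) := by
    conv_lhs => rw [← sum_coeff_single P]
    rw [Finsupp.sum, map_sum]
    refine Finset.sum_congr rfl fun v _ => ?_
    rw [← map_smul, of_apply, smul_single, smul_eq_mul, mul_one]
  have hcoeff : (ψ P).coeff (FreeMonoid.lift m w) ≠ 0 := by
    rw [hsum, coeff_sum, Finsupp.finsetSum_apply, Finset.sum_eq_single w]
    · exact mul_ne_zero hw (hword w).1
    · intro v hv hvw
      rw [coeff_smul, Finsupp.smul_apply, smul_eq_mul]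
      refine mul_eq_zero_of_right _ ?_
      by_contra hne
      have h1 := (hword v).2 _ hne
      have h2 := hmax v (Finsupp.mem_support_iff.mp hv)
      exact hvw (hm (hk (h2.antisymm h1)))
    · intro h
      exact absurd (Finsupp.mem_support_iff.mpr hw) h
  rw [hP, of_apply, coeff_single, Finsupp.single_apply] at hcoeff
  by_contra hne
  exact hcoeff (if_neg (Ne.symm hne))

end LeadingMonomial

end MonoidAlgebra

theorem List.append_lt_append_right_of_length_eq {α : Type*} [LinearOrder α]
    {a b : List α} (c : List α) (hlen : a.length = b.length) (h : a < b) : a ++ c < b ++ c := by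
  induction a generalizing b with
  | nil => simp [List.length_eq_zero_iff.mp hlen.symm] at h
  | cons x a ih =>
    cases b with
    | nil => simp at hlen
    | cons y b =>
      rw [List.cons_append, List.cons_append, List.cons_lt_cons_iff]
      rw [List.cons_lt_cons_iff] at h
      exact h.imp_right fun h => ⟨h.1, ih (by simpa using hlen) h.2⟩

namespace FreeMonoid

/-- Words in two letters, ordered by a weighted degree, then by length, then lexicographically. -/
def weightKey (μ : ℚ) (w : FreeMonoid (Fin 2)) : ℚ ×ₗ (ℕ ×ₗ List (Fin 2)) :=
  toLex (μ * w.toList.count 0 - w.toList.count 1, toLex (w.toList.length, w.toList))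

theorem weightKey_injective (μ : ℚ) : Function.Injective (weightKey μ) := fun a b h => by
  exact (Prod.mk.inj (Prod.mk.inj h).2).2

theorem weightKey_lt_iff {μ : ℚ} {a b : FreeMonoid (Fin 2)} :
    weightKey μ a < weightKey μ b ↔
      μ * a.toList.count 0 - a.toList.count 1 < μ * b.toList.count 0 - b.toList.count 1 ∨
      (μ * a.toList.count 0 - a.toList.count 1 = μ * b.toList.count 0 - b.toList.count 1 ∧
        (a.toList.length < b.toList.length ∨
          a.toList.length = b.toList.length ∧ a.toList < b.toList)) := by
  simp only [weightKey, Prod.Lex.toLex_lt_toLex]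

theorem weightKey_mul_left_strictMono (μ : ℚ) (c : FreeMonoid (Fin 2)) {a b : FreeMonoid (Fin 2)}
    (h : weightKey μ a < weightKey μ b) : weightKey μ (c * a) < weightKey μ (c * b) := by
  rw [weightKey_lt_iff] at h ⊢
  simp only [toList_mul, List.count_append, List.length_append, Nat.cast_add]
  obtain h | ⟨h, h' | ⟨h', hlex⟩⟩ := h
  · left; linarith
  · right; exact ⟨by linarith, Or.inl (by lia)⟩
  · right; exact ⟨by linarith, Or.inr ⟨by lia, List.append_left_lt hlex⟩⟩

theorem weightKey_mul_right_strictMono (μ : ℚ) (c : FreeMonoid (Fin 2)) {a b : FreeMonoid (Fin 2)}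
    (h : weightKey μ a < weightKey μ b) : weightKey μ (a * c) < weightKey μ (b * c) := by
  rw [weightKey_lt_iff] at h ⊢
  simp only [toList_mul, List.count_append, List.length_append, Nat.cast_add]
  obtain h | ⟨h, h' | ⟨h', hlex⟩⟩ := h
  · left; linarith
  · right; exact ⟨by linarith, Or.inl (by lia)⟩
  · right
    exact ⟨by linarith, Or.inr ⟨by lia, List.append_lt_append_right_of_length_eq _ h' hlex⟩⟩

end FreeMonoid

theorem Polynomial.coeff_prod_map_single {R : Type*} [CommSemiring R] (i : Fin 2)
    (l : List (Fin 2)) (n : ℕ) :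
    ((l.map (Pi.single i (Polynomial.X : Polynomial R) : Fin 2 → Polynomial R)).prod).coeff n =
      if l = List.replicate n i then 1 else 0 := by
  induction l generalizing n with
  | nil => cases n <;> simp [Polynomial.coeff_one, List.replicate_succ]
  | cons x l ih =>
    rw [List.map_cons, List.prod_cons]
    by_cases hx : x = i
    · subst hx
      cases n with
      | zero => simp
      | succ n => simp [Polynomial.coeff_X_mul, ih, List.replicate_succ]
    · cases n <;> simp [hx, List.replicate_succ]

theorem coeff_replicate_eq_zero_of_abelianization_eq_zero {K : Type} [Field K]
    {f : FreeAlgebra K (Fin 2)} (hf : abelianization K 2 f = 0) (i : Fin 2) (n : ℕ) :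
    (equivMonoidAlgebraFreeMonoid f).coeff (FreeMonoid.ofList (List.replicate n i)) = 0 := by
  classical
  have h (a : MonoidAlgebra K (FreeMonoid (Fin 2))) :
      (MvPolynomial.aeval (Pi.single i (Polynomial.X : Polynomial K) : Fin 2 → Polynomial K)
        (abelianization K 2 (equivMonoidAlgebraFreeMonoid.symm a))).coeff n =
      a.coeff (FreeMonoid.ofList (List.replicate n i)) := by
    induction a using MonoidAlgebra.induction_linear with
    | zero => simp
    | add a b ha hb => simp [ha, hb]
    | single w c =>
      have : equivMonoidAlgebraFreeMonoid.symm (MonoidAlgebra.single w c) =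
          c • FreeMonoid.lift (ι K) w := by
        simp [equivMonoidAlgebraFreeMonoid]
      rw [this, map_smul, map_smul, Polynomial.coeff_smul, FreeMonoid.lift_apply, map_list_prod,
        map_list_prod, List.map_map, List.map_map, MonoidAlgebra.coeff_single,
        Finsupp.single_apply]
      have hfun : (⇑(MvPolynomial.aeval
            (Pi.single i (Polynomial.X : Polynomial K) : Fin 2 → Polynomial K)) ∘
          ⇑(abelianization K 2)) ∘ ι K = (Pi.single i Polynomial.X : Fin 2 → Polynomial K) := by
        funext j
        simp [abelianization]
      rw [hfun, Polynomial.coeff_prod_map_single, smul_eq_mul, mul_ite, mul_one, mul_zero]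
      exact if_congr Iff.rfl rfl rfl
  have := h (equivMonoidAlgebraFreeMonoid f)
  rw [AlgEquiv.symm_apply_apply, hf] at this
  simpa using this.symm

/-- A monomial of an element of the commutator ideal involves both generators. -/
theorem count_pos_of_abelianization_eq_zero {K : Type} [Field K]
    {f : FreeAlgebra K (Fin 2)} (hf : abelianization K 2 f = 0) {w : FreeMonoid (Fin 2)}
    (hw : (equivMonoidAlgebraFreeMonoid f).coeff w ≠ 0) (i : Fin 2) :
    0 < w.toList.count i := by
  by_contra hcount
  have hi : i ∉ w.toList := fun hi => hcount (List.count_pos_iff.mpr hi)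
  have hrep : w.toList = List.replicate w.toList.length (1 - i) := by
    refine List.eq_replicate_iff.mpr ⟨rfl, fun x hx => ?_⟩
    have : x ≠ i := fun h => hi (h ▸ hx)
    lia
  refine hw ?_
  rw [← FreeMonoid.ofList_toList w, hrep]
  exact coeff_replicate_eq_zero_of_abelianization_eq_zero hf _ _

namespace FreeMonoid

theorem count_mul_count_eq_of_commute {a b : FreeMonoid (Fin 2)} (h : Commute a b) :
    a.toList.count 0 * b.toList.count 1 = b.toList.count 0 * a.toList.count 1 := by
  have hcount (c : FreeMonoid (Fin 2)) (n : ℕ) (i : Fin 2) :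
      (c ^ n).toList.count i = n * c.toList.count i := by
    induction n with
    | zero => simp
    | succ n ih => rw [pow_succ, toList_mul, List.count_append, ih]; ring
  have hlen (c : FreeMonoid (Fin 2)) : c.toList.length = c.toList.count 0 + c.toList.count 1 := by
    induction c using FreeMonoid.inductionOn' with
    | one => simp
    | of_mul i w ih => fin_cases i <;> simp [ih] <;> ring
  have hlenpow (c : FreeMonoid (Fin 2)) (n : ℕ) : (c ^ n).toList.length = n * c.toList.length := by
    rw [hlen, hcount, hcount, hlen c]; ring
  have hpow : a ^ b.toList.length = b ^ a.toList.length :=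
    toList.injective (List.append_inj (congrArg toList (h.pow_pow b.toList.length a.toList.length))
      (by rw [hlenpow, hlenpow, mul_comm])).1
  have := congrArg (fun w => w.toList.count 0) hpow
  simp only [hcount, hlen] at this
  linarith

theorem exists_eq_of_of_lift_eq_of {ι α : Type*} {m : ι → FreeMonoid α} (hm : ∀ k, m k ≠ 1)
    {w : FreeMonoid ι} {x : α} (h : lift m w = of x) : ∃ k, m k = of x := by
  cases w using FreeMonoid.casesOn with
  | one => exact absurd h (by simp)
  | of_mul k w =>
    refine ⟨k, ?_⟩
    rw [map_mul, lift_eval_of] at h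
    have hlen := congrArg length h
    rw [length_mul, length_of] at hlen
    have hk : (m k).length ≠ 0 := fun h0 => hm k (length_eq_zero.mp h0)
    have hw : lift m w = 1 := length_eq_zero.mp (by omega)
    rwa [hw, mul_one] at h

end FreeMonoid

/-- Supporting lines of slope `μ` for two finite sets of bidegrees, through `(1, 0)` and `(0, 1)`
respectively, one of which meets its set. -/
theorem exists_supporting_slope (S T : Finset (ℕ × ℕ)) (hT : T.Nonempty)
    (hTpos : ∀ p ∈ T, 0 < p.1 ∧ 0 < p.2) :
    ∃ μ : ℚ, 0 ≤ μ ∧ (∀ p ∈ S, 0 < p.1 → μ * p.1 - p.2 ≤ μ) ∧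
      (∀ p ∈ T, μ * p.1 - p.2 ≤ -1) ∧
      ((∃ p ∈ S, μ * p.1 - p.2 = μ) ∨ ∃ p ∈ T, μ * p.1 - p.2 = -1) := by
  classical
  let A : Finset ℚ := (S.filter fun p => 1 < p.1).image fun p => (p.2 : ℚ) / (p.1 - 1)
  let B : Finset ℚ := T.image fun p => ((p.2 : ℚ) - 1) / p.1
  have hne : (A ∪ B).Nonempty := (hT.image _).mono Finset.subset_union_right
  have hA : ∀ p ∈ S, 1 < p.1 → (0 : ℚ) < p.1 - 1 := fun p _ h => by
    have : (1 : ℚ) < p.1 := by exact_mod_cast h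
    linarith
  have hB : ∀ p ∈ T, (0 : ℚ) < p.1 ∧ (1 : ℚ) ≤ p.2 := fun p hp => by
    have := hTpos p hp
    exact_mod_cast this
  refine ⟨(A ∪ B).min' hne, ?_, fun p hp hp1 => ?_, fun p hp => ?_, ?_⟩
  · refine Finset.le_min' _ _ _ fun q hq => ?_
    obtain hq | hq := Finset.mem_union.mp hq
    · obtain ⟨p, hp, rfl⟩ := Finset.mem_image.mp hq
      obtain ⟨hp, h1⟩ := Finset.mem_filter.mp hp
      exact div_nonneg (by positivity) (hA p hp h1).le
    · obtain ⟨p, hp, rfl⟩ := Finset.mem_image.mp hq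
      exact div_nonneg (by linarith [hB p hp]) (hB p hp).1.le
  · obtain h1 | h1 := (Nat.succ_le_of_lt hp1).eq_or_lt
    · have h1' : (p.1 : ℚ) = 1 := by exact_mod_cast h1.symm
      rw [h1', mul_one, sub_le_self_iff]
      positivity
    · have hle : (A ∪ B).min' hne ≤ (p.2 : ℚ) / (p.1 - 1) := Finset.min'_le _ _
        (Finset.mem_union_left _ (Finset.mem_image_of_mem _ (Finset.mem_filter.mpr ⟨hp, h1⟩)))
      rw [le_div_iff₀ (hA p hp h1)] at hle
      linarith
  · have hle : (A ∪ B).min' hne ≤ ((p.2 : ℚ) - 1) / p.1 := Finset.min'_le _ _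
      (Finset.mem_union_right _ (Finset.mem_image_of_mem _ hp))
    rw [le_div_iff₀ (hB p hp).1] at hle
    linarith
  · obtain hq | hq := Finset.mem_union.mp ((A ∪ B).min'_mem hne)
    · obtain ⟨p, hp, hpq⟩ := Finset.mem_image.mp hq
      obtain ⟨hp, h1⟩ := Finset.mem_filter.mp hp
      refine Or.inl ⟨p, hp, ?_⟩
      rw [div_eq_iff (hA p hp h1).ne'] at hpq
      linarith
    · obtain ⟨p, hp, hpq⟩ := Finset.mem_image.mp hq
      refine Or.inr ⟨p, hp, ?_⟩
      rw [div_eq_iff (hB p hp).1.ne'] at hpq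
      linarith

open MonoidAlgebra in
/-- The leading monomial of a generator plus an element whose monomials involve both generators
and have at most the weight of that generator. -/
theorem exists_isLeadingMonomial_of_add {K : Type*} [Field K] {μ : ℚ} (i : Fin 2)
    {F : MonoidAlgebra K (FreeMonoid (Fin 2))}
    (hpos : ∀ w, F.coeff w ≠ 0 → ∀ j, 0 < w.toList.count j)
    (hwt : ∀ w, F.coeff w ≠ 0 → μ * w.toList.count 0 - w.toList.count 1 ≤
      μ * (FreeMonoid.of i).toList.count 0 - (FreeMonoid.of i).toList.count 1) :
    ∃ m : FreeMonoid (Fin 2),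
      IsLeadingMonomial (FreeMonoid.weightKey μ) (of K _ (FreeMonoid.of i) + F) m ∧
      0 < m.toList.count i ∧
      μ * m.toList.count 0 - m.toList.count 1 =
        μ * (FreeMonoid.of i).toList.count 0 - (FreeMonoid.of i).toList.count 1 ∧
      (m = FreeMonoid.of i → ∀ w, F.coeff w ≠ 0 → μ * w.toList.count 0 - w.toList.count 1 ≠
        μ * (FreeMonoid.of i).toList.count 0 - (FreeMonoid.of i).toList.count 1) := by
  classical
  have hFi : F.coeff (FreeMonoid.of i) = 0 := by
    by_contra h
    have := hpos _ h (1 - i)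
    fin_cases i <;> simp at this
  have hcoeff (w) : (of K _ (FreeMonoid.of i) + F).coeff w =
      (if FreeMonoid.of i = w then 1 else 0) + F.coeff w := by
    rw [coeff_add, Finsupp.add_apply, of_apply, coeff_single, Finsupp.single_apply]
  have hi : (of K _ (FreeMonoid.of i) + F).coeff (FreeMonoid.of i) ≠ 0 := by
    simp [hFi]
  have hF (w) (hw : F.coeff w ≠ 0) : (of K _ (FreeMonoid.of i) + F).coeff w ≠ 0 := by
    have hne : FreeMonoid.of i ≠ w := by
      rintro rfl
      exact hw hFi
    simpa [hcoeff, hne] using hw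
  obtain ⟨m, hm⟩ := exists_isLeadingMonomial (FreeMonoid.weightKey μ)
    (a := of K _ (FreeMonoid.of i) + F) (by
      intro h0
      exact hi (by rw [h0, coeff_zero, Finsupp.zero_apply]))
  have hm' : m = FreeMonoid.of i ∨ F.coeff m ≠ 0 := by
    by_contra! hcon
    exact hm.1 (by simp [hcon.2, Ne.symm hcon.1])
  refine ⟨m, hm, ?_, ?_, ?_⟩
  · obtain rfl | h := hm'
    · simp
    · exact hpos m h i
  · refine le_antisymm ?_ ?_
    · obtain rfl | h := hm'
      · exact le_rfl
      · exact hwt m h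
    · by_contra! hlt
      exact (hm.2 _ hi).not_gt (FreeMonoid.weightKey_lt_iff.mpr (Or.inl hlt))
  · rintro rfl w hw heq
    refine (hm.2 _ (hF w hw)).not_gt (FreeMonoid.weightKey_lt_iff.mpr
      (Or.inr ⟨heq.symm, Or.inl ?_⟩))
    have h0 := hpos w hw 0
    have h1 := hpos w hw 1
    have hsub : [0, 1] ⊆ w.toList := by
      simp [List.count_pos_iff.mp h0, List.count_pos_iff.mp h1]
    have := (List.subperm_of_subset (by simp) hsub).length_le
    simp only [List.length_cons, List.length_nil] at this
    rw [FreeMonoid.toList_of, List.length_singleton]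
    omega

/-- If `φ` is an automorphism of the free algebra on two generators of the form
`z₁ ↦ z₁ + f`, `z₂ ↦ z₂ + g` with `f ≠ 0` and `g ≠ 0`, then `f` and `g` cannot both lie in
the commutator ideal. -/
theorem automorphism_not_both_commutator
    {K : Type} [Field K]
    (φ : FreeAlgebra K (Fin 2) ≃ₐ[K] FreeAlgebra K (Fin 2))
    (f g : FreeAlgebra K (Fin 2))
    (hφ1 : φ (ι K 0) = ι K 0 + f)
    (hφ2 : φ (ι K 1) = ι K 1 + g)
    (hf : f ≠ 0) (hg : g ≠ 0) :
    abelianization K 2 f ≠ 0 ∨ abelianization K 2 g ≠ 0 := by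
  classical
  by_contra! hcon
  obtain ⟨hεf, hεg⟩ := hcon
  let e : FreeAlgebra K (Fin 2) ≃ₐ[K] MonoidAlgebra K (FreeMonoid (Fin 2)) :=
    equivMonoidAlgebraFreeMonoid
  have hFpos (w) (hw : (e f).coeff w ≠ 0) := count_pos_of_abelianization_eq_zero hεf hw
  have hGpos (w) (hw : (e g).coeff w ≠ 0) := count_pos_of_abelianization_eq_zero hεg hw
  let bideg (w : FreeMonoid (Fin 2)) : ℕ × ℕ := (w.toList.count 0, w.toList.count 1)
  have hGne : (e g).coeff.support.Nonempty := by
    rwa [Finsupp.support_nonempty_iff, Ne, MonoidAlgebra.coeff_eq_zero,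
      EmbeddingLike.map_eq_zero_iff]
  obtain ⟨μ, hμ, hS, hT, hmeet⟩ := exists_supporting_slope
    ((e f).coeff.support.image bideg) ((e g).coeff.support.image bideg) (hGne.image _) (by
      intro p hp
      obtain ⟨w, hw, rfl⟩ := Finset.mem_image.mp hp
      exact ⟨hGpos w (Finsupp.mem_support_iff.mp hw) 0, hGpos w (Finsupp.mem_support_iff.mp hw) 1⟩)
  obtain ⟨a, ha, ha0, hawt, hafst⟩ := exists_isLeadingMonomial_of_add (μ := μ) 0 hFpos
    (fun w hw => by
      simpa using hS _ (Finset.mem_image_of_mem _ (Finsupp.mem_support_iff.mpr hw)) (hFpos w hw 0))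
  obtain ⟨b, hb, hb1, hbwt, hbsnd⟩ := exists_isLeadingMonomial_of_add (μ := μ) 1 hGpos
    (fun w hw => by
      simpa using hT _ (Finset.mem_image_of_mem _ (Finsupp.mem_support_iff.mpr hw)))
  simp only [FreeMonoid.toList_of, List.count_singleton_self, Nat.cast_one, mul_one,
    List.count_singleton, beq_iff_eq, zero_ne_one, one_ne_zero, if_false, Nat.cast_zero, sub_zero,
    mul_zero, zero_sub] at hawt hbwt hafst hbsnd
  have hab : a * b ≠ b * a := by
    intro hab
    have hpar : (a.toList.count 0 * b.toList.count 1 : ℚ) =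
        b.toList.count 0 * a.toList.count 1 := by
      exact_mod_cast FreeMonoid.count_mul_count_eq_of_commute hab
    have hpos : (0 : ℚ) < a.toList.count 0 := by exact_mod_cast ha0
    have hj : (a.toList.count 1 : ℚ) = μ * a.toList.count 0 - μ := by linarith
    have hj' : (b.toList.count 1 : ℚ) = μ * b.toList.count 0 + 1 := by linarith
    rw [hj, hj'] at hpar
    have : (0 : ℚ) ≤ μ * b.toList.count 0 := by positivity
    linarith
  let ψ : MonoidAlgebra K (FreeMonoid (Fin 2)) ≃ₐ[K] MonoidAlgebra K (FreeMonoid (Fin 2)) :=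
    (e.symm.trans φ).trans e
  have he (i : Fin 2) : e (ι K i) = MonoidAlgebra.of K _ (FreeMonoid.of i) := by
    simp [e, equivMonoidAlgebraFreeMonoid]
  have hψ (i : Fin 2) : ψ (MonoidAlgebra.of K _ (FreeMonoid.of i)) = e (φ (ι K i)) := by
    simp [ψ, ← he]
  have hlead : ∀ i, MonoidAlgebra.IsLeadingMonomial (FreeMonoid.weightKey μ)
      (ψ.toAlgHom (MonoidAlgebra.of K _ (FreeMonoid.of i))) (![a, b] i) := by
    intro i
    change MonoidAlgebra.IsLeadingMonomial _ (ψ _) _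
    rw [hψ]
    fin_cases i
    · simpa [hφ1, he] using ha
    · simpa [hφ2, he] using hb
  have hgen (i : Fin 2) : ∃ k, ![a, b] k = FreeMonoid.of i := by
    obtain ⟨P, hP⟩ := ψ.surjective (MonoidAlgebra.of K _ (FreeMonoid.of i))
    obtain ⟨w, hw⟩ := MonoidAlgebra.exists_lift_eq_of_map_eq_of
      (FreeMonoid.weightKey_injective μ) (FreeMonoid.weightKey_mul_left_strictMono μ)
      (FreeMonoid.weightKey_mul_right_strictMono μ) ψ.toAlgHom ![a, b] hlead
      (FreeMonoid.lift_injective_of_not_commute _ hab) hP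
    refine FreeMonoid.exists_eq_of_of_lift_eq_of (fun k hk => ?_) hw
    fin_cases k
    · rw [show a = 1 from hk] at ha0
      simp at ha0
    · rw [show b = 1 from hk] at hb1
      simp at hb1
  have hb0 : b ≠ FreeMonoid.of 0 := by
    rintro rfl
    simp at hb1
  have ha' : a = FreeMonoid.of 0 := by
    obtain ⟨k, hk⟩ := hgen 0
    fin_cases k
    · exact hk
    · exact absurd hk hb0
  have hb' : b = FreeMonoid.of 1 := by
    obtain ⟨k, hk⟩ := hgen 1
    fin_cases k
    · rw [ha'] at hk
      exact absurd (FreeMonoid.of_injective hk) zero_ne_one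
    · exact hk
  obtain ⟨p, hp, hpμ⟩ | ⟨p, hp, hpμ⟩ := hmeet
  · obtain ⟨w, hw, rfl⟩ := Finset.mem_image.mp hp
    exact hafst ha' w (Finsupp.mem_support_iff.mp hw) hpμ
  · obtain ⟨w, hw, rfl⟩ := Finset.mem_image.mp hp
    exact hbsnd hb' w (Finsupp.mem_support_iff.mp hw) hpμ
end

section
/- Let K be a field and D a commutative integral domain that is a K-algebra, let t ∈ D be nonzero, and let f, g ∈ K[X] be monic polynomials of degree greater than 1 such that the quotient K-algebras K[X]/(f) and K[X]/(g) are isomorphic as K-algebras. Let F = FreeAlgebra D (Fin 3) with generators x = ι 0, u = ι 1, y = ι 2, and for a polynomial h ∈ K[X] let h(x) ∈ F denote the evaluation of h at x (via the structure map K → D → F). Let I_f be the two-sided ideal of F generated by {x·u − u·x, t•u − f(x)}, and define I_g analogously with g in place of f. Then the quotient D-algebras F/I_f and F/I_g are isomorphic as D-algebras. (F/I_f is a presentation of the coproduct A *_D K⟨y⟩, where A = D[x, t⁻¹f(x)], so this is the cancellation-type isomorphism A *_D K⟨y⟩ ≅_D B *_D K⟨y⟩ with B = D[x, t⁻¹g(x)].)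 -/
open FreeAlgebra

/-- The defining relations of the `D`-algebra `D[x, t⁻¹f(x)] *_D K⟨y⟩`, presented as a quotient
of the free algebra `F = FreeAlgebra D (Fin 3)` on generators `x = ι 0`, `u = ι 1`, `y = ι 2`
by the two-sided ideal generated by `x·u − u·x` and `t•u − f(x)`. -/
def cancellationRel (K : Type) [Field K] (D : Type) [CommRing D] [Algebra K D]
    (t : D) (f : Polynomial K) : FreeAlgebra D (Fin 3) → FreeAlgebra D (Fin 3) → Prop :=
  fun a b =>
    (a = ι D 0 * ι D 1 - ι D 1 * ι D 0 ∧ b = 0) ∨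
    (a = t • ι D 1 - Polynomial.aeval (ι D (0 : Fin 3)) f ∧ b = 0)

namespace CancellationCoproduct

open Polynomial

variable {D : Type} [CommRing D]

section GeneralAlgebra

variable {R : Type} [Ring R] [Algebra D R]

/-- A polynomial takes congruent values modulo `t` at points congruent modulo `t`. -/
lemma exists_aeval_smul_add_eq (t : D) (y b : R) (h : D[X]) :
    ∃ r : R, aeval (t • y + b) h = aeval b h + t • r := by
  induction h using Polynomial.induction_on with
  | C a => exact ⟨0, by simp⟩
  | add p q hp hq =>
    obtain ⟨r, hr⟩ := hp
    obtain ⟨s, hs⟩ := hq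
    exact ⟨r + s, by rw [map_add, map_add, hr, hs, smul_add]; abel⟩
  | monomial n a ih =>
    obtain ⟨r, hr⟩ := ih
    refine ⟨aeval b (C a * X ^ n) * y + r * (t • y + b), ?_⟩
    rw [pow_succ, ← mul_assoc, map_mul, hr, map_mul _ _ X, aeval_X, aeval_X]
    simp only [add_mul, mul_add, smul_add, smul_mul_assoc, mul_smul_comm]
    abel

/-- The algebra `D[u][X] / (f(X) - t u)`, the commutative algebra `D[x, t⁻¹f(x)]`. -/
abbrev CommModification (t : D) (f : D[X]) : Type :=
  AdjoinRoot (f.map (C : D →+* D[X]) - C (C t * X))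

lemma monic_map_C_sub {f : D[X]} (hf : f.Monic) (hdf : 0 < f.natDegree) (t : D) :
    (f.map (C : D →+* D[X]) - C (C t * X)).Monic := by
  nontriviality D
  refine (hf.map C).sub_of_left (lt_of_le_of_lt degree_C_le ?_)
  rw [hf.degree_map]
  exact natDegree_pos_iff_degree_pos.1 hdf

lemma commModification_free {f : D[X]} (hf : f.Monic) (hdf : 0 < f.natDegree) (t : D) :
    Module.Free D (CommModification t f) := by
  have : Module.Free D[X] (CommModification t f) := (monic_map_C_sub hf hdf t).free_adjoinRoot
  exact Module.Free.trans (R := D) (S := D[X])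

lemma commModification_smul (t : D) (f : D[X]) :
    t • (AdjoinRoot.of _ X : CommModification t f) = aeval (AdjoinRoot.root _) f := by
  have h := AdjoinRoot.eval₂_root (f.map (C : D →+* D[X]) - C (C t * X))
  rw [eval₂_sub, eval₂_map, eval₂_C, sub_eq_zero] at h
  rw [Algebra.smul_def]
  exact (h.trans (map_mul _ _ _)).symm

/-- The algebra `D[x, t⁻¹f(x)]` maps to every algebra with commuting `x`, `u` such that
`t u = f(x)`. -/
lemma exists_commModification_algHom {t : D} {f : D[X]} {x u : R} (hxu : x * u = u * x)
    (htu : t • u = aeval x f) :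
    ∃ π : CommModification t f →ₐ[D] R, π (AdjoinRoot.root _) = x ∧
      π (AdjoinRoot.of _ X) = u := by
  have hcomm (a : D[X]) : Commute (aeval u a) x := by
    induction a using Polynomial.induction_on' with
    | add p q hp hq => rw [map_add]; exact hp.add_left hq
    | monomial n a =>
      rw [aeval_monomial]
      exact Commute.mul_left (Algebra.commutes a x) (Commute.pow_left (Eq.symm hxu) n)
  let ψ : D[X][X] →+* R := eval₂RingHom' (aeval u : D[X] →ₐ[D] R).toRingHom x hcomm
  have hψC (a : D[X]) : ψ (C a) = aeval u a := eval₂_C _ _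
  have hψX : ψ X = x := eval₂_X _ _
  have hψf : ψ (f.map C) = aeval x f := by
    change eval₂ _ _ (f.map C) = _
    rw [eval₂_map, aeval_def]
    congr 1
    ext a
    simp
  have hψ : ∀ a ∈ Ideal.span {f.map (C : D →+* D[X]) - C (C t * X)}, ψ a = 0 := by
    intro a ha
    obtain ⟨b, rfl⟩ := Ideal.mem_span_singleton'.1 ha
    rw [map_mul, map_sub, hψf, hψC, map_mul, aeval_C, aeval_X, ← Algebra.smul_def, htu, sub_self,
      mul_zero]
  let π : CommModification t f →+* R := Ideal.Quotient.lift _ ψ hψ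
  have hπ (a : D[X][X]) : π (AdjoinRoot.mk _ a) = ψ a := Ideal.Quotient.lift_mk _ _ _
  refine ⟨{ π with commutes' := fun d => ?_ }, ?_, ?_⟩
  · change π (AdjoinRoot.mk _ (C (C d))) = _
    rw [hπ, hψC, aeval_C]
  · exact (hπ X).trans hψX
  · exact (hπ (C X)).trans ((hψC X).trans (aeval_X u))

end GeneralAlgebra

section FreeProductModule

variable {A ι : Type} [CommRing A] [Algebra D A]

/-- The action of `y` on the free left `A`-module `A *_D D⟨y⟩` with basis the words in the
elements `y b_i`, for `b` a basis of `A` over `D`. -/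
noncomputable def prependCoords (b : Module.Basis ι D A) : Module.End D (List ι →₀ A) :=
  Finsupp.lsum D fun w =>
    b.constr D fun i => Finsupp.single (i :: w) 1

/-- The interpretation of elements of the free left `A`-module on words in an algebra `R`. -/
noncomputable def wordEval {R : Type} [Ring R] [Algebra D R] (b : Module.Basis ι D A)
    (π : A →ₐ[D] R) (y : R) : (List ι →₀ A) →ₗ[D] R :=
  Finsupp.lsum D fun w =>
    (LinearMap.mulRight D (w.map fun i => y * π (b i)).prod).comp π.toLinearMap

variable {R : Type} [Ring R] [Algebra D R] (b : Module.Basis ι D A) (π : A →ₐ[D] R) (y : R)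

lemma wordEval_single (w : List ι) (a : A) :
    wordEval b π y (Finsupp.single w a) = π a * (w.map fun i => y * π (b i)).prod := by
  simp [wordEval]

lemma wordEval_smul (a : A) (m : List ι →₀ A) :
    wordEval b π y (a • m) = π a * wordEval b π y m := by
  induction m using Finsupp.induction_linear with
  | zero => simp
  | add m n hm hn => rw [smul_add, map_add, map_add, hm, hn, mul_add]
  | single w c =>
    rw [Finsupp.smul_single, wordEval_single, wordEval_single, smul_eq_mul, map_mul, mul_assoc]

lemma wordEval_prependCoords (m : List ι →₀ A) :
    wordEval b π y (prependCoords b m) = y * wordEval b π y m := by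
  induction m using Finsupp.induction_linear with
  | zero => simp
  | add m n hm hn => rw [map_add, map_add, map_add, hm, hn, mul_add]
  | single w c =>
    have h : (wordEval b π y).comp ((prependCoords b).comp (Finsupp.lsingle w)) =
        (LinearMap.mulLeft D y).comp ((wordEval b π y).comp (Finsupp.lsingle w)) := by
      refine b.ext fun i => ?_
      simp [prependCoords, wordEval_single, Module.Basis.constr_basis, mul_assoc]
    exact LinearMap.congr_fun h c

end FreeProductModule

section Presentation

variable {K : Type} [Field K] [Algebra K D]

/-- The image in the presented algebra of the generator with index `i`. -/
noncomputable def gen (t : D) (f : K[X]) (i : Fin 3) : RingQuot (cancellationRel K D t f) :=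
  RingQuot.mkAlgHom D _ (ι D i)

variable {t : D} {f : K[X]}

lemma aeval_freeAlgebra (a : FreeAlgebra D (Fin 3)) (f : K[X]) :
    aeval a f = aeval a (f.map (algebraMap K D)) :=
  (aeval_map_algebraMap D a f).symm

variable (t f) in
lemma gen_comm : gen t f 0 * gen t f 1 = gen t f 1 * gen t f 0 := by
  have h := RingQuot.mkAlgHom_rel D
    (show cancellationRel K D t f (ι D 0 * ι D 1 - ι D 1 * ι D 0) 0 from Or.inl ⟨rfl, rfl⟩)
  rw [map_sub, map_mul, map_mul, map_zero] at h
  exact sub_eq_zero.1 h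

variable (t f) in
lemma smul_gen_one : t • gen t f 1 = aeval (gen t f 0) (f.map (algebraMap K D)) := by
  have h := RingQuot.mkAlgHom_rel D
    (show cancellationRel K D t f (t • ι D 1 - aeval (ι D (0 : Fin 3)) f) 0 from
      Or.inr ⟨rfl, rfl⟩)
  rw [aeval_freeAlgebra, map_sub, map_smul, map_zero, ← aeval_algHom_apply] at h
  exact sub_eq_zero.1 h

lemma exists_lift {R : Type} [Ring R] [Algebra D R] {x u : R} (y : R) (hxu : x * u = u * x)
    (htu : t • u = aeval x (f.map (algebraMap K D))) :
    ∃ φ : RingQuot (cancellationRel K D t f) →ₐ[D] R,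
      φ (gen t f 0) = x ∧ φ (gen t f 1) = u ∧ φ (gen t f 2) = y := by
  let F : FreeAlgebra D (Fin 3) →ₐ[D] R := FreeAlgebra.lift D ![x, u, y]
  have hF0 : F (ι D 0) = x := FreeAlgebra.lift_ι_apply _ _
  have hF1 : F (ι D 1) = u := FreeAlgebra.lift_ι_apply _ _
  have hF2 : F (ι D 2) = y := FreeAlgebra.lift_ι_apply _ _
  have hF : ∀ ⦃a b⦄, cancellationRel K D t f a b → F a = F b := by
    rintro a b (⟨rfl, rfl⟩ | ⟨rfl, rfl⟩)
    · rw [map_sub, map_mul, map_mul, hF0, hF1, hxu, sub_self, map_zero]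
    · rw [aeval_freeAlgebra, map_sub, map_smul, ← aeval_algHom_apply, hF0, hF1, htu, sub_self,
        map_zero]
  refine ⟨RingQuot.liftAlgHom D ⟨F, hF⟩, ?_, ?_, ?_⟩
  · exact (RingQuot.liftAlgHom_mkAlgHom_apply D F hF _).trans hF0
  · exact (RingQuot.liftAlgHom_mkAlgHom_apply D F hF _).trans hF1
  · exact (RingQuot.liftAlgHom_mkAlgHom_apply D F hF _).trans hF2

lemma algHom_ext {R : Type} [Ring R] [Algebra D R]
    {φ ψ : RingQuot (cancellationRel K D t f) →ₐ[D] R}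
    (h : ∀ i, φ (gen t f i) = ψ (gen t f i)) : φ = ψ :=
  RingQuot.ringQuot_ext' D _ _ (FreeAlgebra.hom_ext (funext h))

lemma gen_induction {p : RingQuot (cancellationRel K D t f) → Prop}
    (algebraMap : ∀ d : D, p (algebraMap D _ d)) (gen : ∀ i, p (gen t f i))
    (mul : ∀ a b, p a → p b → p (a * b)) (add : ∀ a b, p a → p b → p (a + b))
    (a : RingQuot (cancellationRel K D t f)) : p a := by
  obtain ⟨a, rfl⟩ := RingQuot.mkAlgHom_surjective D _ a
  induction a using FreeAlgebra.induction with
  | grade0 d => rw [AlgHom.commutes]; exact algebraMap d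
  | grade1 i => exact gen i
  | mul a b ha hb => rw [map_mul]; exact mul _ _ ha hb
  | add a b ha hb => rw [map_add]; exact add _ _ ha hb

/-- If `x`, `u` in the presented algebra come from a commutative algebra free over `D` in which
`t u = f(x)`, then the presented algebra has no `t`-torsion: it embeds in a free `D`-module. -/
lemma smul_right_injective_of_free [IsDomain D] (ht : t ≠ 0) {A : Type} [CommRing A] [Algebra D A]
    [Module.Free D A] {x u : A} (htu : t • u = aeval x (f.map (algebraMap K D)))
    (π : A →ₐ[D] RingQuot (cancellationRel K D t f)) (hπx : π x = gen t f 0)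
    (hπu : π u = gen t f 1) :
    Function.Injective fun a : RingQuot (cancellationRel K D t f) => t • a := by
  let b := Module.Free.chooseBasis D A
  let M := List (Module.Free.ChooseBasisIndex D A) →₀ A
  let L : A →ₐ[D] Module.End D M := Algebra.lsmul D D M
  obtain ⟨ρ, hρx, hρu, hρy⟩ := exists_lift (t := t) (f := f) (R := Module.End D M)
    (x := L x) (u := L u) (prependCoords b)
    (by rw [← map_mul, mul_comm, map_mul])
    (by rw [← map_smul, htu, aeval_algHom_apply])
  let σ := wordEval b π (gen t f 2)
  have hσ (r : RingQuot (cancellationRel K D t f)) : ∀ m, σ (ρ r m) = r * σ m := by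
    induction r using gen_induction with
    | algebraMap d =>
      intro m
      rw [AlgHom.commutes, Module.algebraMap_end_apply, map_smul, Algebra.smul_def]
    | gen i =>
      intro m
      fin_cases i
      · change σ (ρ (gen t f 0) m) = gen t f 0 * σ m
        rw [hρx, ← hπx]
        exact wordEval_smul b π _ _ m
      · change σ (ρ (gen t f 1) m) = gen t f 1 * σ m
        rw [hρu, ← hπu]
        exact wordEval_smul b π _ _ m
      · change σ (ρ (gen t f 2) m) = gen t f 2 * σ m
        rw [hρy]
        exact wordEval_prependCoords b π _ m
    | mul r s hr hs => intro m; rw [map_mul, Module.End.mul_apply, hr, hs, mul_assoc]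
    | add r s hr hs => intro m; rw [map_add, LinearMap.add_apply, map_add, hr, hs, add_mul]
  have hσ1 : σ (Finsupp.single [] 1) = 1 := by
    rw [wordEval_single, map_one, List.map_nil, List.prod_nil, mul_one]
  intro r s hrs
  have h : t • ρ r (Finsupp.single [] 1) = t • ρ s (Finsupp.single [] 1) := by
    rw [← LinearMap.smul_apply, ← LinearMap.smul_apply, ← map_smul, ← map_smul]
    exact congrArg (fun a => ρ a _) hrs
  have h' := congrArg σ (smul_right_injective M ht h)
  rwa [hσ, hσ, hσ1, mul_one, mul_one] at h'

lemma smul_right_injective_ringQuot [IsDomain D] (ht : t ≠ 0) (hf : f.Monic)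
    (hdf : 0 < f.natDegree) :
    Function.Injective fun a : RingQuot (cancellationRel K D t f) => t • a := by
  have := commModification_free (hf.map (algebraMap K D)) (by rwa [hf.natDegree_map]) t
  obtain ⟨π, hπx, hπu⟩ := exists_commModification_algHom (gen_comm t f) (smul_gen_one t f)
  exact smul_right_injective_of_free ht (commModification_smul t _) π hπx hπu

lemma exists_smul_eq_aeval {p h : K[X]} (hfh : f ∣ h.comp p) :
    ∃ r, t • r = aeval (t • gen t f 2 + aeval (gen t f 0) (p.map (algebraMap K D)))
      (h.map (algebraMap K D)) := by
  obtain ⟨k, hk⟩ := hfh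
  obtain ⟨r, hr⟩ := exists_aeval_smul_add_eq t (gen t f 2)
    (aeval (gen t f 0) (p.map (algebraMap K D))) (h.map (algebraMap K D))
  refine ⟨gen t f 1 * aeval (gen t f 0) (k.map (algebraMap K D)) + r, ?_⟩
  rw [hr, ← aeval_comp, ← Polynomial.map_comp, hk, Polynomial.map_mul, map_mul, ← smul_gen_one,
    smul_add, smul_mul_assoc]

lemma exists_algHom {g p q : K[X]}
    (hinj : Function.Injective fun a : RingQuot (cancellationRel K D t f) => t • a)
    (hgp : f ∣ g.comp p) (hqp : f ∣ q.comp p - X) :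
    ∃ φ : RingQuot (cancellationRel K D t g) →ₐ[D] RingQuot (cancellationRel K D t f),
      φ (gen t g 0) = t • gen t f 2 + aeval (gen t f 0) (p.map (algebraMap K D)) ∧
      t • φ (gen t g 2) = gen t f 0 - aeval (φ (gen t g 0)) (q.map (algebraMap K D)) := by
  set Y := t • gen t f 2 + aeval (gen t f 0) (p.map (algebraMap K D)) with hY
  obtain ⟨v, hv⟩ := exists_smul_eq_aeval (t := t) hgp
  rw [← hY] at hv
  obtain ⟨r, hr⟩ := exists_aeval_smul_add_eq t (gen t f 2)
    (aeval (gen t f 0) (p.map (algebraMap K D))) (q.map (algebraMap K D))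
  obtain ⟨k, hk⟩ := hqp
  have hz : t • (-(gen t f 1 * aeval (gen t f 0) (k.map (algebraMap K D)) + r)) =
      gen t f 0 - aeval Y (q.map (algebraMap K D)) := by
    rw [hY, hr, ← aeval_comp, ← Polynomial.map_comp, sub_eq_iff_eq_add.1 hk, Polynomial.map_add,
      Polynomial.map_mul, map_add, map_mul, ← smul_gen_one, Polynomial.map_X, aeval_X, smul_neg,
      smul_add, smul_mul_assoc]
    abel
  have hYv : Y * v = v * Y := hinj <| by
    change t • (Y * v) = t • (v * Y)
    rw [← mul_smul_comm, ← smul_mul_assoc, hv]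
    have h := congrArg (aeval Y) (mul_comm X (g.map (algebraMap K D)))
    rwa [map_mul, map_mul, aeval_X] at h
  obtain ⟨φ, h0, -, h2⟩ := exists_lift (f := g) _ hYv hv
  exact ⟨φ, h0, by rw [h2, h0, hz]⟩

lemma comp_eq_id {g p q : K[X]}
    (hinj : Function.Injective fun a : RingQuot (cancellationRel K D t f) => t • a)
    {φ : RingQuot (cancellationRel K D t g) →ₐ[D] RingQuot (cancellationRel K D t f)}
    {ψ : RingQuot (cancellationRel K D t f) →ₐ[D] RingQuot (cancellationRel K D t g)}
    (hφ0 : φ (gen t g 0) = t • gen t f 2 + aeval (gen t f 0) (p.map (algebraMap K D)))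
    (hφ2 : t • φ (gen t g 2) = gen t f 0 - aeval (φ (gen t g 0)) (q.map (algebraMap K D)))
    (hψ0 : ψ (gen t f 0) = t • gen t g 2 + aeval (gen t g 0) (q.map (algebraMap K D)))
    (hψ2 : t • ψ (gen t f 2) = gen t g 0 - aeval (ψ (gen t f 0)) (p.map (algebraMap K D))) :
    φ.comp ψ = AlgHom.id D _ := by
  have h0 : φ (ψ (gen t f 0)) = gen t f 0 := by
    rw [hψ0, map_add, map_smul, hφ2, ← aeval_algHom_apply, sub_add_cancel]
  refine algHom_ext fun i => ?_
  change φ (ψ (gen t f i)) = gen t f i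
  fin_cases i
  · exact h0
  · refine hinj ?_
    change t • φ (ψ (gen t f 1)) = t • gen t f 1
    rw [← map_smul, ← map_smul, smul_gen_one, ← aeval_algHom_apply, ← aeval_algHom_apply, h0]
  · refine hinj ?_
    change t • φ (ψ (gen t f 2)) = t • gen t f 2
    rw [← map_smul, hψ2, map_sub, ← aeval_algHom_apply, h0, hφ0, add_sub_cancel_right]

end Presentation

/-- An isomorphism of principal quotients of `K[X]` and its inverse are given by substitutions. -/
lemma exists_comp_of_algEquiv {K : Type} [Field K] {f g : K[X]}
    (e : (K[X] ⧸ Ideal.span {f}) ≃ₐ[K] (K[X] ⧸ Ideal.span {g})) :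
    ∃ p q : K[X], f ∣ g.comp p ∧ f ∣ q.comp p - X ∧ g ∣ f.comp q ∧ g ∣ p.comp q - X := by
  let mf := Ideal.Quotient.mkₐ K (Ideal.span {f})
  let mg := Ideal.Quotient.mkₐ K (Ideal.span {g})
  have hmf (h : K[X]) : mf h = 0 ↔ f ∣ h :=
    Ideal.Quotient.eq_zero_iff_mem.trans Ideal.mem_span_singleton
  have hmg (h : K[X]) : mg h = 0 ↔ g ∣ h :=
    Ideal.Quotient.eq_zero_iff_mem.trans Ideal.mem_span_singleton
  obtain ⟨q, hq⟩ := Ideal.Quotient.mkₐ_surjective K (Ideal.span {g}) (e (mf X))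
  obtain ⟨p, hp⟩ := Ideal.Quotient.mkₐ_surjective K (Ideal.span {f}) (e.symm (mg X))
  have hcq (h : K[X]) : mg (h.comp q) = e (mf h) := by
    have : (mg.comp (aeval q)) = (e : _ →ₐ[K] _).comp mf := by
      ext
      simpa only [AlgHom.comp_apply, aeval_X] using! hq
    simpa [comp_eq_aeval] using AlgHom.congr_fun this h
  have hcp (h : K[X]) : mf (h.comp p) = e.symm (mg h) := by
    have : (mf.comp (aeval p)) = (e.symm : _ →ₐ[K] _).comp mg := by
      ext
      simpa only [AlgHom.comp_apply, aeval_X] using! hp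
    simpa [comp_eq_aeval] using AlgHom.congr_fun this h
  refine ⟨p, q, ?_, ?_, ?_, ?_⟩
  · rw [← hmf, hcp, (hmg g).2 dvd_rfl, map_zero]
  · rw [← hmf, map_sub, hcp, sub_eq_zero]
    exact (congrArg e.symm hq).trans (e.symm_apply_apply _)
  · rw [← hmg, hcq, (hmf f).2 dvd_rfl, map_zero]
  · rw [← hmg, map_sub, hcq, sub_eq_zero]
    exact (congrArg e hp).trans (e.apply_symm_apply _)

end CancellationCoproduct

/-- Asanuma-type cancellation: if `D` is an integral domain over `K`, `t ∈ D` is nonzero, and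
`f, g ∈ K[X]` are monic of degree `> 1` with `K[X]/(f) ≅ K[X]/(g)` as `K`-algebras, then the
`D`-algebras `A *_D K⟨y⟩` and `B *_D K⟨y⟩` are isomorphic, where `A = D[x, t⁻¹f(x)]` and
`B = D[x, t⁻¹g(x)]` are presented by the quotients of `FreeAlgebra D (Fin 3)` above. -/
theorem cancellation_coproduct_isomorphic
    {K : Type} [Field K] {D : Type} [CommRing D] [IsDomain D] [Algebra K D]
    (t : D) (ht : t ≠ 0)
    (f g : Polynomial K) (hf : f.Monic) (hg : g.Monic)
    (hdf : 1 < f.natDegree) (hdg : 1 < g.natDegree)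
    (hiso : Nonempty
      ((Polynomial K ⧸ Ideal.span {f}) ≃ₐ[K] (Polynomial K ⧸ Ideal.span {g}))) :
    Nonempty (RingQuot (cancellationRel K D t f) ≃ₐ[D] RingQuot (cancellationRel K D t g)) := by
  obtain ⟨e⟩ := hiso
  obtain ⟨p, q, hgp, hqp, hfq, hpq⟩ := CancellationCoproduct.exists_comp_of_algEquiv e
  have hinjf := CancellationCoproduct.smul_right_injective_ringQuot ht hf (by lia)
  have hinjg := CancellationCoproduct.smul_right_injective_ringQuot ht hg (by lia)
  obtain ⟨φ, hφ0, hφ2⟩ := CancellationCoproduct.exists_algHom hinjf hgp hqp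
  obtain ⟨ψ, hψ0, hψ2⟩ := CancellationCoproduct.exists_algHom hinjg hfq hpq
  exact ⟨AlgEquiv.ofAlgHom ψ φ
    (CancellationCoproduct.comp_eq_id hinjg hψ0 hψ2 hφ0 hφ2)
    (CancellationCoproduct.comp_eq_id hinjf hφ0 hφ2 hψ0 hψ2)⟩
end
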